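/- arXiv:1106.0722 — 5 statements merged into one kernel-verified Lean document; each statement's English description precedes it below -/
import Mathlib

section
/- There exists a constant c > 0, depending only on d, with the following property: let E, E* ⊆ ℝ^d be Lebesgue measurable sets of positive finite measure with 𝒯(E, E*) > 0, and set α = 𝒯(E, E*)/|E| and α* = 𝒯(E, E*)/|E*|. Then there exist a point x̄ ∈ E, a Lebesgue measurable set Ω₁ ⊆ ℝ^{d−1}, and a Lebesgue measurable set Ω ⊆ Ω₁ × ℝ^{d−1} such that: |Ω₁| = c α; x̄ − (s, |s|²) ∈ E* for each s ∈ Ω₁; |{t : (s, t) ∈ Ω}| = c α* for each s ∈ Ω₁; and x̄ − (s, |s|²) + (t, |t|²) ∈ E for each (s, t) ∈ Ω. -/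
open MeasureTheory ENNReal

noncomputable section

/-- `ℝ^{d-1}` -/
abbrev Vec (n : ℕ) : Type := EuclideanSpace ℝ (Fin n)

/-- `ℝ^d = ℝ^{d-1} × ℝ`, a point `x = (x', x_d)` -/
abbrev Pt (n : ℕ) : Type := Vec n × ℝ

/-- The Radon-like transform `Tf(x) = ∫_{ℝ^{d-1}} f(x' - t, x_d - |t|²) dt`. -/
def radonT (n : ℕ) (f : Pt n → ℝ≥0∞) (x : Pt n) : ℝ≥0∞ :=
  ∫⁻ t : Vec n, f (x.1 - t, x.2 - ‖t‖ ^ 2)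

/-- The incidence functional `𝒯(E, E*) = ∫_E T(χ_{E*})`. -/
def incT (n : ℕ) (E Estar : Set (Pt n)) : ℝ≥0∞ :=
  ∫⁻ x in E, radonT n (Estar.indicator 1) x


theorem lint_pi_prod {X : Type} [MeasureSpace X] [SigmaFinite (volume : Measure X)] :
    ∀ (n : ℕ) (f : Fin n → X → ℝ≥0∞), (∀ i, Measurable (f i)) →
    ∫⁻ w : Fin n → X, ∏ i, f i (w i) = ∏ i, ∫⁻ x, f i x := by
  intro n
  induction n with
  | zero => intro f hf; simp [volume_pi]
  | succ n ih =>
    intro f hf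
    have hp := (volume_preserving_piFinSuccAbove (fun _ : Fin (n+1) => X) 0).symm
    rw [← hp.lintegral_comp_emb (MeasurableEquiv.measurableEmbedding _)]
    rw [Measure.volume_eq_prod]
    simp only [Fin.prod_univ_succ]
    have : ∀ z : X × (Fin n → X), (f 0 (((MeasurableEquiv.piFinSuccAbove (fun _ : Fin (n+1) => X) 0).symm z) 0) * ∏ i : Fin n, f i.succ (((MeasurableEquiv.piFinSuccAbove (fun _ : Fin (n+1) => X) 0).symm z) i.succ)) = f 0 z.1 * ∏ i : Fin n, f i.succ (z.2 i) := by
      intro z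
      simp [MeasurableEquiv.piFinSuccAbove]
    simp_rw [this]
    rw [lintegral_prod_mul (f := f 0) (g := fun z : Fin n → X => ∏ i : Fin n, f i.succ (z i)) (hf 0).aemeasurable (by
      refine Measurable.aemeasurable ?_
      exact Finset.measurable_prod _ (fun i _ => (hf _).comp (measurable_pi_apply i)))]
    rw [ih _ (fun i => hf _)]

theorem meas_det (n : ℕ) : Measurable (fun t : Fin n → Fin n → ℝ => (Matrix.of t).det) := by
  apply Continuous.measurable
  exact Continuous.matrix_det continuous_id

theorem det_null (n : ℕ) : volume {t : Fin n → Fin n → ℝ | (Matrix.of t).det = 0} = 0 := by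
  set Z := {t : Fin n → Fin n → ℝ | (Matrix.of t).det = 0} with hZ
  have hZm : MeasurableSet Z := meas_det n (measurableSet_singleton 0)
  let I : Fin n → Fin n → ℝ := fun i j => (1 : Matrix (Fin n) (Fin n) ℝ) i j
  have hIc : Measurable (fun p : ℝ × (Fin n → Fin n → ℝ) => p.2 + p.1 • I) := by fun_prop
  have h1 : ∀ c : ℝ, ∫⁻ t, Z.indicator 1 (t + c • I) = volume Z := by
    intro c
    rw [lintegral_add_right_eq_self (fun t => Z.indicator (1 : (Fin n → Fin n → ℝ) → ℝ≥0∞) t), lintegral_indicator_one hZm]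
  have h2 : ∫⁻ c : ℝ in Set.Icc 0 1, ∫⁻ t, Z.indicator (1 : (Fin n → Fin n → ℝ) → ℝ≥0∞) (t + c • I) = volume Z := by
    simp_rw [h1]; simp
  rw [lintegral_lintegral_swap] at h2
  · rw [← h2]
    rw [lintegral_eq_zero_iff']
    · refine Filter.Eventually.of_forall fun t => ?_
      simp only [Pi.zero_apply]
      apply lintegral_eq_zero_of_ae_eq_zero
      apply ae_restrict_of_ae
      have hfin : Set.Finite {c : ℝ | t + c • I ∈ Z} := by
        have hne := (Matrix.charpoly_monic (-(Matrix.of t))).ne_zero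
        refine (Polynomial.finite_setOfPred_isRoot hne).subset ?_
        intro c hc
        simp only [Set.mem_ofPred_eq, Polynomial.IsRoot, Matrix.eval_charpoly, hZ] at hc ⊢
        rw [← hc]
        congr 1
        ext i j
        simp [I, Matrix.one_apply, Matrix.diagonal_apply]
        ring
      have := hfin.measure_zero (volume : Measure ℝ)
      filter_upwards [measure_eq_zero_iff_ae_notMem.mp this] with c hc
      have hc' : t + c • I ∉ Z := hc
      simp [hc']
    · refine (Measurable.lintegral_prod_right' (f := fun p : (Fin n → Fin n → ℝ) × ℝ => Z.indicator (1 : (Fin n → Fin n → ℝ) → ℝ≥0∞) (p.1 + p.2 • I)) ?_).aemeasurable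
      exact (measurable_one.indicator hZm).comp (hIc.comp measurable_swap)
  · exact ((measurable_one.indicator hZm).comp hIc).aemeasurable

theorem det_rel (n : ℕ) (x : Fin (n+1) → Fin n → ℝ) :
    ∑ j : Fin (n+1), ((-1:ℝ)^(j:ℕ) * (Matrix.of (fun k => x (j.succAbove k))).det) • x j = 0 := by
  ext c
  let M : Matrix (Fin (n+1)) (Fin (n+1)) ℝ := Matrix.of fun j => Fin.cons (x j c) (x j)
  have h0 : M.det = 0 := by
    apply Matrix.det_zero_of_column_eq (i := 0) (j := c.succ) (Fin.succ_ne_zero c).symm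
    intro k; simp [M]
  rw [Matrix.det_succ_column_zero] at h0
  simp only [Finset.sum_apply, Pi.smul_apply, smul_eq_mul, Pi.zero_apply]
  rw [← h0]
  refine Finset.sum_congr rfl fun j _ => ?_
  have : M.submatrix j.succAbove Fin.succ = Matrix.of (fun k => x (j.succAbove k)) := by
    ext a b; simp [M]
  rw [this]; simp [M]; ring

/-- parallelepiped -/
def Para (n : ℕ) (t : Fin n → Fin n → ℝ) : Set (Fin n → ℝ) :=
  Set.image (Matrix.toLin' (Matrix.of t).transpose) (Set.Icc (fun _ => -1) (fun _ => 1))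

theorem vol_para (n : ℕ) (t : Fin n → Fin n → ℝ) :
    volume (Para n t) = 2 ^ n * ENNReal.ofReal |(Matrix.of t).det| := by
  rw [Para, Measure.addHaar_image_linearMap, LinearMap.det_toLin', Matrix.det_transpose, Real.volume_Icc_pi]
  norm_num
  rw [mul_comm]

theorem in_para (n : ℕ) (x : Fin (n+1) → Fin n → ℝ) (i : Fin (n+1))
    (h : ∀ j : Fin (n+1), |(Matrix.of (fun k => x (j.succAbove k))).det| ≤ |(Matrix.of (fun k => x (i.succAbove k))).det|)
    (h0 : (Matrix.of (fun k => x (i.succAbove k))).det ≠ 0) :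
    x i ∈ Para n (fun k => x (i.succAbove k)) := by
  have hr := det_rel n x
  set D : Fin (n+1) → ℝ := fun j => (Matrix.of (fun k => x (j.succAbove k))).det with hD
  change ∀ j, |D j| ≤ |D i| at h
  change D i ≠ 0 at h0
  change ∑ j : Fin (n+1), ((-1:ℝ)^(j:ℕ) * D j) • x j = 0 at hr
  rw [Fin.sum_univ_succAbove _ i] at hr
  refine ⟨fun k => - ((-1:ℝ)^(i:ℕ) * D i)⁻¹ * ((-1:ℝ)^((i.succAbove k : Fin (n+1)):ℕ) * D (i.succAbove k)), ?_, ?_⟩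
  · have : ∀ k, |(- ((-1:ℝ)^(i:ℕ) * D i)⁻¹ * ((-1:ℝ)^((i.succAbove k : Fin (n+1)):ℕ) * D (i.succAbove k)))| ≤ 1 := by
      intro k
      simp only [abs_mul, abs_neg, abs_inv, abs_pow, abs_one, one_pow, one_mul]
      rw [inv_mul_le_iff₀ (abs_pos.mpr h0)]
      simpa using h _
    exact ⟨fun k => (abs_le.mp (this k)).1, fun k => (abs_le.mp (this k)).2⟩
  · have hne : ((-1:ℝ)^(i:ℕ) * D i) ≠ 0 := mul_ne_zero (by simp) h0
    have hx : x i = (- ((-1:ℝ)^(i:ℕ) * D i)⁻¹) • ∑ k, ((-1:ℝ)^((i.succAbove k : Fin (n+1)):ℕ) * D (i.succAbove k)) • x (i.succAbove k) := by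
      rw [← eq_neg_iff_add_eq_zero] at hr
      rw [neg_smul, ← smul_neg, ← hr, smul_smul, inv_mul_cancel₀ hne, one_smul]
    conv_rhs => rw [hx]
    ext c
    simp only [Matrix.toLin'_apply, Matrix.mulVec, dotProduct, Matrix.transpose_apply, Matrix.of_apply,
      Pi.smul_apply, Finset.sum_apply, smul_eq_mul, Finset.mul_sum]
    refine Finset.sum_congr rfl fun k _ => by ring

theorem det_lower (n : ℕ) (F : Set (Fin n → ℝ)) (hF : MeasurableSet F) :
    volume F ^ (n+1) ≤ (n+1) * 2 ^ n *
      ∫⁻ t : Fin n → Fin n → ℝ, (∏ k, F.indicator (1 : (Fin n → ℝ) → ℝ≥0∞) (t k)) * ENNReal.ofReal |(Matrix.of t).det| := by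
  classical
  set D : Fin (n+1) → (Fin (n+1) → Fin n → ℝ) → ℝ := fun j x => (Matrix.of (fun k => x (j.succAbove k))).det with hD
  have hDm : ∀ j, Measurable (D j) := fun j =>
    (meas_det n).comp (g := fun t : Fin n → Fin n → ℝ => (Matrix.of t).det) (f := fun x : Fin (n+1) → Fin n → ℝ => fun k => x (j.succAbove k)) (by fun_prop)
  let A : Fin (n+1) → Set (Fin (n+1) → Fin n → ℝ) := fun i =>
    {x | (∀ k, x (i.succAbove k) ∈ F) ∧ (∀ j, |D j x| ≤ |D i x|) ∧ D i x ≠ 0}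
  have hAm : ∀ i, MeasurableSet (A i) := by
    intro i
    have h1 : MeasurableSet {x : Fin (n+1) → Fin n → ℝ | ∀ k, x (i.succAbove k) ∈ F} :=
      measurableSet_setOfPred.mpr (Measurable.forall fun k => measurableSet_setOfPred.mp ((measurable_pi_apply (i.succAbove k)) hF))
    have h2 : MeasurableSet {x : Fin (n+1) → Fin n → ℝ | ∀ j, |D j x| ≤ |D i x|} :=
      measurableSet_setOfPred.mpr (Measurable.forall fun k => measurableSet_setOfPred.mp (measurableSet_le (hDm k).abs (hDm i).abs))
    have h3 : MeasurableSet {x : Fin (n+1) → Fin n → ℝ | D i x ≠ 0} :=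
      (hDm i) (measurableSet_singleton 0).compl
    exact h1.inter (h2.inter h3)
  have hsub : (Set.univ.pi fun _ : Fin (n+1) => F) ⊆ {x | D 0 x = 0} ∪ ⋃ i, A i := by
    intro x hx
    obtain ⟨i, -, hi⟩ := Finset.exists_max_image Finset.univ (fun j => |D j x|) ⟨0, Finset.mem_univ _⟩
    by_cases h0 : D i x = 0
    · left
      have := hi 0 (Finset.mem_univ _)
      simp only [h0, abs_zero] at this
      exact abs_nonpos_iff.mp this
    · right
      exact Set.mem_iUnion.mpr ⟨i, fun k => hx _ (Set.mem_univ _), fun j => hi j (Finset.mem_univ _), h0⟩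
  have hN : volume {x | D 0 x = 0} = 0 := by
    have hp := (volume_preserving_piFinSuccAbove (fun _ : Fin (n+1) => Fin n → ℝ) 0)
    have hs : MeasurableSet ((Set.univ : Set (Fin n → ℝ)) ×ˢ {t : Fin n → Fin n → ℝ | (Matrix.of t).det = 0}) :=
      MeasurableSet.univ.prod (meas_det n (measurableSet_singleton 0))
    have := hp.measure_preimage hs.nullMeasurableSet
    rw [Measure.volume_eq_prod, Measure.prod_prod, det_null, mul_zero] at this
    refine measure_mono_null ?_ this
    intro x hx
    exact ⟨Set.mem_univ _, hx⟩
  have hA : ∀ i, volume (A i) ≤ 2 ^ n * ∫⁻ t : Fin n → Fin n → ℝ, (∏ k, F.indicator (1 : (Fin n → ℝ) → ℝ≥0∞) (t k)) * ENNReal.ofReal |(Matrix.of t).det| := by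
    intro i
    have hp := (volume_preserving_piFinSuccAbove (fun _ : Fin (n+1) => Fin n → ℝ) i).symm
    rw [← hp.measure_preimage (hAm i).nullMeasurableSet, Measure.volume_eq_prod,
      Measure.prod_apply_symm (hp.measurable (hAm i)), ← lintegral_const_mul' _ _ (by simp)]
    refine lintegral_mono fun t => ?_
    by_cases ht : ∀ k, t k ∈ F
    · have : ∏ k, F.indicator (1 : (Fin n → ℝ) → ℝ≥0∞) (t k) = 1 :=
        Finset.prod_eq_one fun k _ => by simp [ht k]
      simp only [this, one_mul]
      rw [← vol_para]
      refine measure_mono ?_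
      intro z hz
      obtain ⟨-, h2, h3⟩ := hz
      have := in_para n _ i h2 h3
      have e1 : (MeasurableEquiv.piFinSuccAbove (fun _ : Fin (n+1) => Fin n → ℝ) i).symm (z, t) = Fin.insertNth i z t := rfl
      rw [e1] at this
      simpa using this
    · have : ((fun z => (z, t)) ⁻¹' ((MeasurableEquiv.piFinSuccAbove (fun _ : Fin (n+1) => Fin n → ℝ) i).symm ⁻¹' (A i))) = ∅ := by
        ext z
        simp only [Set.mem_preimage, Set.mem_empty_iff_false, iff_false]
        intro hz
        apply ht
        intro k
        have := hz.1 k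
        have e1 : (MeasurableEquiv.piFinSuccAbove (fun _ : Fin (n+1) => Fin n → ℝ) i).symm (z, t) = Fin.insertNth i z t := rfl
        rw [e1] at this
        simpa using this
      rw [this]; simp
  calc volume F ^ (n+1) = volume (Set.univ.pi fun _ : Fin (n+1) => F) := by
        rw [volume_pi_pi]; simp
    _ ≤ volume {x | D 0 x = 0} + volume (⋃ i, A i) := (measure_mono hsub).trans (measure_union_le _ _)
    _ ≤ 0 + ∑ i, volume (A i) := by
        rw [hN]; gcongr; exact measure_iUnion_fintype_le _ _
    _ ≤ ∑ i : Fin (n+1), 2 ^ n * ∫⁻ t : Fin n → Fin n → ℝ, (∏ k, F.indicator (1 : (Fin n → ℝ) → ℝ≥0∞) (t k)) * ENNReal.ofReal |(Matrix.of t).det| := by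
        rw [zero_add]; exact Finset.sum_le_sum fun i _ => hA i
    _ = _ := by simp [mul_assoc]

def qq (n : ℕ) (t : Fin n → ℝ) : ℝ := ∑ i, t i ^ 2

theorem qq_meas (n : ℕ) : Measurable (qq n) := by unfold qq; fun_prop

theorem lint_shift {V : Type} [AddCommGroup V] [MeasureSpace V] [MeasurableAdd₂ V] [SigmaFinite (volume : Measure V)]
    [(volume : Measure V).IsAddLeftInvariant] (f : V × ℝ → ℝ≥0∞) (a : V × ℝ) :
    ∫⁻ x, f (x + a) = ∫⁻ x, f x := by
  have : (volume : Measure (V × ℝ)).IsAddLeftInvariant := by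
    rw [Measure.volume_eq_prod]; infer_instance
  have : MeasurableAdd (V × ℝ) := ⟨fun c => by
      have : Measurable fun x : V × ℝ => (c.1 + x.1, c.2 + x.2) := by fun_prop
      exact this, fun c => by
      have : Measurable fun x : V × ℝ => (x.1 + c.1, x.2 + c.2) := by fun_prop
      exact this⟩
  exact lintegral_add_right_eq_self f a

theorem subst_bound (n : ℕ) (w : Fin n → Fin n → ℝ) (b : Fin n → ℝ) (G : (Fin n → ℝ) → ℝ≥0∞) (hG : Measurable G) :
    (∫⁻ s : Fin n → ℝ, G (fun i => 2 * ∑ j, w i j * s j + b i)) * ENNReal.ofReal |(Matrix.of w).det| ≤ ∫⁻ h, G h := by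
  by_cases h0 : (Matrix.of w).det = 0
  · simp [h0]
  let M : Matrix (Fin n) (Fin n) ℝ := (2:ℝ) • Matrix.of w
  have hdet : M.det = 2 ^ n * (Matrix.of w).det := by rw [Matrix.det_smul]; simp
  have hM : M.det ≠ 0 := by rw [hdet]; exact mul_ne_zero (by positivity) h0
  have hmap := Real.map_matrix_volume_pi_eq_smul_volume_pi hM
  have hlm : Measurable (Matrix.toLin' M) := (LinearMap.continuous_of_finiteDimensional _).measurable
  have e1 : (∫⁻ s : Fin n → ℝ, G (fun i => 2 * ∑ j, w i j * s j + b i)) = ENNReal.ofReal |M.det⁻¹| * ∫⁻ h, G h := by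
    calc _ = ∫⁻ s : Fin n → ℝ, G (Matrix.toLin' M s + b) := by
          refine lintegral_congr fun s => ?_
          congr 1
          ext i
          simp [M, Matrix.mulVec, dotProduct, Finset.mul_sum, mul_assoc]
      _ = ∫⁻ h, G (h + b) ∂(Measure.map (Matrix.toLin' M) volume) := by
          rw [lintegral_map (f := fun h => G (h + b)) (hG.comp (measurable_id.add_const b)) hlm]
      _ = _ := by
          rw [hmap, lintegral_smul_measure, lintegral_add_right_eq_self G, smul_eq_mul]
  rw [e1, mul_right_comm, ← ENNReal.ofReal_mul (abs_nonneg _)]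
  refine mul_le_of_le_one_left (by simp) ?_
  rw [ENNReal.ofReal_le_one, ← abs_mul, hdet, mul_inv, mul_assoc, inv_mul_cancel₀ h0, mul_one, abs_of_nonneg (by positivity)]
  exact inv_le_one_of_one_le₀ (one_le_pow₀ (by norm_num))

theorem shift_alg (n : ℕ) (y : (Fin n → ℝ) × ℝ) (w s : Fin n → ℝ) :
    (y.1 + (w + s), y.2 + qq n (w + s)) = (y.1 + s + w, y.2 + qq n s + (2 * ∑ j, w j * s j + qq n w)) := by
  refine Prod.ext ?_ ?_
  · dsimp only; abel
  · have : qq n (w + s) = qq n w + 2 * ∑ j, w j * s j + qq n s := by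
      simp only [qq, Pi.add_apply, add_sq, Finset.sum_add_distrib, mul_assoc, ← Finset.mul_sum]
    dsimp only
    rw [this]; ring

set_option maxHeartbeats 400000 in
theorem strong_bound (n : ℕ) (E : Set ((Fin n → ℝ) × ℝ)) (hE : MeasurableSet E) :
    ∫⁻ y : (Fin n → ℝ) × ℝ, (volume {t : Fin n → ℝ | (y.1 + t, y.2 + qq n t) ∈ E}) ^ (n+2) ≤
      (n+1) * 2 ^ n * volume E ^ (n+1) := by
  set C : ℝ≥0∞ := (n+1) * 2 ^ n with hC
  have hCt : C ≠ ⊤ := by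
    rw [hC]; finiteness
  set e : (Fin n → ℝ) × ℝ → ℝ≥0∞ := E.indicator 1 with he
  have hem : Measurable e := measurable_one.indicator hE
  have hq := qq_meas n
  have hdm : Measurable (fun w : Fin n → Fin n → ℝ => ENNReal.ofReal |(Matrix.of w).det|) :=
    (meas_det n).abs.ennreal_ofReal
  have hpt : ∀ y : (Fin n → ℝ) × ℝ, (volume {t : Fin n → ℝ | (y.1 + t, y.2 + qq n t) ∈ E}) ^ (n+2) ≤
      C * ∫⁻ s : Fin n → ℝ, e (y.1 + s, y.2 + qq n s) * ∫⁻ w : Fin n → Fin n → ℝ,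
        (∏ k, e (y.1 + (w k + s), y.2 + qq n (w k + s))) * ENNReal.ofReal |(Matrix.of w).det| := by
    intro y
    set F := {t : Fin n → ℝ | (y.1 + t, y.2 + qq n t) ∈ E} with hF
    have hpm : Measurable (fun t : Fin n → ℝ => (y.1 + t, y.2 + qq n t)) := by fun_prop
    have hFm : MeasurableSet F := hpm hE
    have hind : ∀ t, e (y.1 + t, y.2 + qq n t) = F.indicator 1 t := by
      intro t; rfl
    rw [pow_succ', ← lintegral_indicator_one hFm, ← lintegral_mul_const _ (measurable_one.indicator hFm),
      ← lintegral_const_mul' _ _ hCt]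
    refine lintegral_mono fun s => ?_
    rw [hind, lintegral_indicator_one hFm, mul_left_comm]
    gcongr
    have hv : volume F = volume ((fun x => x + s) ⁻¹' F) := (measure_preimage_add_right _ _ _).symm
    rw [hv]
    refine (det_lower n _ (measurable_add_const s hFm)).trans (le_of_eq ?_)
    simp_rw [hind]
    rfl
  have hK : Measurable (fun p : ((Fin n → ℝ) × ℝ) × (Fin n → ℝ) => e (p.1.1 + p.2, p.1.2 + qq n p.2) * ∫⁻ w : Fin n → Fin n → ℝ,
        (∏ k, e (p.1.1 + (w k + p.2), p.1.2 + qq n (w k + p.2))) * ENNReal.ofReal |(Matrix.of w).det|) := by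
    refine Measurable.mul (hem.comp (by fun_prop)) ?_
    refine Measurable.lintegral_prod_right' (f := fun z : (((Fin n → ℝ) × ℝ) × (Fin n → ℝ)) × (Fin n → Fin n → ℝ) => (∏ k, e (z.1.1.1 + (z.2 k + z.1.2), z.1.1.2 + qq n (z.2 k + z.1.2))) * ENNReal.ofReal |(Matrix.of z.2).det|) ?_
    refine Measurable.mul ?_ (hdm.comp measurable_snd)
    exact Finset.measurable_prod _ fun k _ => hem.comp (by fun_prop)
  have hK2 : Measurable (fun p : (Fin n → ℝ) × ((Fin n → ℝ) × ℝ) => e p.2 * ∫⁻ w : Fin n → Fin n → ℝ,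
        (∏ k, e (p.2.1 + w k, p.2.2 + (2 * ∑ j, w k j * p.1 j + qq n (w k)))) * ENNReal.ofReal |(Matrix.of w).det|) := by
    refine Measurable.mul (hem.comp (by fun_prop)) ?_
    refine Measurable.lintegral_prod_right' (f := fun z : ((Fin n → ℝ) × ((Fin n → ℝ) × ℝ)) × (Fin n → Fin n → ℝ) => (∏ k, e (z.1.2.1 + z.2 k, z.1.2.2 + (2 * ∑ j, z.2 k j * z.1.1 j + qq n (z.2 k)))) * ENNReal.ofReal |(Matrix.of z.2).det|) ?_
    refine Measurable.mul ?_ (hdm.comp measurable_snd)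
    exact Finset.measurable_prod _ fun k _ => hem.comp (by fun_prop)
  obtain ⟨K2, hK2def⟩ : ∃ K2 : (Fin n → ℝ) → ((Fin n → ℝ) × ℝ) → ℝ≥0∞, K2 = fun s x => e x * ∫⁻ w : Fin n → Fin n → ℝ,
        (∏ k, e (x.1 + w k, x.2 + (2 * ∑ j, w k j * s j + qq n (w k)))) * ENNReal.ofReal |(Matrix.of w).det| := ⟨_, rfl⟩
  have hK2m : Measurable (Function.uncurry K2) := by rw [hK2def]; exact hK2
  clear hK2
  have hmono := lintegral_mono (μ := volume) hpt
  refine hmono.trans ?_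
  rw [lintegral_const_mul' _ _ hCt, lintegral_lintegral_swap hK.aemeasurable]
  gcongr
  have hshift : ∀ s : Fin n → ℝ, (∫⁻ y : (Fin n → ℝ) × ℝ, e (y.1 + s, y.2 + qq n s) * ∫⁻ w : Fin n → Fin n → ℝ,
        (∏ k, e (y.1 + (w k + s), y.2 + qq n (w k + s))) * ENNReal.ofReal |(Matrix.of w).det|) =
      ∫⁻ x : (Fin n → ℝ) × ℝ, e x * ∫⁻ w : Fin n → Fin n → ℝ,
        (∏ k, e (x.1 + w k, x.2 + (2 * ∑ j, w k j * s j + qq n (w k)))) * ENNReal.ofReal |(Matrix.of w).det| := by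
    intro s
    refine Eq.trans ?_ (lint_shift (V := Fin n → ℝ) (fun x : (Fin n → ℝ) × ℝ => e x * ∫⁻ w : Fin n → Fin n → ℝ,
        (∏ k, e (x.1 + w k, x.2 + (2 * ∑ j, w k j * s j + qq n (w k)))) * ENNReal.ofReal |(Matrix.of w).det|) (s, qq n s))
    refine lintegral_congr fun y => ?_
    have h1 : y + (s, qq n s) = (y.1 + s, y.2 + qq n s) := rfl
    rw [h1]
    dsimp only
    have h2 : ∀ w : Fin n → ℝ, (y.1 + (w + s), y.2 + qq n (w + s)) = (y.1 + s + w, y.2 + qq n s + (2 * ∑ j, w j * s j + qq n w)) :=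
      fun w => shift_alg n y w s
    simp_rw [h2]
  have hshift2 : ∀ s : Fin n → ℝ, (∫⁻ y : (Fin n → ℝ) × ℝ, e (y.1 + s, y.2 + qq n s) * ∫⁻ w : Fin n → Fin n → ℝ,
        (∏ k, e (y.1 + (w k + s), y.2 + qq n (w k + s))) * ENNReal.ofReal |(Matrix.of w).det|) =
      ∫⁻ x : (Fin n → ℝ) × ℝ, K2 s x := by
    intro s; rw [hshift, hK2def]
  rw [lintegral_congr hshift2, lintegral_lintegral_swap hK2m.aemeasurable]
  have hx : ∀ x : (Fin n → ℝ) × ℝ, (∫⁻ s : Fin n → ℝ, e x * ∫⁻ w : Fin n → Fin n → ℝ,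
        (∏ k, e (x.1 + w k, x.2 + (2 * ∑ j, w k j * s j + qq n (w k)))) * ENNReal.ofReal |(Matrix.of w).det|) ≤ e x * volume E ^ n := by
    intro x
    have hL : Measurable (fun p : (Fin n → ℝ) × (Fin n → Fin n → ℝ) => (∏ k, e (x.1 + p.2 k, x.2 + (2 * ∑ j, p.2 k j * p.1 j + qq n (p.2 k)))) * ENNReal.ofReal |(Matrix.of p.2).det|) := by
      refine Measurable.mul ?_ (hdm.comp measurable_snd)
      exact Finset.measurable_prod _ fun k _ => hem.comp (by fun_prop)
    obtain ⟨L, hLdef⟩ : ∃ L : (Fin n → ℝ) → (Fin n → Fin n → ℝ) → ℝ≥0∞, L = fun s w => (∏ k, e (x.1 + w k, x.2 + (2 * ∑ j, w k j * s j + qq n (w k)))) * ENNReal.ofReal |(Matrix.of w).det| := ⟨_, rfl⟩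
    have hLm : Measurable (Function.uncurry L) := by rw [hLdef]; exact hL
    have goal2 : ∫⁻ s : Fin n → ℝ, e x * ∫⁻ w : Fin n → Fin n → ℝ, L s w ≤ e x * volume E ^ n := by
     rw [lintegral_const_mul _ (show Measurable (fun s => ∫⁻ w, L s w) from Measurable.lintegral_prod_right' hLm), lintegral_lintegral_swap hLm.aemeasurable]
     gcongr
     rw [hLdef]
     calc _ ≤ ∫⁻ w : Fin n → Fin n → ℝ, ∫⁻ h : Fin n → ℝ, ∏ k, e (x.1 + w k, x.2 + h k) := by
           refine lintegral_mono fun w => ?_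
           have hG : Measurable (fun h : Fin n → ℝ => ∏ k, e (x.1 + w k, x.2 + h k)) :=
             Finset.measurable_prod _ fun k _ => hem.comp (by fun_prop)
           refine le_trans (le_of_eq ?_) (subst_bound n w (fun i => qq n (w i)) _ hG)
           exact lintegral_mul_const' _ _ (by simp)
       _ = ∫⁻ w : Fin n → Fin n → ℝ, ∏ k, ∫⁻ h : ℝ, e (x.1 + w k, x.2 + h) := by
           refine lintegral_congr fun w => ?_
           exact lint_pi_prod n (fun k h => e (x.1 + w k, x.2 + h)) fun k => hem.comp (by fun_prop)
       _ = ∏ k : Fin n, ∫⁻ w : Fin n → ℝ, ∫⁻ h : ℝ, e (x.1 + w, x.2 + h) := by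
           refine lint_pi_prod n (fun k w => ∫⁻ h : ℝ, e (x.1 + w, x.2 + h)) fun k => ?_
           exact Measurable.lintegral_prod_right' (f := fun p : (Fin n → ℝ) × ℝ => e (x.1 + p.1, x.2 + p.2)) (hem.comp (by fun_prop))
       _ = volume E ^ n := by
           have : ∫⁻ w : Fin n → ℝ, ∫⁻ h : ℝ, e (x.1 + w, x.2 + h) = volume E := by
             rw [← lintegral_indicator_one hE, ← lint_shift (E.indicator (1 : (Fin n → ℝ) × ℝ → ℝ≥0∞)) x,
               Measure.volume_eq_prod, lintegral_prod (fun z : (Fin n → ℝ) × ℝ => E.indicator (1 : (Fin n → ℝ) × ℝ → ℝ≥0∞) (z + x)) (hem.comp (show Measurable (fun z : (Fin n → ℝ) × ℝ => (z.1 + x.1, z.2 + x.2)) by fun_prop)).aemeasurable]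
             simp only [add_comm x.1, add_comm x.2]
             rfl
           rw [this]; simp
    rw [hLdef] at goal2
    exact goal2
  have hx2 : ∀ x, ∫⁻ s, K2 s x ≤ e x * volume E ^ n := by
    intro x; rw [hK2def]; exact hx x
  refine (lintegral_mono hx2).trans (le_of_eq ?_)
  rw [lintegral_mul_const _ hem, he, lintegral_indicator_one hE, pow_succ']

/-- mass of `F` within radius `r` -/
theorem slice_exact (n : ℕ) (F : Set (Vec (n+1))) (v : ℝ≥0∞) (hv : v ≠ ⊤)
    (hvF : v < volume F) :
    volume {t | t ∈ F ∧ volume {u | u ∈ F ∧ ‖u‖ ≤ ‖t‖} < v} = v := by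
  by_cases hv0 : v = 0
  · subst hv0; simp
  set g : ℝ → ℝ≥0∞ := fun r => volume (F ∩ Metric.closedBall 0 r) with hg
  have hset : ∀ r, {u | u ∈ F ∧ ‖u‖ ≤ r} = F ∩ Metric.closedBall 0 r := by
    intro r; ext u; simp
  have hgfin : ∀ r, g r ≠ ⊤ := fun r =>
    ((measure_mono Set.inter_subset_right).trans_lt measure_closedBall_lt_top).ne
  have hmono : Monotone g := fun a b hab =>
    measure_mono (Set.inter_subset_inter_right _ (Metric.closedBall_subset_closedBall hab))
  have hball : ∀ r, volume (F ∩ Metric.ball 0 r) = g r := by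
    intro r
    apply le_antisymm (measure_mono (Set.inter_subset_inter_right _ Metric.ball_subset_closedBall))
    have : F ∩ Metric.closedBall (0 : Vec (n+1)) r ⊆ (F ∩ Metric.ball 0 r) ∪ Metric.sphere 0 r := by
      rintro x ⟨hx, hr⟩
      rcases lt_or_eq_of_le (Metric.mem_closedBall.mp hr) with h | h
      · left; exact ⟨hx, h⟩
      · right; exact h
    refine (measure_mono this).trans ((measure_union_le _ _).trans ?_)
    rw [Measure.addHaar_sphere, add_zero]
  have hex : ∃ R, v < g R := by
    have hU : (⋃ k : ℕ, F ∩ Metric.closedBall (0 : Vec (n+1)) k) = F := by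
      rw [← Set.inter_iUnion, Metric.iUnion_closedBall_nat, Set.inter_univ]
    have ht := tendsto_measure_iUnion_atTop (μ := (volume : Measure (Vec (n+1)))) (s := fun k : ℕ => F ∩ Metric.closedBall (0 : Vec (n+1)) k)
      (fun a b hab => Set.inter_subset_inter_right _ (Metric.closedBall_subset_closedBall (by exact_mod_cast hab)))
    rw [hU] at ht
    obtain ⟨k, hk⟩ := (ht.eventually (lt_mem_nhds hvF)).exists
    exact ⟨k, hk⟩
  obtain ⟨R, hR⟩ := hex
  set S : Set ℝ := {r | v ≤ g r} with hS
  have hSne : S.Nonempty := ⟨R, hR.le⟩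
  have hSb : BddBelow S := by
    refine ⟨0, fun r hr => ?_⟩
    by_contra hneg
    have : g r = 0 := by simp [hg, Metric.closedBall_eq_empty.mpr (not_le.mp hneg)]
    have hr' : v ≤ g r := hr
    rw [this] at hr'
    exact hv0 (le_antisymm hr' bot_le)
  set r0 := sInf S with hr0
  have hlow : ∀ r, r < r0 → g r < v := fun r hr => by
    by_contra h
    exact absurd (csInf_le hSb (show r ∈ S from not_lt.mp h)) (not_le.mpr hr)
  have hup : ∀ r, r0 < r → v ≤ g r := fun r hr => by
    obtain ⟨a, ha, har⟩ := (csInf_lt_iff hSb hSne).mp hr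
    exact (show v ≤ g a from ha).trans (hmono har.le)
  have hle : g r0 ≤ v := by
    rw [← hball]
    have hU : F ∩ Metric.ball (0 : Vec (n+1)) r0 ⊆ (⋃ k : ℕ, F ∩ Metric.closedBall (0 : Vec (n+1)) (r0 - 1 / (k + 1))) := by
      rintro x ⟨hx, hr⟩
      have hr : ‖x‖ < r0 := by simpa using hr
      obtain ⟨k, hk⟩ := exists_nat_one_div_lt (sub_pos.mpr hr)
      refine Set.mem_iUnion.mpr ⟨k, hx, ?_⟩
      simp only [Metric.mem_closedBall, dist_zero_right]
      linarith
    refine (measure_mono hU).trans ?_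
    have hmon : Monotone (fun k : ℕ => F ∩ Metric.closedBall (0 : Vec (n+1)) (r0 - 1 / (k + 1))) := fun a b hab =>
      Set.inter_subset_inter_right _ (Metric.closedBall_subset_closedBall (by
        have := Nat.one_div_le_one_div (α := ℝ) hab
        linarith))
    rw [hmon.measure_iUnion]
    refine iSup_le fun k => (hlow _ ?_).le
    have : (0:ℝ) < 1 / (k + 1) := by positivity
    linarith
  have hge : v ≤ g r0 := by
    by_contra hlt
    have hlt := not_le.mp hlt
    have ht : Filter.Tendsto (fun k : ℕ => g (r0 + 1 / (k + 1))) Filter.atTop (nhds (volume (⋂ k : ℕ, Metric.closedBall (0 : Vec (n+1)) (r0 + 1 / (k + 1)) ∩ F))) := by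
      have := tendsto_measure_iInter_atTop (μ := (volume : Measure (Vec (n+1))).restrict F) (s := fun k : ℕ => Metric.closedBall (0 : Vec (n+1)) (r0 + 1 / (k + 1)))
        (fun k => measurableSet_closedBall.nullMeasurableSet)
        (fun a b hab => (Metric.closedBall_subset_closedBall (by
          have := Nat.one_div_le_one_div (α := ℝ) hab
          linarith)))
        ⟨0, by rw [Measure.restrict_apply measurableSet_closedBall, Set.inter_comm]; exact hgfin _⟩
      rw [Measure.restrict_apply (MeasurableSet.iInter fun k => measurableSet_closedBall), Set.iInter_inter] at this
      convert this using 2 with k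
      rw [Function.comp_apply, Measure.restrict_apply measurableSet_closedBall, Set.inter_comm]
    have hI : volume (⋂ k : ℕ, Metric.closedBall (0 : Vec (n+1)) (r0 + 1 / (k + 1)) ∩ F) ≤ g r0 := by
      refine measure_mono ?_
      intro x hx
      have hx := Set.mem_iInter.mp hx
      refine ⟨(hx 0).2, ?_⟩
      simp only [Metric.mem_closedBall, dist_zero_right]
      by_contra hlt
      obtain ⟨k, hk⟩ := exists_nat_one_div_lt (sub_pos.mpr (not_le.mp hlt))
      have := (hx k).1
      simp only [Metric.mem_closedBall, dist_zero_right] at this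
      linarith
    have : v ≤ volume (⋂ k : ℕ, Metric.closedBall (0 : Vec (n+1)) (r0 + 1 / (k + 1)) ∩ F) :=
      ge_of_tendsto' ht fun k => hup _ (by
        have : (0:ℝ) < 1 / (k + 1) := by positivity
        linarith)
    exact absurd (this.trans hI) (not_le.mpr hlt)
  have hfin : {t | t ∈ F ∧ volume {u | u ∈ F ∧ ‖u‖ ≤ ‖t‖} < v} = F ∩ Metric.ball 0 r0 := by
    ext t
    simp only [hset]
    constructor
    · rintro ⟨h1, h2⟩
      refine ⟨h1, ?_⟩
      simp only [Metric.mem_ball, dist_zero_right]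
      by_contra h
      exact absurd (hge.trans (hmono (not_lt.mp h))) (not_le.mpr h2)
    · rintro ⟨h1, h2⟩
      simp only [Metric.mem_ball, dist_zero_right] at h2
      exact ⟨h1, hlow _ h2⟩
  rw [hfin, hball]
  exact le_antisymm hle hge

/-- size of the fibre over `y` -/
def fib (n : ℕ) (E : Set (Pt n)) (y : Pt n) : ℝ≥0∞ :=
  volume {t : Vec n | (y.1 + t, y.2 + ‖t‖ ^ 2) ∈ E}

theorem fib_meas (n : ℕ) (E : Set (Pt n)) (hE : MeasurableSet E) : Measurable (fib n E) := by
  have hm : Measurable (fun p : Pt n × Vec n => (p.1.1 + p.2, p.1.2 + ‖p.2‖ ^ 2)) := by fun_prop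
  exact measurable_measure_prodMk_left (hm hE)

theorem fib_bound (n : ℕ) (E : Set (Pt n)) (hE : MeasurableSet E) :
    ∫⁻ y, fib n E y ^ (n+2) ≤ (n+1) * 2 ^ n * volume E ^ (n+1) := by
  have hp := PiLp.volume_preserving_toLp (Fin n)
  have hΦ : MeasurePreserving (Prod.map (WithLp.toLp 2 : (Fin n → ℝ) → Vec n) (id : ℝ → ℝ)) volume volume :=
    hp.prod (MeasurePreserving.id volume)
  rw [← hΦ.lintegral_comp ((fib_meas n E hE).pow_const _), ← hΦ.measure_preimage hE.nullMeasurableSet]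
  refine le_trans (le_of_eq ?_) (strong_bound n _ (hΦ.measurable hE))
  refine lintegral_congr fun y => ?_
  congr 1
  rw [fib, ← hp.measure_preimage]
  · congr 1
    ext t
    simp only [Set.mem_preimage, Set.mem_ofPred_eq, Prod.map, id, qq]
    rw [EuclideanSpace.norm_sq_eq]
    simp
  · have hm : Measurable (fun p : Vec n => ((WithLp.toLp 2 y.1 : Vec n) + p, y.2 + ‖p‖ ^ 2)) := by fun_prop
    exact (hm hE).nullMeasurableSet

theorem fib_fin (n : ℕ) (E Es : Set (Pt n)) (hE : MeasurableSet E)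
    (hEf : volume E < ⊤) (hEsf : volume Es < ⊤) :
    ∫⁻ y in Es, fib n E y < ⊤ := by
  have h1 : ∀ y, fib n E y ≤ 1 + fib n E y ^ (n+2) := by
    intro y
    rcases le_total (fib n E y) 1 with h | h
    · exact h.trans le_self_add
    · exact (le_self_pow h (by simp)).trans le_add_self
  calc ∫⁻ y in Es, fib n E y ≤ ∫⁻ y in Es, (1 + fib n E y ^ (n+2)) := lintegral_mono h1
    _ = volume Es + ∫⁻ y in Es, fib n E y ^ (n+2) := by
        rw [lintegral_add_left measurable_const]; simp
    _ ≤ volume Es + (n+1) * 2 ^ n * volume E ^ (n+1) := by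
        gcongr
        exact (setLIntegral_le_lintegral _ _).trans (fib_bound n E hE)
    _ < ⊤ := by finiteness

theorem inc_eq (n : ℕ) (E S : Set (Pt n)) (hE : MeasurableSet E) (hS : MeasurableSet S) :
    incT n E S = ∫⁻ y in S, fib n E y := by
  have hm : Measurable (fun p : Pt n × Vec n => (p.1.1 - p.2, p.1.2 - ‖p.2‖ ^ 2)) := by fun_prop
  have hm2 : Measurable (fun p : Vec n × Pt n => (p.2.1 + p.1, p.2.2 + ‖p.1‖ ^ 2)) := by fun_prop
  have he : Measurable (E.indicator (1 : Pt n → ℝ≥0∞)) := measurable_one.indicator hE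
  have hs : Measurable (S.indicator (1 : Pt n → ℝ≥0∞)) := measurable_one.indicator hS
  obtain ⟨K, hK⟩ : ∃ K : Pt n → Vec n → ℝ≥0∞, K = fun x t => E.indicator 1 x * S.indicator 1 (x.1 - t, x.2 - ‖t‖ ^ 2) := ⟨_, rfl⟩
  have hKm : Measurable (Function.uncurry K) := by
    rw [hK]; exact (he.comp measurable_fst).mul (hs.comp hm)
  obtain ⟨L, hL⟩ : ∃ L : Vec n → Pt n → ℝ≥0∞, L = fun t y => E.indicator 1 (y.1 + t, y.2 + ‖t‖ ^ 2) * S.indicator 1 y := ⟨_, rfl⟩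
  have hLm : Measurable (Function.uncurry L) := by
    rw [hL]; exact (he.comp hm2).mul (hs.comp measurable_snd)
  calc incT n E S = ∫⁻ x, ∫⁻ t, K x t := by
        rw [incT, ← lintegral_indicator hE]
        refine lintegral_congr fun x => ?_
        rw [hK]
        by_cases hx : x ∈ E
        · simp [hx, radonT]
        · simp [hx]
    _ = ∫⁻ t, ∫⁻ x, K x t := lintegral_lintegral_swap hKm.aemeasurable
    _ = ∫⁻ t, ∫⁻ y, L t y := by
        refine lintegral_congr fun t => ?_
        rw [← lint_shift (V := Vec n) (fun x => K x t) (t, ‖t‖ ^ 2)]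
        refine lintegral_congr fun y => ?_
        rw [hK, hL]
        simp only [Prod.fst_add, Prod.snd_add, add_sub_cancel_right]
        rfl
    _ = ∫⁻ y, ∫⁻ t, L t y := lintegral_lintegral_swap hLm.aemeasurable
    _ = ∫⁻ y in S, fib n E y := by
        rw [← lintegral_indicator hS]
        refine lintegral_congr fun y => ?_
        rw [hL]
        have hmy : Measurable (fun t : Vec n => (y.1 + t, y.2 + ‖t‖ ^ 2)) := by fun_prop
        by_cases hy : y ∈ S
        · simp only [hy, Set.indicator_of_mem, Pi.one_apply, mul_one]
          exact lintegral_indicator_one (hmy hE)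
        · simp [hy]

theorem radon_eq (n : ℕ) (S : Set (Pt n)) (hS : MeasurableSet S) (x : Pt n) :
    radonT n (S.indicator 1) x = volume {s : Vec n | (x.1 - s, x.2 - ‖s‖ ^ 2) ∈ S} := by
  have hm : Measurable (fun t : Vec n => (x.1 - t, x.2 - ‖t‖ ^ 2)) := by fun_prop
  exact lintegral_indicator_one (hm hS)

theorem tower (n : ℕ) (E Es : Set (Pt (n+1))) (hE : MeasurableSet E) (hEs : MeasurableSet Es)
    (hE0 : 0 < volume E) (hEf : volume E < ⊤) (hEs0 : 0 < volume Es) (hEsf : volume Es < ⊤)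
    (hT : 0 < incT (n+1) E Es) :
        ∃ (xb : Pt (n+1)) (Ω₁ : Set (Vec (n+1)))
          (Ω : Set (Vec (n+1) × Vec (n+1))),
          xb ∈ E ∧ MeasurableSet Ω₁ ∧ MeasurableSet Ω ∧ Ω ⊆ Ω₁ ×ˢ Set.univ ∧
          volume Ω₁ = ENNReal.ofReal (1/4) * (incT (n+1) E Es / volume E) ∧
          (∀ s ∈ Ω₁, (xb.1 - s, xb.2 - ‖s‖ ^ 2) ∈ Es) ∧
          (∀ s ∈ Ω₁, volume {t | (s, t) ∈ Ω} =
            ENNReal.ofReal (1/4) * (incT (n+1) E Es / volume Es)) ∧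
          (∀ p ∈ Ω, (xb.1 - p.1 + p.2, xb.2 - ‖p.1‖ ^ 2 + ‖p.2‖ ^ 2) ∈ E) := by
  set I := incT (n+1) E Es with hI
  have hIeq := inc_eq (n+1) E Es hE hEs
  have hIfin : I ≠ ⊤ := by
    rw [hI, hIeq]; exact (fib_fin (n+1) E Es hE hEf hEsf).ne
  set q : ℝ≥0∞ := ENNReal.ofReal (1/4) with hq
  have hqt : q ≠ ⊤ := ENNReal.ofReal_ne_top
  set v1 := q * (I / volume E) with hv1
  set v2 := q * (I / volume Es) with hv2
  have hv1t : v1 ≠ ⊤ := ENNReal.mul_ne_top hqt (ENNReal.div_ne_top hIfin hE0.ne')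
  have hv2t : v2 ≠ ⊤ := ENNReal.mul_ne_top hqt (ENNReal.div_ne_top hIfin hEs0.ne')
  have hv1E : v1 * volume E = q * I := by
    rw [hv1, mul_assoc, ENNReal.div_mul_cancel hE0.ne' hEf.ne]
  have hv2E : v2 * volume Es = q * I := by
    rw [hv2, mul_assoc, ENNReal.div_mul_cancel hEs0.ne' hEsf.ne]
  have hqI : q * I + q * I < I := by
    lift I to NNReal using hIfin with J
    have hJ : (0:ℝ) < J := by exact_mod_cast hT
    rw [← ENNReal.ofReal_coe_nnreal, hq, ← ENNReal.ofReal_mul (by norm_num), ← ENNReal.ofReal_add (by positivity) (by positivity)]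
    rw [ENNReal.ofReal_lt_ofReal_iff hJ]
    linarith
  have hfm := fib_meas (n+1) E hE
  set G : Set (Pt (n+1)) := Es ∩ {y | v2 < fib (n+1) E y} with hG
  have hGm : MeasurableSet G := hEs.inter (measurableSet_lt measurable_const hfm)
  have hsplit : I ≤ incT (n+1) E G + q * I := by
    have hsp := lintegral_inter_add_sdiff (μ := volume) (fib (n+1) E) Es (measurableSet_lt (measurable_const (a := v2)) hfm)
    rw [← hIeq] at hsp
    rw [inc_eq (n+1) E G hE hGm]
    refine hsp.symm.le.trans ?_
    gcongr
    calc ∫⁻ y in Es \ {y | v2 < fib (n+1) E y}, fib (n+1) E y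
        ≤ ∫⁻ y in Es \ {y | v2 < fib (n+1) E y}, v2 := by
          refine setLIntegral_mono measurable_const ?_
          intro y hy
          exact not_lt.mp hy.2
      _ ≤ v2 * volume Es := by
          rw [setLIntegral_const]; gcongr; exact Set.sdiff_subset
      _ = q * I := hv2E
  have hbig : q * I < incT (n+1) E G := by
    by_contra h
    have h := not_lt.mp h
    exact absurd (hsplit.trans (add_le_add_left h (q * I))) (not_le.mpr hqI)
  obtain ⟨xb, hxE, hxv⟩ : ∃ x ∈ E, v1 < radonT (n+1) (G.indicator 1) x := by
    by_contra h
    push Not at h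
    refine absurd ?_ (not_le.mpr hbig)
    calc incT (n+1) E G ≤ ∫⁻ x in E, v1 := setLIntegral_mono measurable_const h
      _ = q * I := by rw [setLIntegral_const, hv1E]
  rw [radon_eq _ _ hGm] at hxv
  set F1 := {s : Vec (n+1) | (xb.1 - s, xb.2 - ‖s‖ ^ 2) ∈ G} with hF1
  have hF1m : MeasurableSet F1 := by
    have hm : Measurable (fun t : Vec (n+1) => (xb.1 - t, xb.2 - ‖t‖ ^ 2)) := by fun_prop
    exact hm hGm
  set Ω₁ := {t | t ∈ F1 ∧ volume {u | u ∈ F1 ∧ ‖u‖ ≤ ‖t‖} < v1} with hΩ₁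
  have hΩ₁m : MeasurableSet Ω₁ := by
    suffices hh : Measurable (fun t : Vec (n+1) => volume {u | u ∈ F1 ∧ ‖u‖ ≤ ‖t‖}) from
      hF1m.inter (measurableSet_lt hh (measurable_const (a := v1)))
    have : MeasurableSet {p : Vec (n+1) × Vec (n+1) | p.2 ∈ F1 ∧ ‖p.2‖ ≤ ‖p.1‖} :=
      (measurable_snd hF1m).inter (measurableSet_le measurable_snd.norm measurable_fst.norm)
    exact measurable_measure_prodMk_left this
  have hm4 : Measurable (fun p : Vec (n+1) × Vec (n+1) => (xb.1 - p.1 + p.2, xb.2 - ‖p.1‖ ^ 2 + ‖p.2‖ ^ 2)) := by fun_prop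
  set W := {p : Vec (n+1) × Vec (n+1) | (xb.1 - p.1 + p.2, xb.2 - ‖p.1‖ ^ 2 + ‖p.2‖ ^ 2) ∈ E} with hW
  have hWm : MeasurableSet W := hm4 hE
  set Ω := {p : Vec (n+1) × Vec (n+1) | p.1 ∈ Ω₁ ∧ (p ∈ W ∧ volume {u | (p.1, u) ∈ W ∧ ‖u‖ ≤ ‖p.2‖} < v2)} with hΩ
  have hΩm : MeasurableSet Ω := by
    suffices hh : Measurable (fun p : Vec (n+1) × Vec (n+1) => volume {u | (p.1, u) ∈ W ∧ ‖u‖ ≤ ‖p.2‖}) from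
      (measurable_fst hΩ₁m).inter (hWm.inter (measurableSet_lt hh (measurable_const (a := v2))))
    have hm5 : Measurable (fun z : (Vec (n+1) × Vec (n+1)) × Vec (n+1) => (z.1.1, z.2)) := by fun_prop
    have : MeasurableSet {z : (Vec (n+1) × Vec (n+1)) × Vec (n+1) | (z.1.1, z.2) ∈ W ∧ ‖z.2‖ ≤ ‖z.1.2‖} :=
      (hm5 hWm).inter (measurableSet_le measurable_snd.norm (measurable_snd.comp measurable_fst).norm)
    exact measurable_measure_prodMk_left this
  refine ⟨xb, Ω₁, Ω, hxE, hΩ₁m, hΩm, fun p hp => ⟨hp.1, Set.mem_univ _⟩, slice_exact n F1 v1 hv1t hxv,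
    fun s hs => hs.1.1, ?_, fun p hp => hp.2.1⟩
  intro s hs
  have hsv : v2 < volume {t | (s, t) ∈ W} := hs.1.2
  rw [← slice_exact n _ v2 hv2t hsv]
  congr 1
  ext t
  exact ⟨fun h => h.2, fun h => ⟨hs, h⟩⟩

/-- the tower lemma: with `α = 𝒯(E,E*)/|E|`,
`α* = 𝒯(E,E*)/|E*|`, there exist `x̄ ∈ E`, `Ω₁ ⊆ ℝ^{d-1}` and
`Ω ⊆ Ω₁ × ℝ^{d-1}` with `|Ω₁| = cα`, `x̄ - (s,|s|²) ∈ E*` for `s ∈ Ω₁`,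
slices of `Ω` of measure `cα*`, and `x̄ - (s,|s|²) + (t,|t|²) ∈ E` on `Ω`. -/
theorem stmt11 (d : ℕ) (hd : 2 ≤ d) :
    ∃ c : ℝ, 0 < c ∧
      ∀ (E Es : Set (Pt (d - 1))), MeasurableSet E → MeasurableSet Es →
        0 < volume E → volume E < ⊤ → 0 < volume Es → volume Es < ⊤ →
        0 < incT (d - 1) E Es →
        ∃ (xb : Pt (d - 1)) (Ω₁ : Set (Vec (d - 1)))
          (Ω : Set (Vec (d - 1) × Vec (d - 1))),
          xb ∈ E ∧ MeasurableSet Ω₁ ∧ MeasurableSet Ω ∧ Ω ⊆ Ω₁ ×ˢ Set.univ ∧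
          volume Ω₁ = ENNReal.ofReal c * (incT (d - 1) E Es / volume E) ∧
          (∀ s ∈ Ω₁, (xb.1 - s, xb.2 - ‖s‖ ^ 2) ∈ Es) ∧
          (∀ s ∈ Ω₁, volume {t | (s, t) ∈ Ω} =
            ENNReal.ofReal c * (incT (d - 1) E Es / volume Es)) ∧
          (∀ p ∈ Ω, (xb.1 - p.1 + p.2, xb.2 - ‖p.1‖ ^ 2 + ‖p.2‖ ^ 2) ∈ E) := by
  obtain ⟨n, rfl⟩ : ∃ n, d = n + 2 := ⟨d - 2, by omega⟩
  refine ⟨1/4, by norm_num, ?_⟩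
  intro E Es hE hEs h1 h2 h3 h4 h5
  exact tower n E Es hE hEs h1 h2 h3 h4 h5
end
end

section
/- For each integer n ≥ 1 there exists a constant c > 0, depending only on n, with the following property. Let 𝒞 ⊆ ℝ^n be a bounded balanced convex set of positive measure, let δ, λ > 0, and let μ be a positive finite measure supported on 𝒞. Suppose that for every balanced convex subset 𝒞' ⊆ 𝒞 satisfying |𝒞'| ≤ δ |𝒞| one has μ(𝒞 \ 𝒞') ≥ λ. Then ∫_{𝒞^n} |det(u₁, …, u_n)| dμ(u₁) ⋯ dμ(u_n) ≥ c δ^n λ^n |𝒞|, where det(u₁, …, u_n) denotes the determinant of the n × n matrix whose columns are u₁, …, u_n. -/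
open MeasureTheory ENNReal

noncomputable section

/-- Iterated lower bound for multilinear forms. -/
lemma multilinear_lower {n : ℕ} (μ : Measure (Fin n → ℝ)) [IsFiniteMeasure μ]
    (C : Set (Fin n → ℝ)) (ε lam : ℝ) (hε : 0 ≤ ε) (hlam : 0 ≤ lam)
    (h : ∀ f : (Fin n → ℝ) →ₗ[ℝ] ℝ, ∀ v ∈ C, ENNReal.ofReal lam ≤ μ {x | ε * |f v| ≤ |f x|}) :
    ∀ (m : ℕ) (g : MultilinearMap ℝ (fun _ : Fin m => (Fin n → ℝ)) ℝ), Continuous g →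
      ∀ v : Fin m → (Fin n → ℝ), (∀ i, v i ∈ C) →
      ENNReal.ofReal ((ε * lam) ^ m * |g v|) ≤
        ∫⁻ u, ENNReal.ofReal |g u| ∂(Measure.pi fun _ : Fin m => μ) := by
  intro m
  induction m with
  | zero =>
    intro g hg v hv
    have : ∀ u, g u = g v := fun u => by rw [Subsingleton.elim u v]
    simp only [this, lintegral_const, Measure.pi_univ]
    simp
  | succ m ih =>
    intro g hg v hv
    have hcons : Continuous (fun p : (Fin n → ℝ) × (Fin m → Fin n → ℝ) =>
        g (Fin.cons p.1 p.2)) := by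
      apply hg.comp
      refine continuous_pi fun i => ?_
      refine Fin.cases ?_ (fun j => ?_) i
      · simpa using continuous_fst
      · simpa [Function.comp_def] using (continuous_apply j).comp continuous_snd
    have e := ((measurePreserving_piFinSuccAbove (fun _ : Fin (m+1) => μ) 0).symm).lintegral_comp_emb
      (MeasurableEquiv.measurableEmbedding _) (fun u => ENNReal.ofReal |g u|)
    rw [← e]
    have e2 : ∀ p : (Fin n → ℝ) × (Fin m → Fin n → ℝ),
        (MeasurableEquiv.piFinSuccAbove (fun _ : Fin (m+1) => (Fin n → ℝ)) 0).symm p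
          = Fin.cons p.1 p.2 := by
      intro p
      simp [MeasurableEquiv.piFinSuccAbove_symm_apply, Fin.insertNthEquiv]
    simp only [e2]
    rw [lintegral_prod _ (by
      exact (ENNReal.continuous_ofReal.comp hcons.abs).measurable.aemeasurable)]
    set f : (Fin n → ℝ) →ₗ[ℝ] ℝ :=
      { toFun := fun x => g.curryLeft x (Fin.tail v)
        map_add' := by intro x y; simp
        map_smul' := by intro x y; simp } with hf
    have hfv : f (v 0) = g v := by
      simp only [hf, LinearMap.coe_mk, AddHom.coe_mk, MultilinearMap.curryLeft_apply]
      rw [Fin.cons_self_tail]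
    have hS : MeasurableSet {x | ε * |f (v 0)| ≤ |f x|} :=
      (isClosed_le continuous_const f.continuous_of_finiteDimensional.abs).measurableSet
    calc ENNReal.ofReal ((ε * lam) ^ (m+1) * |g v|)
        = ENNReal.ofReal ((ε * lam) ^ m * (ε * |f (v 0)|)) * ENNReal.ofReal lam := by
          rw [← ENNReal.ofReal_mul (by positivity), hfv]; congr 1; ring
      _ ≤ ENNReal.ofReal ((ε * lam) ^ m * (ε * |f (v 0)|)) * μ {x | ε * |f (v 0)| ≤ |f x|} := by
          gcongr; exact h f _ (hv 0)
      _ = ∫⁻ x in {x | ε * |f (v 0)| ≤ |f x|},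
            ENNReal.ofReal ((ε * lam) ^ m * (ε * |f (v 0)|)) ∂μ := by
          rw [setLIntegral_const]
      _ ≤ ∫⁻ x in {x | ε * |f (v 0)| ≤ |f x|},
            ∫⁻ y, ENNReal.ofReal |g (Fin.cons x y)| ∂(Measure.pi fun _ : Fin m => μ) ∂μ := by
          refine setLIntegral_mono' hS fun x hx => ?_
          have := ih (g.curryLeft x) (by
            exact hcons.comp (Continuous.prodMk continuous_const continuous_id)) (Fin.tail v)
            (fun i => hv _)
          refine le_trans ?_ this
          apply ENNReal.ofReal_le_ofReal
          have hx' : ε * |f (v 0)| ≤ |f x| := hx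
          exact mul_le_mul_of_nonneg_left hx' (by positivity)
      _ ≤ _ := setLIntegral_le_lintegral _ _

open scoped Pointwise in
/-- Thin slabs of a symmetric convex set have small volume. -/
lemma slab_volume {n : ℕ} (C : Set (Fin n → ℝ)) (hC : Convex ℝ C)
    (f : (Fin n → ℝ) →ₗ[ℝ] ℝ) (hsym : ∀ x ∈ C, -x ∈ C) (v : Fin n → ℝ) (hv : v ∈ C)
    (N : ℕ) (hN : 0 < N) :
    (N : ℝ≥0∞) * volume {x ∈ C | |f x| < 1 / (2 * N) * |f v|} ≤ 2 ^ n * volume C := by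
  set C' := {x ∈ C | |f x| < 1 / (2 * N) * |f v|} with hC'
  have hN' : (0:ℝ) < N := by exact_mod_cast hN
  have hconv : Convex ℝ C' := by
    intro x hx y hy a b ha hb' hab
    refine ⟨hC hx.1 hy.1 ha hb' hab, ?_⟩
    have h1 := abs_lt.1 hx.2
    have h2 := abs_lt.1 hy.2
    have := (convex_Ioo (-(1 / (2 * N) * |f v|)) (1 / (2 * N) * |f v|))
      (Set.mem_Ioo.2 h1) (Set.mem_Ioo.2 h2) ha hb' hab
    rw [abs_lt, map_add, map_smul, map_smul]
    exact this
  have h0 : (0 : Fin n → ℝ) ∈ C := by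
    have := hC hv (hsym v hv) (by norm_num : (0:ℝ) ≤ 1/2) (by norm_num : (0:ℝ) ≤ 1/2) (by norm_num)
    simpa using this
  let T : Fin N → Set (Fin n → ℝ) := fun j =>
    (fun x => x + (-(((j : ℕ) : ℝ) / (2 * N))) • v) ⁻¹' ((2⁻¹ : ℝ) • C')
  have hhalf : volume ((2⁻¹ : ℝ) • C') = ENNReal.ofReal ((2⁻¹)^n) * volume C' := by
    rw [Measure.addHaar_smul]
    simp [abs_of_pos]
  have hTv : ∀ j, volume (T j) = ENNReal.ofReal ((2⁻¹)^n) * volume C' := by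
    intro j
    rw [← hhalf]
    exact measure_preimage_add_right _ _ _
  have hnull2 : NullMeasurableSet ((2⁻¹ : ℝ) • C') volume :=
    (hconv.smul _).nullMeasurableSet volume
  have hTn : ∀ j, NullMeasurableSet (T j) volume := fun j =>
    hnull2.preimage (measurePreserving_add_right volume _).quasiMeasurePreserving
  have hTC : ∀ j, T j ⊆ C := by
    intro j x hx
    obtain ⟨y, hy, hyx⟩ := hx
    have hj : ((j:ℕ):ℝ) / N ≤ 1 := by
      rw [div_le_one hN']; exact_mod_cast j.2.le
    have h1 : (((j:ℕ):ℝ) / N) • v ∈ C := hC.smul_mem_of_zero_mem h0 hv ⟨by positivity, hj⟩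
    have := hC hy.1 h1 (by norm_num : (0:ℝ) ≤ 1/2) (by norm_num : (0:ℝ) ≤ 1/2) (by norm_num)
    convert this using 1
    have : x = (2⁻¹:ℝ) • y + (((j:ℕ):ℝ) / (2*N)) • v := by
      simp only at hyx; rw [hyx]; module
    rw [this, smul_smul]
    congr 2
    · norm_num
    · field_simp
  have hdisj : Pairwise (Function.onFun (AEDisjoint volume) T) := by
    intro i j hij
    apply Disjoint.aedisjoint
    rw [Set.disjoint_left]
    rintro x ⟨y, hy, hyx⟩ ⟨z, hz, hzx⟩
    have h1 := hy.2
    have h2 := hz.2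
    have e1 : f y = 2 * f x - ((i:ℕ):ℝ) / N * f v := by
      have := congrArg f hyx
      simp only [map_add, map_smul, smul_eq_mul] at this
      have h3 : f y = 2 * (2⁻¹ * f y) := by ring
      rw [h3, this]; field_simp; ring
    have e2 : f z = 2 * f x - ((j:ℕ):ℝ) / N * f v := by
      have := congrArg f hzx
      simp only [map_add, map_smul, smul_eq_mul] at this
      have h3 : f z = 2 * (2⁻¹ * f z) := by ring
      rw [h3, this]; field_simp; ring
    have e3 : (f y - f z) * N = (((j:ℕ):ℝ) - ((i:ℕ):ℝ)) * f v := by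
      rw [e1, e2]; field_simp; ring
    have e4 : |f y - f z| < 1 / N * |f v| := by
      calc |f y - f z| ≤ |f y| + |f z| := abs_sub _ _
        _ < 1 / (2 * N) * |f v| + 1 / (2 * N) * |f v| := add_lt_add h1 h2
        _ = 1 / N * |f v| := by field_simp; ring
    have e5 : (1:ℝ) ≤ |((j:ℕ):ℝ) - ((i:ℕ):ℝ)| := by
      have : (1:ℤ) ≤ |((j:ℕ):ℤ) - ((i:ℕ):ℤ)| := by
        apply Int.one_le_abs
        intro h
        apply hij
        ext
        omega
      exact_mod_cast this
    have e6 : |f y - f z| * N = |((j:ℕ):ℝ) - ((i:ℕ):ℝ)| * |f v| := by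
      rw [← abs_mul, ← e3, abs_mul, abs_of_pos hN']
    have e7 : |f y - f z| * N < |f v| := by
      calc _ < 1 / N * |f v| * N := by gcongr
        _ = _ := by field_simp
    nlinarith [abs_nonneg (f v)]
  have hsum := measure_iUnion₀ hdisj hTn
  have hle : volume (⋃ j, T j) ≤ volume C := measure_mono (Set.iUnion_subset hTC)
  rw [hsum] at hle
  simp only [hTv, tsum_fintype, Finset.sum_const, Finset.card_univ, Fintype.card_fin,
    nsmul_eq_mul] at hle
  have h22 : (2:ℝ≥0∞)^n * ENNReal.ofReal ((2⁻¹)^n) = 1 := by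
    have : (2:ℝ≥0∞)^n = ENNReal.ofReal (2^n) := by
      rw [ENNReal.ofReal_pow (by norm_num)]; simp
    rw [this, ← ENNReal.ofReal_mul (by positivity), ← mul_pow]; simp
  calc (N : ℝ≥0∞) * volume C'
      = (2^n * ENNReal.ofReal ((2⁻¹)^n)) * (N * volume C') := by rw [h22, one_mul]
    _ = 2^n * (N * (ENNReal.ofReal ((2⁻¹)^n) * volume C')) := by ring
    _ ≤ 2^n * volume C := by gcongr

/-- A bounded set of positive volume contains `n` vectors with comparable determinant. -/
lemma exists_det {n : ℕ} (C : Set (Fin n → ℝ)) (hb : Bornology.IsBounded C)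
    (hpos : 0 < volume C) :
    ∃ v : Fin n → Fin n → ℝ, (∀ i, v i ∈ C) ∧
      volume C ≤ 4 ^ n * ENNReal.ofReal |Matrix.det (Matrix.of fun i j => v j i)| := by
  let D : (Fin n → Fin n → ℝ) → ℝ := fun v => |Matrix.det (Matrix.of fun i j => v j i)|
  have hDc : Continuous D := by
    apply Continuous.abs
    apply Continuous.matrix_det
    exact continuous_matrix fun i j => (continuous_apply i).comp (continuous_apply j)
  let P : Set (Fin n → Fin n → ℝ) := Set.univ.pi fun _ => C
  have hbdd : BddAbove (D '' P) := by
    have hcomp : IsCompact (closure P) := by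
      apply Bornology.IsBounded.isCompact_closure
      exact Bornology.IsBounded.pi fun _ => hb
    exact (hcomp.image hDc).bddAbove.mono (Set.image_mono subset_closure)
  obtain ⟨w, hwP, hw⟩ : ∃ w ∈ P, 0 < D w := by
    have hspan : ⊤ ≤ Submodule.span ℝ C := by
      by_contra hne
      have h1 : volume (Submodule.span ℝ C : Set (Fin n → ℝ)) = 0 :=
        Measure.addHaar_submodule volume _ (fun h => hne h.ge)
      have := measure_mono_null (Submodule.subset_span (R := ℝ) (s := C)) h1
      exact hpos.ne' this
    let b := Module.Basis.ofSpan hspan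
    have : Fintype ((linearIndepOn_empty ℝ id).extend (Set.empty_subset C)) :=
      FiniteDimensional.fintypeBasisIndex b
    let b' := b.reindex (Fintype.equivFinOfCardEq
      (by rw [← Module.finrank_eq_card_basis b]; simp) :
        ((linearIndepOn_empty ℝ id).extend (Set.empty_subset C)) ≃ Fin n)
    refine ⟨b', ?_, ?_⟩
    · intro i _
      have : b' i ∈ Set.range b := by simp [b']
      exact Module.Basis.ofSpan_subset hspan this
    · rw [abs_pos]
      have hli : LinearIndependent ℝ (Matrix.of fun i j => b' j i : Matrix (Fin n) (Fin n) ℝ).col :=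
        b'.linearIndependent
      exact ((Matrix.isUnit_iff_isUnit_det _).1
        (Matrix.linearIndependent_cols_iff_isUnit.1 hli)).ne_zero
  set s := sSup (D '' P) with hs
  have hspos : 0 < s := lt_of_lt_of_le hw (le_csSup hbdd ⟨w, hwP, rfl⟩)
  obtain ⟨_, ⟨v, hvP, rfl⟩, hv⟩ := exists_lt_of_lt_csSup (s := D '' P) ⟨_, w, hwP, rfl⟩
    (show s / 2 < sSup (D '' P) by rw [← hs]; linarith)
  refine ⟨v, fun i => hvP i trivial, ?_⟩
  set A : Matrix (Fin n) (Fin n) ℝ := Matrix.of fun i j => v j i with hA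
  have hvA : s / 2 < |A.det| := hv
  have hA0 : A.det ≠ 0 := by
    intro h; rw [h] at hvA; simp at hvA; linarith
  have hsub : C ⊆ (Matrix.toLin' A) '' Set.Icc (fun _ => -2) (fun _ => 2) := by
    intro x hx
    have hcr : ∀ i, |(A.det)⁻¹ * A.cramer x i| ≤ 2 := by
      intro i
      have h1 : |A.cramer x i| ≤ s := by
        rw [Matrix.cramer_apply]
        apply le_csSup hbdd
        refine ⟨Function.update v i x, ?_, ?_⟩
        · intro j _
          by_cases hj : j = i
          · subst hj; simpa using hx
          · simpa [hj] using hvP j trivial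
        · show |Matrix.det _| = _
          congr 2
          ext k l
          by_cases hl : l = i
          · subst hl; simp
          · simp [hl, hA]
      rw [abs_mul, abs_inv, inv_mul_le_iff₀ (abs_pos.2 hA0)]
      linarith
    refine ⟨fun i => (A.det)⁻¹ * A.cramer x i, ⟨fun i => (abs_le.1 (hcr i)).1,
      fun i => (abs_le.1 (hcr i)).2⟩, ?_⟩
    have : (fun i => (A.det)⁻¹ * A.cramer x i) = (A.det)⁻¹ • A.cramer x := rfl
    rw [this, map_smul, Matrix.toLin'_apply, Matrix.mulVec_cramer, smul_smul,
      inv_mul_cancel₀ hA0, one_smul]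
  calc volume C ≤ volume ((Matrix.toLin' A) '' Set.Icc (fun _ => -2) (fun _ => 2)) :=
        measure_mono hsub
    _ = 4 ^ n * ENNReal.ofReal |A.det| := by
        rw [Measure.addHaar_image_linearMap, LinearMap.det_toLin', Real.volume_Icc_pi]
        rw [mul_comm]
        congr 1
        simp
        norm_num

/-- determinant lower bound: if `μ` is a finite measure
supported on a bounded balanced convex set `𝒞` which gives mass at least `λ`
to the complement in `𝒞` of every balanced convex subset of measure at most
`δ|𝒞|`, then `∫_{𝒞^n} |det(u₁,…,uₙ)| dμ⋯dμ ≥ c δ^n λ^n |𝒞|`. -/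
theorem stmt15 (n : ℕ) (hn : 1 ≤ n) :
    ∃ c : ℝ, 0 < c ∧
      ∀ (𝒞 : Set (Fin n → ℝ)), Convex ℝ 𝒞 → Bornology.IsBounded 𝒞 →
        (∀ x ∈ 𝒞, -x ∈ 𝒞) → 0 < volume 𝒞 →
      ∀ (δ lam : ℝ), 0 < δ → 0 < lam →
      ∀ (μ : Measure (Fin n → ℝ)) [IsFiniteMeasure μ], μ 𝒞ᶜ = 0 →
        (∀ 𝒞' ⊆ 𝒞, Convex ℝ 𝒞' → (∀ x ∈ 𝒞', -x ∈ 𝒞') →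
          volume 𝒞' ≤ ENNReal.ofReal δ * volume 𝒞 →
          ENNReal.ofReal lam ≤ μ (𝒞 \ 𝒞')) →
        ENNReal.ofReal (c * δ ^ n * lam ^ n) * volume 𝒞 ≤
          ∫⁻ u in Set.univ.pi (fun _ : Fin n => 𝒞),
            ENNReal.ofReal |Matrix.det (Matrix.of fun i j => u j i)|
              ∂(Measure.pi fun _ : Fin n => μ) := by
  refine ⟨(2 ^ (n + 2))⁻¹ ^ n * 4⁻¹ ^ n, by positivity, ?_⟩
  intro C hC hb hsym hpos δ lam hδ hlam μ _ hμ h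
  have hδ1 : δ < 1 := by
    by_contra hge
    push Not at hge
    have := h C subset_rfl hC hsym (by
      calc volume C = 1 * volume C := (one_mul _).symm
        _ ≤ _ := by gcongr; exact ENNReal.one_le_ofReal.2 hge)
    simp at this
    linarith
  set N := ⌈(2:ℝ) ^ n / δ⌉₊ with hN
  have hN1 : (2:ℝ) ^ n / δ ≤ N := Nat.le_ceil _
  have hN2 : (N:ℝ) < 2 ^ n / δ + 1 := Nat.ceil_lt_add_one (by positivity)
  have hN0 : 0 < N := Nat.ceil_pos.2 (by positivity)
  have hN0' : (0:ℝ) < N := by exact_mod_cast hN0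
  have h2n : (1:ℝ) ≤ 2 ^ n := one_le_pow₀ (by norm_num)
  have hε : δ * (2 ^ (n+2))⁻¹ ≤ 1 / (2 * N) := by
    rw [← div_eq_mul_inv, div_le_div_iff₀ (by positivity) (by positivity)]
    have : (N:ℝ) * δ ≤ 2 ^ n + δ := by
      calc (N:ℝ) * δ ≤ (2 ^ n / δ + 1) * δ := by gcongr
        _ = _ := by field_simp
    rw [pow_add]
    nlinarith
  have hf : ∀ f : (Fin n → ℝ) →ₗ[ℝ] ℝ, ∀ v ∈ C,
      ENNReal.ofReal lam ≤ μ {x | 1 / (2 * N) * |f v| ≤ |f x|} := by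
    intro f v hv
    have hsl := slab_volume C hC f hsym v hv N hN0
    refine (h {x ∈ C | |f x| < 1 / (2 * N) * |f v|} (Set.sep_subset _ _) ?_ ?_ ?_).trans ?_
    · intro x hx y hy a b ha hb' hab
      refine ⟨hC hx.1 hy.1 ha hb' hab, ?_⟩
      have h1 := abs_lt.1 hx.2
      have h2 := abs_lt.1 hy.2
      have := (convex_Ioo (-(1 / (2 * N) * |f v|)) (1 / (2 * N) * |f v|))
        (Set.mem_Ioo.2 h1) (Set.mem_Ioo.2 h2) ha hb' hab
      rw [abs_lt, map_add, map_smul, map_smul]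
      exact this
    · intro x hx
      refine ⟨hsym x hx.1, ?_⟩
      rw [map_neg, abs_neg]
      exact hx.2
    · have hNe : (N:ℝ≥0∞) = ENNReal.ofReal N := by simp
      have h2e : (2:ℝ≥0∞) ^ n ≤ N * ENNReal.ofReal δ := by
        rw [hNe, ← ENNReal.ofReal_mul hN0'.le]
        calc (2:ℝ≥0∞) ^ n = ENNReal.ofReal (2 ^ n) := by
              rw [ENNReal.ofReal_pow (by norm_num)]; simp
          _ ≤ _ := by
              apply ENNReal.ofReal_le_ofReal
              rwa [div_le_iff₀ hδ] at hN1
      have h3 : (N:ℝ≥0∞) * volume {x ∈ C | |f x| < 1 / (2 * N) * |f v|} ≤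
          N * (ENNReal.ofReal δ * volume C) := by
        rw [← mul_assoc]
        exact hsl.trans (by gcongr)
      exact (ENNReal.mul_le_mul_iff_right (by exact_mod_cast hN0.ne') (by simp)).1 h3
    · apply measure_mono
      rintro x ⟨hxC, hx⟩
      by_contra hlt
      exact hx ⟨hxC, not_le.1 hlt⟩
  obtain ⟨v, hvC, hv⟩ := exists_det C hb hpos
  let g : MultilinearMap ℝ (fun _ : Fin n => (Fin n → ℝ)) ℝ :=
    (Matrix.detRowAlternating : (Fin n → ℝ) [⋀^Fin n]→ₗ[ℝ] ℝ).toMultilinearMap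
  have hg : ∀ u, g u = Matrix.det (Matrix.of fun i j => u j i) := by
    intro u
    rw [← Matrix.det_transpose]
    rfl
  have hgc : Continuous g := by
    have : (g : (Fin n → Fin n → ℝ) → ℝ) = fun u => Matrix.det (Matrix.of fun i j => u j i) :=
      funext hg
    rw [this]
    apply Continuous.matrix_det
    exact continuous_matrix fun i j => (continuous_apply i).comp (continuous_apply j)
  have key := multilinear_lower μ C (1 / (2 * N)) lam (by positivity) hlam.le hf n g hgc v hvC
  simp only [hg] at key
  have hres : (Measure.pi fun _ : Fin n => μ).restrict (Set.univ.pi fun _ : Fin n => C)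
      = Measure.pi fun _ : Fin n => μ := by
    rw [Measure.restrict_pi_pi]
    have : μ.restrict C = μ := Measure.restrict_eq_self_of_ae_mem hμ
    rw [this]
  rw [hres]
  refine le_trans ?_ key
  set d := |Matrix.det (Matrix.of fun i j => v j i)| with hd
  have h4 : (4:ℝ≥0∞) ^ n = ENNReal.ofReal (4 ^ n) := by
    rw [ENNReal.ofReal_pow (by norm_num)]; simp
  calc _ ≤ ENNReal.ofReal ((2 ^ (n + 2))⁻¹ ^ n * 4⁻¹ ^ n * δ ^ n * lam ^ n) *
        (4 ^ n * ENNReal.ofReal d) := by gcongr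
    _ = ENNReal.ofReal ((δ * (2 ^ (n+2))⁻¹ * lam) ^ n * d) := by
        rw [h4, ← ENNReal.ofReal_mul (by positivity), ← ENNReal.ofReal_mul (by positivity)]
        congr 1
        have : (4:ℝ)⁻¹ ^ n * 4 ^ n = 1 := by rw [← mul_pow]; norm_num
        rw [mul_pow, mul_pow]
        linear_combination ((2 ^ (n + 2))⁻¹ ^ n * δ ^ n * lam ^ n * d) * this
    _ ≤ _ := by
        apply ENNReal.ofReal_le_ofReal
        gcongr
end
end

section
/- There exists a constant c > 0, depending only on d, with the following property. Let α, α* > 0, let Ω₁ ⊆ ℝ^{d−1} be Lebesgue measurable with |Ω₁| ≥ α, and let Ω ⊆ Ω₁ × ℝ^{d−1} be Lebesgue measurable with |{t : (s, t) ∈ Ω}| ≥ α* for every s ∈ Ω₁. Define Ω̃ = {(s, u) : (s, s + u) ∈ Ω} and Φ(s, u) = (u, s·u) ∈ ℝ^{d−1} × ℝ. Then the outer Lebesgue measure of the image satisfies |Φ(Ω̃)| ≥ c α*^{d/(d−1)} α^{1/(d−1)}. -/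
open MeasureTheory ENNReal
open scoped RealInnerProductSpace

noncomputable section

/-- absolute value of the determinant of a tuple of vectors -/
def adet {n : ℕ} (U : Fin n → Vec n) : ℝ≥0∞ :=
  ENNReal.ofReal |(Matrix.of (fun i j => U i j)).det|

lemma measurable_adet {n : ℕ} : Measurable (adet (n := n)) := by
  have hc : Continuous (fun U : Fin n → Vec n => |(Matrix.of (fun i j => U i j)).det|) := by
    refine Continuous.abs (Continuous.matrix_det ?_)
    refine continuous_matrix (fun i j => ?_)
    simp only [Matrix.of_apply]
    fun_prop
  exact ENNReal.measurable_ofReal.comp hc.measurable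

/-- The slab spanned by a tuple. -/
def slab {n : ℕ} (U : Fin n → Vec n) : Set (Vec n) :=
  {u | ∃ c : Fin n → ℝ, c ∈ Set.Icc (-1 : Fin n → ℝ) 1 ∧ u = ∑ k, c k • U k}

lemma volume_slab {n : ℕ} (U : Fin n → Vec n) : volume (slab U) = 2 ^ n * adet U := by
  have h : slab U = (@WithLp.ofLp 2 (Fin n → ℝ)) ⁻¹'
      (Matrix.toLin' (Matrix.of (fun i j => U i j)).transpose '' Set.Icc (-1 : Fin n → ℝ) 1) := by
    ext u
    simp only [slab, Set.mem_ofPred_eq, Set.mem_preimage, Set.mem_image]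
    refine exists_congr fun c => and_congr_right fun _ => ?_
    constructor
    · rintro rfl
      ext j
      simp [Matrix.mulVec, dotProduct, mul_comm]
    · intro hh
      ext j
      rw [← hh]
      simp [Matrix.mulVec, dotProduct, mul_comm]
  rw [h, (PiLp.volume_preserving_ofLp (Fin n)).measure_preimage_emb
    (MeasurableEquiv.toLp 2 (Fin n → ℝ)).symm.measurableEmbedding,
    Measure.addHaar_image_linearMap, LinearMap.det_toLin', Matrix.det_transpose, Real.volume_Icc_pi]
  rw [mul_comm, adet]
  congr 1
  simp
  norm_num

lemma measurableSet_slab {n : ℕ} :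
    MeasurableSet {p : Vec n × (Fin n → Vec n) | p.1 ∈ slab p.2} := by
  apply IsClosed.measurableSet
  let K := Set.Icc (-1 : Fin n → ℝ) 1
  have : CompactSpace K := isCompact_iff_compactSpace.mp isCompact_Icc
  have h1 : IsClosed {q : K × (Vec n × (Fin n → Vec n)) |
      q.2.1 = ∑ k, (q.1 : Fin n → ℝ) k • q.2.2 k} := by
    apply isClosed_eq
    · fun_prop
    · refine continuous_finsetSum _ fun k _ => ?_
      have a1 : Continuous fun y : K × (Vec n × (Fin n → Vec n)) => (y.1 : Fin n → ℝ) k :=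
        (continuous_apply k).comp (continuous_subtype_val.comp continuous_fst)
      have a2 : Continuous fun y : K × (Vec n × (Fin n → Vec n)) => y.2.2 k :=
        (continuous_apply k).comp (continuous_snd.comp continuous_snd)
      exact a1.smul a2
  have h2 := isClosedMap_snd_of_compactSpace _ h1
  convert h2 using 1
  ext p
  simp only [slab, Set.mem_ofPred_eq, Set.mem_image, Prod.exists, Subtype.exists]
  constructor
  · rintro ⟨c, hc, h⟩
    exact ⟨c, hc, p.1, p.2, h, rfl⟩
  · rintro ⟨c, hc, a, b, h, rfl⟩
    exact ⟨c, hc, h⟩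

lemma exists_mem_slab {n : ℕ} (x : Fin (n + 1) → Vec n) :
    ∃ i, x i ∈ slab (fun k => x (i.succAbove k)) := by
  have hl : ¬ LinearIndependent ℝ x := by
    intro h
    have := h.fintype_card_le_finrank
    simp at this
  obtain ⟨g, hg, j, hj⟩ := Fintype.not_linearIndependent_iff.mp hl
  obtain ⟨i, hi⟩ := Finite.exists_max (fun i => |g i|)
  have hi0 : 0 < |g i| := lt_of_lt_of_le (abs_pos.mpr hj) (hi j)
  have hi1 : g i ≠ 0 := abs_pos.mp hi0
  refine ⟨i, fun k => -(g (i.succAbove k) / g i), ?_, ?_⟩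
  · have hb : ∀ k, |g (i.succAbove k) / g i| ≤ 1 := fun k => by
      rw [abs_div]; exact (div_le_one hi0).mpr (hi _)
    constructor
    · intro k
      have := abs_le.mp (hb k)
      simp only [Pi.neg_apply, Pi.one_apply]; linarith
    · intro k
      have := abs_le.mp (hb k)
      simp only [Pi.one_apply]; linarith
  · rw [Fin.sum_univ_succAbove _ i] at hg
    have h2 : g i • x i = - ∑ k, g (i.succAbove k) • x (i.succAbove k) := eq_neg_of_add_eq_zero_left hg
    have h3 : x i = (g i)⁻¹ • (g i • x i) := by rw [smul_smul, inv_mul_cancel₀ hi1, one_smul]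
    rw [h3, h2, smul_neg, Finset.smul_sum, ← Finset.sum_neg_distrib]
    refine Finset.sum_congr rfl fun k _ => ?_
    rw [smul_smul, neg_smul]
    congr 2
    field_simp

lemma det_bound {n : ℕ} (F : Set (Vec n)) (hF : MeasurableSet F) :
    volume F ^ (n + 1) ≤ (n + 1) * (2 ^ n * ∫⁻ U in {U : Fin n → Vec n | ∀ i, U i ∈ F}, adet U) := by
  set X : Set (Fin (n + 1) → Vec n) := Set.univ.pi (fun _ => F) with hX
  have hXv : volume X = volume F ^ (n + 1) := by
    rw [hX, volume_pi_pi]; simp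
  set Q : Set (Fin n → Vec n) := {U | ∀ i, U i ∈ F} with hQ
  have hQm : MeasurableSet Q := by
    rw [hQ, Set.ofPred_forall]
    exact MeasurableSet.iInter fun i => measurable_pi_apply i hF
  set T : Set (Vec n × (Fin n → Vec n)) :=
    {p | p.1 ∈ slab p.2} ∩ (Prod.snd ⁻¹' Q) with hT
  have hTm : MeasurableSet T := measurableSet_slab.inter (measurable_snd hQm)
  have hTv : volume T = 2 ^ n * ∫⁻ U in Q, adet U := by
    rw [Measure.volume_eq_prod, Measure.prod_apply_symm hTm,
      ← lintegral_const_mul _ measurable_adet, ← lintegral_indicator hQm]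
    refine lintegral_congr fun U => ?_
    by_cases hU : U ∈ Q
    · rw [Set.indicator_of_mem hU, ← volume_slab]
      congr 1
      ext u
      simp [hT, hU]
    · rw [Set.indicator_of_notMem hU]
      have : (fun x => (x, U)) ⁻¹' T = ∅ := by
        ext u
        simp [hT, hU]
      rw [this, measure_empty]
  have hsub : X ⊆ ⋃ i : Fin (n + 1),
      (MeasurableEquiv.piFinSuccAbove (fun _ => Vec n) i) ⁻¹' T := by
    intro x hx
    obtain ⟨i, hi⟩ := exists_mem_slab x
    refine Set.mem_iUnion.mpr ⟨i, hi, ?_⟩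
    intro k
    exact hx (i.succAbove k) (Set.mem_univ _)
  calc volume F ^ (n + 1) = volume X := hXv.symm
    _ ≤ ∑ i : Fin (n + 1), volume ((MeasurableEquiv.piFinSuccAbove (fun _ => Vec n) i) ⁻¹' T) :=
        (measure_mono hsub).trans (measure_iUnion_fintype_le _ _)
    _ = ∑ i : Fin (n + 1), volume T := by
        refine Finset.sum_congr rfl fun i _ => ?_
        exact (volume_preserving_piFinSuccAbove (fun _ => Vec n) i).measure_preimage
          hTm.nullMeasurableSet
    _ = _ := by rw [hTv]; simp

lemma pow_volume {n : ℕ} (E : Set (Vec n × ℝ)) (hE : MeasurableSet E) :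
    volume E ^ n = ∫⁻ U : Fin n → Vec n, volume {y : Fin n → ℝ | ∀ i, (U i, y i) ∈ E} := by
  set S : Set ((Fin n → Vec n) × (Fin n → ℝ)) := {p | ∀ i, (p.1 i, p.2 i) ∈ E} with hS
  have hSm : MeasurableSet S := by
    rw [hS, Set.ofPred_forall]
    refine MeasurableSet.iInter fun i => ?_
    have : Measurable (fun p : (Fin n → Vec n) × (Fin n → ℝ) => (p.1 i, p.2 i)) := by fun_prop
    exact this hE
  have h1 : volume (Set.univ.pi (fun _ : Fin n => E)) = volume E ^ n := by
    rw [volume_pi_pi]; simp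
  have h2 : (MeasurableEquiv.arrowProdEquivProdArrow (Vec n) ℝ (Fin n)) ⁻¹' S
      = Set.univ.pi (fun _ : Fin n => E) := by
    ext x
    simp [hS, MeasurableEquiv.arrowProdEquivProdArrow, Equiv.arrowProdEquivProdArrow]
  rw [← h1, ← h2, (volume_measurePreserving_arrowProdEquivProdArrow (Vec n) ℝ (Fin n)).measure_preimage
    hSm.nullMeasurableSet, Measure.volume_eq_prod, Measure.prod_apply hSm]
  rfl

lemma slice_bound {n : ℕ} (U : Fin n → Vec n) (G : Set (Vec n)) :
    volume ((fun s : Vec n => fun i => ⟪s, U i⟫) '' G) = adet U * volume G := by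
  have h : (fun s : Vec n => fun i => ⟪s, U i⟫) '' G =
      Matrix.toLin' (Matrix.of (fun i j => U i j)) '' ((@WithLp.toLp 2 (Fin n → ℝ)) ⁻¹' G) := by
    ext y
    simp only [Set.mem_image, Set.mem_preimage]
    constructor
    · rintro ⟨s, hs, rfl⟩
      refine ⟨s.ofLp, hs, ?_⟩
      ext i
      simp [Matrix.mulVec, dotProduct, PiLp.inner_apply, mul_comm]
    · rintro ⟨s, hs, rfl⟩
      refine ⟨_, hs, ?_⟩
      ext i
      simp [Matrix.mulVec, dotProduct, PiLp.inner_apply, mul_comm]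
  rw [h, Measure.addHaar_image_linearMap, LinearMap.det_toLin',
    (PiLp.volume_preserving_toLp (Fin n)).measure_preimage_emb
    (MeasurableEquiv.toLp 2 (Fin n → ℝ)).measurableEmbedding, adet]

lemma main_bound {n : ℕ} (W : Set (Vec n × Vec n)) (hW : MeasurableSet W) :
    ∫⁻ s : Vec n, volume {u | (s, u) ∈ W} ^ (n + 1) ≤ (n + 1) * (2 ^ n *
      volume ((fun p : Vec n × Vec n => (p.2, ⟪p.1, p.2⟫)) '' W) ^ n) := by
  set E := toMeasurable volume ((fun p : Vec n × Vec n => (p.2, ⟪p.1, p.2⟫)) '' W) with hE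
  have hEs := subset_toMeasurable volume ((fun p : Vec n × Vec n => (p.2, ⟪p.1, p.2⟫)) '' W)
  rw [← measure_toMeasurable ((fun p : Vec n × Vec n => (p.2, ⟪p.1, p.2⟫)) '' W), ← hE,
    pow_volume E (measurableSet_toMeasurable _ _)]
  set S : Set (Vec n × (Fin n → Vec n)) := {p | ∀ i, (p.1, p.2 i) ∈ W} with hS
  have hSm : MeasurableSet S := by
    rw [hS, Set.ofPred_forall]
    refine MeasurableSet.iInter fun i => ?_
    have : Measurable (fun p : Vec n × (Fin n → Vec n) => (p.1, p.2 i)) := by fun_prop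
    exact this hW
  let f : Vec n → (Fin n → Vec n) → ℝ≥0∞ := fun s U => S.indicator (fun p => adet p.2) (s, U)
  have hf : Measurable (Function.uncurry f) :=
    (measurable_adet.comp measurable_snd).indicator hSm
  have hslice : ∀ s, MeasurableSet {u | (s, u) ∈ W} := fun s => measurable_prodMk_left hW
  calc ∫⁻ s : Vec n, volume {u | (s, u) ∈ W} ^ (n + 1)
      ≤ ∫⁻ s : Vec n, (n + 1) * (2 ^ n * ∫⁻ U, f s U) := by
        refine lintegral_mono fun s => (det_bound _ (hslice s)).trans_eq ?_
        rw [← lintegral_indicator]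
        · rfl
        · rw [Set.ofPred_forall]
          exact MeasurableSet.iInter fun i => measurable_pi_apply i (hslice s)
    _ = (n + 1) * (2 ^ n * ∫⁻ s, ∫⁻ U, f s U) := by
        rw [lintegral_const_mul, lintegral_const_mul]
        · exact hf.lintegral_prod_right'
        · exact (hf.lintegral_prod_right').const_mul _
    _ = (n + 1) * (2 ^ n * ∫⁻ U, ∫⁻ s, f s U) := by
        rw [lintegral_lintegral_swap hf.aemeasurable]
    _ ≤ _ := by
        gcongr with U
        have hG : MeasurableSet {s | (s, U) ∈ S} := measurable_prodMk_right hSm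
        have : ∫⁻ s, f s U = adet U * volume {s | (s, U) ∈ S} := by
          rw [← setLIntegral_const, ← lintegral_indicator hG]
          rfl
        rw [this, ← slice_bound]
        refine measure_mono ?_
        rintro _ ⟨s, hs, rfl⟩ i
        exact hEs ⟨(s, U i), hs i, rfl⟩

/-- inflation bound: if `|Ω₁| ≥ α` and every slice of
`Ω ⊆ Ω₁ × ℝ^{d-1}` over `s ∈ Ω₁` has measure at least `α*`, then with
`Ω̃ = {(s,u) : (s, s+u) ∈ Ω}` and `Φ(s,u) = (u, s·u)` one has
`|Φ(Ω̃)| ≥ c α*^{d/(d-1)} α^{1/(d-1)}`. -/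
theorem stmt16 (d : ℕ) (hd : 2 ≤ d) :
    ∃ c : ℝ, 0 < c ∧
      ∀ (α αs : ℝ), 0 < α → 0 < αs →
      ∀ (Ω₁ : Set (Vec (d - 1))) (Ω : Set (Vec (d - 1) × Vec (d - 1))),
        MeasurableSet Ω₁ → MeasurableSet Ω →
        ENNReal.ofReal α ≤ volume Ω₁ → Ω ⊆ Ω₁ ×ˢ Set.univ →
        (∀ s ∈ Ω₁, ENNReal.ofReal αs ≤ volume {t | (s, t) ∈ Ω}) →
        ENNReal.ofReal (c * αs ^ ((d : ℝ) / ((d : ℝ) - 1)) *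
            α ^ ((1 : ℝ) / ((d : ℝ) - 1))) ≤
          volume ((fun p : Vec (d - 1) × Vec (d - 1) => (p.2, ⟪p.1, p.2⟫)) ''
            {p : Vec (d - 1) × Vec (d - 1) | (p.1, p.1 + p.2) ∈ Ω}) := by
  have hdn : d = (d - 1) + 1 := by omega
  generalize d - 1 = n at hdn ⊢
  subst hdn
  have hn : 1 ≤ n := by omega
  have hnR : (0 : ℝ) < n := by exact_mod_cast hn
  set b : ℝ := ((n + 1) * 2 ^ n : ℝ) with hb
  have hb0 : 0 < b := by positivity
  refine ⟨(b⁻¹) ^ ((1 : ℝ) / n), by positivity, ?_⟩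
  intro α αs hα hαs Ω₁ Ω hΩ₁ hΩ hα1 hsub hsl
  set W : Set (Vec n × Vec n) := {p | (p.1, p.1 + p.2) ∈ Ω} with hW
  have hWm : MeasurableSet W := by
    have : Measurable (fun p : Vec n × Vec n => (p.1, p.1 + p.2)) := by fun_prop
    exact this hΩ
  have key := main_bound W hWm
  set V := volume ((fun p : Vec n × Vec n => (p.2, ⟪p.1, p.2⟫)) '' W) with hV
  have hlow : ENNReal.ofReal (αs ^ (n + 1) * α) ≤ ∫⁻ s : Vec n, volume {u | (s, u) ∈ W} ^ (n + 1) := by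
    calc ENNReal.ofReal (αs ^ (n + 1) * α) = ENNReal.ofReal αs ^ (n + 1) * ENNReal.ofReal α := by
          rw [ENNReal.ofReal_mul (by positivity), ENNReal.ofReal_pow hαs.le]
      _ ≤ ENNReal.ofReal αs ^ (n + 1) * volume Ω₁ := by gcongr
      _ = ∫⁻ s in Ω₁, ENNReal.ofReal αs ^ (n + 1) := by rw [setLIntegral_const]
      _ ≤ ∫⁻ s in Ω₁, volume {u | (s, u) ∈ W} ^ (n + 1) := by
          refine setLIntegral_mono' hΩ₁ fun s hs => ?_
          gcongr
          refine (hsl s hs).trans_eq ?_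
          exact (measure_preimage_add volume s {t | (s, t) ∈ Ω}).symm
      _ ≤ _ := setLIntegral_le_lintegral _ _
  have h1 := hlow.trans key
  by_cases hVtop : V = ⊤
  · rw [hVtop]; exact le_top
  set v := V.toReal with hv
  have hVv : V = ENNReal.ofReal v := (ENNReal.ofReal_toReal hVtop).symm
  have hv0 : 0 ≤ v := ENNReal.toReal_nonneg
  have h2 : αs ^ (n + 1) * α ≤ b * v ^ n := by
    have : (n + 1 : ℝ≥0∞) * (2 ^ n * V ^ n) = ENNReal.ofReal (b * v ^ n) := by
      rw [hb, hVv, ENNReal.ofReal_mul (by positivity), ENNReal.ofReal_mul (by positivity),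
        ENNReal.ofReal_pow hv0, ENNReal.ofReal_pow (by norm_num), mul_assoc]
      congr 1
      · rw [ENNReal.ofReal_add (by positivity) (by norm_num)]; simp
      · simp
    rw [this] at h1
    exact (ENNReal.ofReal_le_ofReal_iff (by positivity)).mp h1
  rw [hVv]
  apply ENNReal.ofReal_le_ofReal
  have e1 : ((n + 1 : ℕ) : ℝ) - 1 = n := by push_cast; ring
  rw [e1]
  have e2 : (b⁻¹) ^ ((1 : ℝ) / n) * αs ^ (((n + 1 : ℕ) : ℝ) / n) * α ^ ((1 : ℝ) / n)
      = (b⁻¹ * (αs ^ (n + 1) * α)) ^ ((1 : ℝ) / n) := by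
    rw [Real.mul_rpow (by positivity) (by positivity), Real.mul_rpow (by positivity) hα.le,
      ← Real.rpow_natCast αs (n + 1), ← Real.rpow_mul hαs.le, mul_assoc]
    congr 3
    ring
  rw [e2]
  calc (b⁻¹ * (αs ^ (n + 1) * α)) ^ ((1 : ℝ) / n) ≤ (v ^ n) ^ ((1 : ℝ) / n) := by
        apply Real.rpow_le_rpow (by positivity) _ (by positivity)
        rw [inv_mul_le_iff₀ hb0]; exact h2
    _ = v := by
        rw [one_div]; exact Real.pow_rpow_inv_natCast hv0 (by omega)
end
end

section
/- There exists a constant C < ∞, depending only on d, with the following property. Let E, E', G ⊆ ℝ^d be Lebesgue measurable sets of finite measure with |E| > 0, and let β' > 0. If T(χ_{E'})(x) ≥ β' for every x ∈ G, then ( 𝒯(E, G) / |E| )^{1/(d−1)} · (β')^{d/(d−1)} ≤ C |E'|. -/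
open MeasureTheory ENNReal

noncomputable section

/-- Almost every square matrix is invertible. -/
lemma ae_det_ne_zero (n : ℕ) :
    volume {v : Fin n → Fin n → ℝ | (Matrix.of v).det = 0} = 0 := by
  set Z := {v : Fin n → Fin n → ℝ | (Matrix.of v).det = 0} with hZ
  have hcont : Continuous fun v : Fin n → Fin n → ℝ => (Matrix.of v).det := by
    apply Continuous.matrix_det
    exact continuous_id
  have hZm : MeasurableSet Z := (isClosed_singleton.preimage hcont).measurableSet
  let I : Fin n → Fin n → ℝ := fun i j => (1 : Matrix (Fin n) (Fin n) ℝ) i j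
  have h1 : ∫⁻ v : Fin n → Fin n → ℝ, ∫⁻ r : ℝ, Z.indicator 1 (v + r • I) = 0 := by
    rw [lintegral_eq_zero_iff']
    · refine Filter.Eventually.of_forall fun v => ?_
      have hfin : Set.Finite {r : ℝ | v + r • I ∈ Z} := by
        have hne : (-(Matrix.of v)).charpoly ≠ 0 := (Matrix.charpoly_monic _).ne_zero
        refine ((-(Matrix.of v)).charpoly.rootSet_finite ℝ).subset ?_
        intro r hr
        rw [Polynomial.mem_rootSet]
        refine ⟨hne, ?_⟩
        rw [Polynomial.coe_aeval_eq_eval, Matrix.eval_charpoly]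
        have : (Matrix.of (v + r • I)).det = 0 := hr
        rw [← this]
        congr 1
        ext i j
        simp [I, Matrix.one_apply, Matrix.diagonal_apply]
        ring
      have : ∀ r : ℝ, Z.indicator (1 : (Fin n → Fin n → ℝ) → ℝ≥0∞) (v + r • I) = ({r : ℝ | v + r • I ∈ Z}).indicator 1 r := by
        intro r
        simp [Set.indicator]
      simp only [this]
      rw [lintegral_indicator_one hfin.measurableSet]
      exact hfin.measure_zero _
    · apply Measurable.aemeasurable
      apply Measurable.lintegral_prod_right
      apply (measurable_one.indicator hZm).comp
      fun_prop
  rw [lintegral_lintegral_swap] at h1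
  · have h2 : ∀ r : ℝ, ∫⁻ v : Fin n → Fin n → ℝ, Z.indicator (1 : (Fin n → Fin n → ℝ) → ℝ≥0∞) (v + r • I) = volume Z := by
      intro r
      rw [lintegral_add_right_eq_self (fun v => Z.indicator (1 : (Fin n → Fin n → ℝ) → ℝ≥0∞) v) (r • I),
        lintegral_indicator_one hZm]
    simp only [h2] at h1
    simpa using h1
  · apply Measurable.aemeasurable
    apply (measurable_one.indicator hZm).comp
    fun_prop

/-- The volume of the parallelepiped spanned by `v`. -/
lemma vol_parallelepiped (n : ℕ) (v : Fin n → Fin n → ℝ) (hv : (Matrix.of v).det ≠ 0) :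
    volume {u : Fin n → ℝ | ∀ i, |(Matrix.of (Function.update v i u)).det| ≤ |(Matrix.of v).det|}
      = 2 ^ n * ENNReal.ofReal |(Matrix.of v).det| := by
  set A := Matrix.of v with hA
  let L : (Fin n → ℝ) →ₗ[ℝ] (Fin n → ℝ) := Matrix.cramer A.transpose
  have hL : LinearMap.det L = A.det ^ (n - 1) := by
    have : L = Matrix.toLin' (Matrix.adjugate A.transpose) := by
      apply LinearMap.ext
      intro b
      rw [Matrix.toLin'_apply]
      exact Matrix.cramer_eq_adjugate_mulVec _ _
    rw [this, LinearMap.det_toLin', Matrix.det_adjugate, Matrix.det_transpose]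
    simp
  have hL0 : LinearMap.det L ≠ 0 := by rw [hL]; exact pow_ne_zero _ hv
  have hset : {u : Fin n → ℝ | ∀ i, |(Matrix.of (Function.update v i u)).det| ≤ |A.det|}
      = L ⁻¹' (Set.univ.pi fun _ => Set.Icc (-|A.det|) |A.det|) := by
    ext u
    simp only [Set.mem_ofPred_eq, Set.mem_preimage, Set.mem_pi, Set.mem_univ, true_imp_iff,
      Set.mem_Icc, ← abs_le]
    refine forall_congr' fun i => ?_
    have : L u i = (Matrix.of (Function.update v i u)).det := by
      change Matrix.cramer A.transpose u i = _
      rw [Matrix.cramer_transpose_apply]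
      rfl
    rw [this]
  rw [hset, Measure.addHaar_preimage_linearMap _ hL0, hL, volume_pi_pi]
  simp only [Real.volume_Icc, Finset.prod_const, Finset.card_univ, Fintype.card_fin]
  have hp : 0 < |A.det| := abs_pos.2 hv
  rw [← ENNReal.ofReal_pow (by linarith), ← ENNReal.ofReal_mul (abs_nonneg _),
    show (2 : ℝ≥0∞) = ENNReal.ofReal 2 by simp, ← ENNReal.ofReal_pow (by norm_num),
    ← ENNReal.ofReal_mul (by positivity)]
  congr 1
  rcases Nat.eq_zero_or_pos n with rfl | hn
  · simp [A]
  · obtain ⟨m, rfl⟩ : ∃ m, n = m + 1 := ⟨n - 1, by omega⟩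
    rw [abs_inv, abs_pow]
    simp only [Nat.add_sub_cancel]
    rw [show |A.det| - -|A.det| = 2 * |A.det| by ring, mul_pow, pow_succ |A.det|]
    field_simp

lemma measurable_det_of (n : ℕ) : Measurable fun v : Fin n → Fin n → ℝ => (Matrix.of v).det := by
  apply Continuous.measurable
  apply Continuous.matrix_det
  exact continuous_id

/-- Key lower bound: `|B|^{n+1} ≲ ∫_{B^n} |det|`. -/
lemma det_lower_s18 (n : ℕ) (B : Set (Fin n → ℝ)) (hB : MeasurableSet B) :
    volume B ^ (n + 1) ≤ ((n + 1).factorial * 2 ^ n : ℝ≥0∞) *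
      ∫⁻ v in (Set.univ.pi fun _ : Fin n => B), ENNReal.ofReal |(Matrix.of v).det| := by
  let M : Set (Fin (n + 1) → Fin n → ℝ) := {w | (∀ k, w k ∈ B) ∧
    ∀ i, |(Matrix.of (Function.update (fun k : Fin n => w k.succ) i (w 0))).det| ≤
      |(Matrix.of (fun k : Fin n => w k.succ)).det|}
  have hMm : MeasurableSet M := by
    apply MeasurableSet.inter
    · change MeasurableSet {w : Fin (n + 1) → Fin n → ℝ | ∀ i, w i ∈ B}
      simp only [Set.ofPred_forall]
      exact MeasurableSet.iInter fun k => (measurable_pi_apply k) hB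
    · change MeasurableSet {w : Fin (n + 1) → Fin n → ℝ | ∀ i, _}
      simp only [Set.ofPred_forall]
      refine MeasurableSet.iInter fun i => measurableSet_le ?_ ?_
      · apply Measurable.abs
        apply (measurable_det_of n).comp
        rw [measurable_pi_iff]
        intro k
        by_cases hk : k = i
        · subst hk; simpa using measurable_pi_apply _
        · simpa [hk] using measurable_pi_apply _
      · apply Measurable.abs
        apply (measurable_det_of n).comp
        fun_prop
  have hM : volume M ≤ 2 ^ n *
      ∫⁻ v in (Set.univ.pi fun _ : Fin n => B), ENNReal.ofReal |(Matrix.of v).det| := by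
    let e := MeasurableEquiv.piFinSuccAbove (fun _ : Fin (n + 1) => (Fin n → ℝ)) 0
    have he := volume_preserving_piFinSuccAbove (fun _ : Fin (n + 1) => (Fin n → ℝ)) 0
    have hes := he.symm e
    rw [← hes.measure_preimage hMm.nullMeasurableSet, Measure.volume_eq_prod,
      Measure.prod_apply_symm (e.symm.measurable hMm), ← lintegral_const_mul' _ _ (by simp),
      ← lintegral_indicator (MeasurableSet.univ_pi fun _ => hB)]
    refine lintegral_mono_ae ?_
    have hae : ∀ᵐ v : Fin n → Fin n → ℝ, (Matrix.of v).det ≠ 0 := by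
      rw [ae_iff]; simpa using ae_det_ne_zero n
    filter_upwards [hae] with v hv
    by_cases hvB : v ∈ Set.univ.pi fun _ : Fin n => B
    · rw [Set.indicator_of_mem hvB, ← vol_parallelepiped n v hv]
      apply measure_mono
      intro u hu
      have hu2 := hu.2
      have h0 : e.symm (u, v) 0 = u := by simp [e, MeasurableEquiv.piFinSuccAbove]
      have hs : (fun k : Fin n => e.symm (u, v) k.succ) = v := by
        ext k; simp [e, MeasurableEquiv.piFinSuccAbove]
      rw [h0, hs] at hu2
      exact hu2
    · rw [Set.indicator_of_notMem hvB]
      have : (fun u => (u, v)) ⁻¹' (e.symm ⁻¹' M) = ∅ := by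
        ext u
        simp only [Set.mem_preimage, Set.mem_empty_iff_false, iff_false]
        intro hu
        apply hvB
        intro k _
        have := hu.1 k.succ
        simpa [e, MeasurableEquiv.piFinSuccAbove] using this
      rw [this]; simp
  have hcover : (Set.univ.pi fun _ : Fin (n + 1) => B) ⊆
      ⋃ σ : Equiv.Perm (Fin (n + 1)), (MeasurableEquiv.piCongrLeft (fun _ => Fin n → ℝ) σ) ⁻¹' M := by
    intro w hw
    obtain ⟨σ, hσ⟩ := Finite.exists_max
      (fun σ : Equiv.Perm (Fin (n + 1)) => |(Matrix.of (fun k : Fin n => w (σ k.succ))).det|)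
    rw [Set.mem_iUnion]
    refine ⟨σ⁻¹, ?_⟩
    have hw' : MeasurableEquiv.piCongrLeft (fun _ => Fin n → ℝ) σ⁻¹ w = fun k => w (σ k) := by
      ext k
      rw [MeasurableEquiv.coe_piCongrLeft]
      have := Equiv.piCongrLeft_apply_apply (fun _ => Fin n → ℝ) σ⁻¹ w (σ k)
      have h3 : σ⁻¹ (σ k) = k := σ.symm_apply_apply k
      rw [h3] at this
      rw [this]
    rw [Set.mem_preimage, hw']
    refine ⟨fun k => hw _ (Set.mem_univ _), fun i => ?_⟩
    have := hσ (σ * Equiv.swap 0 i.succ)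
    have hfun : Function.update (fun k : Fin n => w (σ k.succ)) i (w (σ 0)) =
        fun k : Fin n => w ((σ * Equiv.swap 0 i.succ) k.succ) := ?_
    · rw [hfun]; exact this
    funext k
    by_cases hk : k = i
    · subst hk; simp
    · rw [Function.update_of_ne hk, Equiv.Perm.mul_apply, Equiv.swap_apply_of_ne_of_ne]
      · exact Fin.succ_ne_zero k
      · simpa using hk
  calc volume B ^ (n + 1) = volume (Set.univ.pi fun _ : Fin (n + 1) => B) := by
        rw [volume_pi_pi]; simp
    _ ≤ ∑ σ : Equiv.Perm (Fin (n + 1)),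
        volume ((MeasurableEquiv.piCongrLeft (fun _ => Fin n → ℝ) σ) ⁻¹' M) :=
        (measure_mono hcover).trans (measure_iUnion_fintype_le _ _)
    _ = ∑ σ : Equiv.Perm (Fin (n + 1)), volume M := by
        refine Finset.sum_congr rfl fun σ _ => ?_
        exact (volume_measurePreserving_piCongrLeft (fun _ => Fin n → ℝ) σ).measure_preimage
          hMm.nullMeasurableSet
    _ = (n + 1).factorial * volume M := by
        simp [Finset.card_univ, Fintype.card_perm]
    _ ≤ _ := by
        rw [mul_assoc]
        gcongr

/-- the phase map -/
def phiMap (n : ℕ) (y : Fin n → Fin n → ℝ) (t : Fin n → ℝ) : Fin n → ℝ :=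
  fun i => ∑ j, (t j ^ 2 + (y i j - t j) ^ 2)

/-- the matrix `2t - y_i` -/
def uMat (n : ℕ) (y : Fin n → Fin n → ℝ) (t : Fin n → ℝ) : Matrix (Fin n) (Fin n) ℝ :=
  Matrix.of fun i j => 2 * t j - y i j

lemma phiMap_deriv (n : ℕ) (y : Fin n → Fin n → ℝ) (t : Fin n → ℝ) :
    HasFDerivAt (phiMap n y)
      (LinearMap.toContinuousLinearMap (Matrix.toLin' ((2 : ℝ) • uMat n y t))) t := by
  rw [hasFDerivAt_pi']
  intro i
  have h : ∀ j ∈ (Finset.univ : Finset (Fin n)),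
      HasFDerivAt (fun t : Fin n → ℝ => t j ^ 2 + (y i j - t j) ^ 2)
      ((2 * (2 * t j - y i j)) • (ContinuousLinearMap.proj (R := ℝ) (φ := fun _ : Fin n => ℝ) j)) t := by
    intro j _
    have h1 : HasFDerivAt (fun t : Fin n → ℝ => t j)
      (ContinuousLinearMap.proj (R := ℝ) (φ := fun _ : Fin n => ℝ) j) t := hasFDerivAt_apply j t
    have h2 : HasDerivAt (fun x : ℝ => x ^ 2 + (y i j - x) ^ 2) (2 * (2 * t j - y i j)) (t j) := by
      have := ((hasDerivAt_id (t j)).pow 2).add (((hasDerivAt_id (t j)).const_sub (y i j)).pow 2)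
      refine this.congr_deriv ?_
      simp only [id]
      push_cast
      ring
    exact h2.comp_hasFDerivAt t h1
  have := HasFDerivAt.fun_sum h
  refine this.congr_fderiv ?_
  ext1 s
  simp [uMat, Matrix.mulVec, dotProduct]

lemma phiMap_flip (n : ℕ) (y : Fin n → Fin n → ℝ) (t t' : Fin n → ℝ) (hne : t ≠ t')
    (h : phiMap n y t = phiMap n y t') : (uMat n y t').det = - (uMat n y t).det := by
  set w := t - t' with hw
  have hw0 : w ≠ 0 := sub_ne_zero.2 hne
  have hq : w ⬝ᵥ w ≠ 0 := by simpa [dotProduct_self_eq_zero] using hw0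
  have hU : ∀ i, (Matrix.mulVec (uMat n y t) w) i = w ⬝ᵥ w := by
    intro i
    have hi := congrFun h i
    simp only [phiMap] at hi
    have : ∑ j, ((uMat n y t) i j * w j - w j * w j) =
      2⁻¹ * (∑ j, (t j ^ 2 + (y i j - t j) ^ 2) - ∑ j, (t' j ^ 2 + (y i j - t' j) ^ 2)) := by
      rw [← Finset.sum_sub_distrib, Finset.mul_sum]
      refine Finset.sum_congr rfl fun j _ => ?_
      simp [uMat, hw]
      ring
    rw [hi, sub_self, mul_zero, Finset.sum_sub_distrib, sub_eq_zero] at this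
    exact this
  have hmul : uMat n y t' = uMat n y t *
      (1 + Matrix.vecMulVec ((-2 * (w ⬝ᵥ w)⁻¹) • w) w) := by
    rw [Matrix.mul_add, Matrix.mul_one, Matrix.mul_vecMulVec, Matrix.mulVec_smul]
    ext i j
    simp only [Matrix.add_apply, Matrix.vecMulVec_apply, Pi.smul_apply, hU i, smul_eq_mul]
    rw [mul_assoc (-2 : ℝ), inv_mul_cancel₀ hq]
    simp [uMat, hw]
    ring
  rw [hmul, Matrix.det_mul, Matrix.vecMulVec_eq Unit,
    Matrix.det_one_add_replicateCol_mul_replicateRow, dotProduct_smul]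
  rw [smul_eq_mul, mul_assoc, inv_mul_cancel₀ hq]
  ring

lemma continuous_uMat_det (n : ℕ) (y : Fin n → Fin n → ℝ) :
    Continuous fun t => (uMat n y t).det := by
  apply Continuous.matrix_det
  unfold uMat
  apply continuous_matrix
  intro i j
  simp only [Matrix.of_apply]
  fun_prop

lemma cov_part (n : ℕ) (y : Fin n → Fin n → ℝ) (F : Set (Fin n → ℝ)) (hF : MeasurableSet F)
    (ε : ℝ) :
    2 ^ n * ∫⁻ t in {t | 0 < ε * (uMat n y t).det},
      ENNReal.ofReal |(uMat n y t).det| * F.indicator 1 (phiMap n y t) ≤ volume F := by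
  have hm : MeasurableSet {t | 0 < ε * (uMat n y t).det} :=
    (isOpen_lt continuous_const (continuous_const.mul (continuous_uMat_det n y))).measurableSet
  have hinj : Set.InjOn (phiMap n y) {t | 0 < ε * (uMat n y t).det} := by
    intro t ht t' ht' heq
    by_contra hne
    have := phiMap_flip n y t t' hne heq
    simp only [Set.mem_ofPred_eq, this] at ht ht'
    linarith
  have key := lintegral_image_eq_lintegral_abs_det_fderiv_mul volume hm
    (fun t _ => (phiMap_deriv n y t).hasFDerivWithinAt) hinj (F.indicator 1)
  have hle : ∫⁻ x in phiMap n y '' {t | 0 < ε * (uMat n y t).det}, F.indicator 1 x ≤ volume F := by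
    rw [← lintegral_indicator_one hF]
    exact setLIntegral_le_lintegral _ _
  rw [key] at hle
  rw [← lintegral_const_mul' _ _ (by simp)]
  refine le_of_eq_of_le ?_ hle
  refine lintegral_congr fun t => ?_
  rw [← mul_assoc]
  congr 1
  change _ = ENNReal.ofReal |LinearMap.det (Matrix.toLin' ((2 : ℝ) • uMat n y t))|
  rw [LinearMap.det_toLin', Matrix.det_smul, abs_mul, ENNReal.ofReal_mul (abs_nonneg _)]
  congr 1
  simp [ENNReal.ofReal_pow]

lemma cov (n : ℕ) (y : Fin n → Fin n → ℝ) (F : Set (Fin n → ℝ)) (hF : MeasurableSet F) :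
    2 ^ n * ∫⁻ t, ENNReal.ofReal |(uMat n y t).det| * F.indicator 1 (phiMap n y t)
      ≤ 2 * volume F := by
  have h1 := cov_part n y F hF 1
  have h2 := cov_part n y F hF (-1)
  have hm : ∀ ε : ℝ, MeasurableSet {t | 0 < ε * (uMat n y t).det} := fun ε =>
    (isOpen_lt continuous_const (continuous_const.mul (continuous_uMat_det n y))).measurableSet
  have : ∫⁻ t, ENNReal.ofReal |(uMat n y t).det| * F.indicator 1 (phiMap n y t) ≤
      (∫⁻ t in {t | 0 < 1 * (uMat n y t).det},
        ENNReal.ofReal |(uMat n y t).det| * F.indicator 1 (phiMap n y t)) +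
      ∫⁻ t in {t | 0 < -1 * (uMat n y t).det},
        ENNReal.ofReal |(uMat n y t).det| * F.indicator 1 (phiMap n y t) := by
    refine le_trans ?_ (lintegral_union_le _ _ _)
    rw [← lintegral_indicator ((hm _).union (hm _))]
    refine lintegral_mono fun t => ?_
    by_cases ht : t ∈ {t | 0 < 1 * (uMat n y t).det} ∪ {t | 0 < -1 * (uMat n y t).det}
    · rw [Set.indicator_of_mem ht]
    · have h0 : (uMat n y t).det = 0 := by
        simp only [Set.mem_union, Set.mem_ofPred_eq, not_or] at ht
        linarith [ht.1, ht.2]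
      simp [h0]
  calc _ ≤ _ := mul_le_mul_right this _
    _ ≤ _ := by
      rw [mul_add, two_mul]
      exact add_le_add h1 h2

lemma core (n : ℕ) (S : Set ((Fin n → ℝ) × ℝ)) (hS : MeasurableSet S) (A : Set (Fin n → ℝ))
    (hA : MeasurableSet A) (b : ℝ≥0∞)
    (h : ∀ t ∈ A, b ≤ volume {y : Fin n → ℝ | (y, ∑ j, (t j ^ 2 + (y j - t j) ^ 2)) ∈ S}) :
    volume A * b ^ (n + 1) ≤ (2 * (n + 1).factorial : ℝ≥0∞) * volume S ^ n := by
  let F : (Fin n → Fin n → ℝ) → Set (Fin n → ℝ) := fun y => {τ | ∀ i, (y i, τ i) ∈ S}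
  let H : (Fin n → ℝ) → (Fin n → Fin n → ℝ) → ℝ≥0∞ := fun t y =>
    ENNReal.ofReal |(uMat n y t).det| * (F y).indicator 1 (phiMap n y t)
  have hFm : ∀ y, MeasurableSet (F y) := by
    intro y
    simp only [F, Set.ofPred_forall]
    refine MeasurableSet.iInter fun i => ?_
    have : Measurable fun τ : Fin n → ℝ => (y i, τ i) := by fun_prop
    exact this hS
  have hHm : Measurable (Function.uncurry H) := by
    have hm : MeasurableSet {p : (Fin n → ℝ) × (Fin n → Fin n → ℝ) |
        ∀ i, (p.2 i, phiMap n p.2 p.1 i) ∈ S} := by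
      simp only [Set.ofPred_forall]
      refine MeasurableSet.iInter fun i => ?_
      have : Measurable fun p : (Fin n → ℝ) × (Fin n → Fin n → ℝ) =>
        (p.2 i, phiMap n p.2 p.1 i) := by
        unfold phiMap
        fun_prop
      exact this hS
    have heq : Function.uncurry H = fun p => ENNReal.ofReal |(uMat n p.2 p.1).det| *
        ({p : (Fin n → ℝ) × (Fin n → Fin n → ℝ) |
          ∀ i, (p.2 i, phiMap n p.2 p.1 i) ∈ S}).indicator 1 p := by
      ext p
      rfl
    rw [heq]
    refine Measurable.mul ?_ (measurable_one.indicator hm)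
    apply Measurable.ennreal_ofReal
    apply Measurable.abs
    apply Continuous.measurable
    apply Continuous.matrix_det
    unfold uMat
    apply continuous_matrix
    intro i j
    simp only [Matrix.of_apply]
    fun_prop
  have hpt : ∀ t ∈ A, b ^ (n + 1) ≤ ((n + 1).factorial * 2 ^ n : ℝ≥0∞) * ∫⁻ y, H t y := by
    intro t ht
    set Bt := {y : Fin n → ℝ | (y, ∑ j, (t j ^ 2 + (y j - t j) ^ 2)) ∈ S} with hBt
    have hBm : MeasurableSet Bt := by
      have : Measurable fun y : Fin n → ℝ => (y, ∑ j, (t j ^ 2 + (y j - t j) ^ 2)) := by fun_prop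
      exact this hS
    let B : Set (Fin n → ℝ) := (fun u => u + 2 • t) ⁻¹' Bt
    have hBm' : MeasurableSet B := (measurable_add_const _) hBm
    have hvol : volume B = volume Bt := measure_preimage_add_right _ _ _
    refine (pow_le_pow_left' (h t ht) _).trans ?_
    rw [← hvol]
    refine (det_lower_s18 n B hBm').trans (le_of_eq ?_)
    congr 1
    rw [← lintegral_indicator (MeasurableSet.univ_pi fun _ => hBm'),
      ← lintegral_sub_right_eq_self _ (fun _ : Fin n => 2 • t)]
    refine lintegral_congr fun y => ?_
    have hdet : |(Matrix.of (y - fun _ : Fin n => 2 • t)).det| = |(uMat n y t).det| := by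
      have : Matrix.of (y - fun _ : Fin n => 2 • t) = - uMat n y t := by
        ext i j
        simp [uMat]
      rw [this, Matrix.det_neg, abs_mul]
      simp
    have hiff : (y - fun _ : Fin n => 2 • t) ∈ (Set.univ.pi fun _ : Fin n => B) ↔
        phiMap n y t ∈ F y := by
      simp only [Set.mem_pi, Set.mem_univ, true_imp_iff, B, F, Set.mem_preimage, Pi.sub_apply,
        sub_add_cancel, Bt, Set.mem_ofPred_eq, phiMap]
    by_cases hy : phiMap n y t ∈ F y
    · rw [Set.indicator_of_mem (hiff.2 hy), hdet]
      simp [H, hy]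
    · rw [Set.indicator_of_notMem (fun h' => hy (hiff.1 h'))]
      simp [H, hy]
  have hFvol : ∫⁻ y, volume (F y) = volume S ^ n := by
    have hmp := volume_measurePreserving_arrowProdEquivProdArrow (Fin n → ℝ) ℝ (Fin n)
    let e := MeasurableEquiv.arrowProdEquivProdArrow (Fin n → ℝ) ℝ (Fin n)
    have hQm : MeasurableSet {q : (Fin n → Fin n → ℝ) × (Fin n → ℝ) | ∀ i, (q.1 i, q.2 i) ∈ S} := by
      simp only [Set.ofPred_forall]
      refine MeasurableSet.iInter fun i => ?_
      have : Measurable fun q : (Fin n → Fin n → ℝ) × (Fin n → ℝ) => (q.1 i, q.2 i) := by fun_prop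
      exact this hS
    have h1 : volume {q : (Fin n → Fin n → ℝ) × (Fin n → ℝ) | ∀ i, (q.1 i, q.2 i) ∈ S}
        = ∫⁻ y, volume (F y) := by
      rw [Measure.volume_eq_prod, Measure.prod_apply hQm]
      rfl
    rw [← h1, ← hmp.measure_preimage hQm.nullMeasurableSet]
    have h2 : (MeasurableEquiv.arrowProdEquivProdArrow (Fin n → ℝ) ℝ (Fin n)) ⁻¹'
        {q : (Fin n → Fin n → ℝ) × (Fin n → ℝ) | ∀ i, (q.1 i, q.2 i) ∈ S} =
        Set.univ.pi fun _ => S := by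
      ext p
      simp only [Set.mem_preimage, Set.mem_ofPred_eq, Set.mem_pi, Set.mem_univ, true_imp_iff]
      rfl
    rw [h2, volume_pi_pi]
    simp
  calc volume A * b ^ (n + 1) = ∫⁻ t in A, b ^ (n + 1) := by
        rw [setLIntegral_const, mul_comm]
    _ ≤ ∫⁻ t in A, ((n + 1).factorial * 2 ^ n : ℝ≥0∞) * ∫⁻ y, H t y :=
        setLIntegral_mono' hA hpt
    _ ≤ ∫⁻ t, ((n + 1).factorial * 2 ^ n : ℝ≥0∞) * ∫⁻ y, H t y :=
        setLIntegral_le_lintegral _ _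
    _ = (n + 1).factorial * (2 ^ n * ∫⁻ t, ∫⁻ y, H t y) := by
        rw [lintegral_const_mul', mul_assoc]
        exact ENNReal.mul_ne_top (by simp) (by simp)
    _ = (n + 1).factorial * ∫⁻ y, 2 ^ n * ∫⁻ t, H t y := by
        rw [lintegral_lintegral_swap hHm.aemeasurable, ← lintegral_const_mul' _ _ (by simp)]
    _ ≤ (n + 1).factorial * ∫⁻ y, 2 * volume (F y) := by
        exact mul_le_mul_right (lintegral_mono fun y => cov n y (F y) (hFm y)) _
    _ = _ := by
        rw [lintegral_const_mul' _ _ (by simp), hFvol]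
        ring

lemma radonT_indicator (n : ℕ) (S : Set (Pt n)) (hS : MeasurableSet S) (z : Pt n) :
    radonT n (S.indicator 1) z =
      volume {s : Fin n → ℝ | (z.1 - WithLp.toLp 2 s, z.2 - ∑ j, s j ^ 2) ∈ S} := by
  have hm : MeasurableSet {s : Fin n → ℝ | (z.1 - WithLp.toLp 2 s, z.2 - ∑ j, s j ^ 2) ∈ S} := by
    have : Measurable fun s : Fin n → ℝ =>
      ((z.1 - WithLp.toLp 2 s, z.2 - ∑ j, s j ^ 2) : Pt n) := by fun_prop
    exact this hS
  unfold radonT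
  rw [← (PiLp.volume_preserving_toLp (Fin n)).lintegral_comp_emb
    (MeasurableEquiv.toLp 2 (Fin n → ℝ)).measurableEmbedding, ← lintegral_indicator_one hm]
  refine lintegral_congr fun s => ?_
  rw [EuclideanSpace.real_norm_sq_eq]
  rfl

lemma pointwise_bound (n : ℕ) (E' G : Set (Pt n)) (hE' : MeasurableSet E') (hG : MeasurableSet G)
    (b : ℝ≥0∞) (h : ∀ z ∈ G, b ≤ radonT n (E'.indicator 1) z) (x : Pt n) :
    radonT n (G.indicator 1) x * b ^ (n + 1) ≤
      (2 * (n + 1).factorial : ℝ≥0∞) * volume E' ^ n := by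
  have hmp : MeasurePreserving (fun p : (Fin n → ℝ) × ℝ => ((WithLp.toLp 2 p.1, p.2) : Pt n)) :=
    (PiLp.volume_preserving_toLp (Fin n)).prod (MeasurePreserving.id _)
  have hmp2 : MeasurePreserving (fun p : Pt n => x - p) :=
    (Measure.measurePreserving_sub_left (volume : Measure (Vec n)) x.1).prod
      (Measure.measurePreserving_sub_left (volume : Measure ℝ) x.2)
  have hmp3 := hmp2.comp hmp
  let S : Set ((Fin n → ℝ) × ℝ) :=
    ((fun p : Pt n => x - p) ∘ (fun p : (Fin n → ℝ) × ℝ => ((WithLp.toLp 2 p.1, p.2) : Pt n))) ⁻¹' E'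
  have hS : MeasurableSet S := hmp3.measurable hE'
  have hSv : volume S = volume E' := hmp3.measure_preimage hE'.nullMeasurableSet
  rw [radonT_indicator n G hG, ← hSv]
  refine core n S hS _ ?_ b ?_
  · have : Measurable fun s : Fin n → ℝ =>
      ((x.1 - WithLp.toLp 2 s, x.2 - ∑ j, s j ^ 2) : Pt n) := by fun_prop
    exact this hG
  · intro t ht
    refine (h _ ht).trans (le_of_eq ?_)
    rw [radonT_indicator n E' hE', ← measure_preimage_add_right volume t
      {y : Fin n → ℝ | (y, ∑ j, (t j ^ 2 + (y j - t j) ^ 2)) ∈ S}]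
    congr 1
    ext s
    have : (x.1 - WithLp.toLp 2 t - WithLp.toLp 2 s, x.2 - ∑ j, t j ^ 2 - ∑ j, s j ^ 2) =
      x - ((WithLp.toLp 2 (s + t), ∑ j, (t j ^ 2 + ((s + t) j - t j) ^ 2)) : Pt n) := by
      ext1
      · simp only [Prod.fst_sub, WithLp.toLp_add]
        abel
      · simp only [Prod.snd_sub, Pi.add_apply, add_sub_cancel_right, Finset.sum_add_distrib]
        ring
    simp only [Set.mem_ofPred_eq, Set.mem_preimage, S, Function.comp, this]

/-- trilinear lemma: if `T(χ_{E'}) ≥ β'` on `G`, then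
`(𝒯(E,G)/|E|)^{1/(d-1)} (β')^{d/(d-1)} ≤ C |E'|`. -/
theorem stmt18 (d : ℕ) (hd : 2 ≤ d) :
    ∃ C : ℝ, 0 < C ∧
      ∀ (E E' G : Set (Pt (d - 1))),
        MeasurableSet E → MeasurableSet E' → MeasurableSet G →
        volume E < ⊤ → volume E' < ⊤ → volume G < ⊤ → 0 < volume E →
      ∀ (β : ℝ), 0 < β →
        (∀ x ∈ G, ENNReal.ofReal β ≤ radonT (d - 1) (E'.indicator 1) x) →
        (incT (d - 1) E G / volume E) ^ ((1 : ℝ) / ((d : ℝ) - 1)) *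
            ENNReal.ofReal β ^ ((d : ℝ) / ((d : ℝ) - 1)) ≤
          ENNReal.ofReal C * volume E' := by
  obtain ⟨n, rfl⟩ : ∃ n, d = n + 1 := ⟨d - 1, by omega⟩
  have hn : 1 ≤ n := by omega
  have hnR : (0 : ℝ) < n := by exact_mod_cast hn
  have hr : (0 : ℝ) ≤ 1 / (n : ℝ) := by positivity
  refine ⟨((2 * (n + 1).factorial : ℝ)) ^ (1 / (n : ℝ)), by positivity, ?_⟩
  intro E E' G hE hE' hG hEt hE't hGt hE0 β hβ h
  change Set (Pt n) at E E' G
  change ∀ x ∈ G, ENNReal.ofReal β ≤ radonT n (E'.indicator 1) x at h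
  change (incT n E G / volume E) ^ ((1 : ℝ) / (((n + 1 : ℕ) : ℝ) - 1)) *
    ENNReal.ofReal β ^ (((n + 1 : ℕ) : ℝ) / (((n + 1 : ℕ) : ℝ) - 1)) ≤ _ * volume E'
  rw [show ((n + 1 : ℕ) : ℝ) - 1 = n by push_cast; ring]
  set b := ENNReal.ofReal β with hb
  have hbt : b ^ (n + 1) ≠ ⊤ := by simp [hb]
  have hX : incT n E G / volume E * b ^ (n + 1) ≤
      (2 * (n + 1).factorial : ℝ≥0∞) * volume E' ^ n := by
    have h1 : incT n E G * b ^ (n + 1) ≤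
        ((2 * (n + 1).factorial : ℝ≥0∞) * volume E' ^ n) * volume E := by
      unfold incT
      rw [← lintegral_mul_const' _ _ hbt, ← setLIntegral_const]
      exact lintegral_mono fun x => pointwise_bound n E' G hE' hG b h x
    rw [div_eq_mul_inv, mul_right_comm, ← div_eq_mul_inv]
    exact ENNReal.div_le_of_le_mul h1
  have h2 : b ^ (((n + 1 : ℕ) : ℝ) / (n : ℝ)) = (b ^ (n + 1)) ^ (1 / (n : ℝ)) := by
    rw [← ENNReal.rpow_natCast b, ← ENNReal.rpow_mul]
    congr 1
    ring
  rw [h2, ← ENNReal.mul_rpow_of_nonneg _ _ hr]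
  refine (ENNReal.rpow_le_rpow hX hr).trans (le_of_eq ?_)
  rw [ENNReal.mul_rpow_of_nonneg _ _ hr, ← ENNReal.ofReal_rpow_of_nonneg (by positivity) hr]
  congr 1
  · congr 1
    rw [ENNReal.ofReal_mul (by norm_num), ENNReal.ofReal_natCast]
    simp
  · rw [← ENNReal.rpow_natCast, ← ENNReal.rpow_mul, mul_one_div_cancel hnR.ne', ENNReal.rpow_one]
end
end

section
/- There exist constants γ > 0 and C < ∞, depending only on d, with the following property. Let f = Σ_{k∈ℤ} 2^k χ_{E_k} and f* = Σ_{l∈ℤ} 2^l χ_{F_l}, where {E_k}_{k∈ℤ} are pairwise disjoint Lebesgue measurable subsets of ℝ^d, {F_l}_{l∈ℤ} are pairwise disjoint Lebesgue measurable subsets of ℝ^d, and f, f* ∈ L^{(d+1)/d}(ℝ^d). Let η > 0 and suppose 2^l |F_l|^{d/(d+1)} ≤ η ‖f*‖_{L^{(d+1)/d}} for every l ∈ ℤ. Then ⟨Tf, f*⟩ ≤ C η^γ ‖f‖_{L^{(d+1)/d}} ‖f*‖_{L^{(d+1)/d}}. -/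
open MeasureTheory ENNReal

noncomputable section

/-- The `L^p` norm `(∫ f^p)^{1/p}` of a nonnegative function. -/
def LpN (n : ℕ) (p : ℝ) (f : Pt n → ℝ≥0∞) : ℝ≥0∞ :=
  (∫⁻ x, f x ^ p) ^ (1 / p)

/-- The pairing `⟨Tg, f⟩ = ∫ f · Tg` for nonnegative functions. -/
def pairT (n : ℕ) (f g : Pt n → ℝ≥0∞) : ℝ≥0∞ :=
  ∫⁻ x, f x * radonT n g x


/-- dot product -/
def dt {n : ℕ} (m y : Fin n → ℝ) : ℝ := ∑ i, m i * y i

theorem measurable_dt {n : ℕ} {α : Type*} [MeasurableSpace α] {a b : α → Fin n → ℝ}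
    (ha : Measurable a) (hb : Measurable b) : Measurable (fun x => dt (a x) (b x)) := by
  unfold dt
  refine Finset.measurable_sum _ (fun i _ => ?_)
  exact ((measurable_pi_apply i).comp ha).mul ((measurable_pi_apply i).comp hb)

theorem dt_cons {n : ℕ} (a b : ℝ) (m y : Fin n → ℝ) :
    dt (Fin.cons a m : Fin (n+1) → ℝ) (Fin.cons b y) = a * b + dt m y := by
  simp [dt, Fin.sum_univ_succ]

theorem dt_sub {n : ℕ} (m y z : Fin n → ℝ) : dt m (y - z) = dt m y - dt m z := by
  simp [dt, mul_sub]

theorem dt_smul {n : ℕ} (u : ℝ) (m y : Fin n → ℝ) : dt m (u • y) = u * dt m y := by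
  simp only [dt, Pi.smul_apply, smul_eq_mul, Finset.mul_sum]
  exact Finset.sum_congr rfl (fun i _ => by ring)

/-- Radon transform in slope-intercept coordinates -/
def XR (n : ℕ) (f : (Fin n → ℝ) × ℝ → ℝ≥0∞) (z : (Fin n → ℝ) × ℝ) : ℝ≥0∞ :=
  ∫⁻ y : Fin n → ℝ, f (y, dt z.1 y + z.2)

theorem measurable_XR {n : ℕ} {f : (Fin n → ℝ) × ℝ → ℝ≥0∞} (hf : Measurable f) :
    Measurable (XR n f) := by
  unfold XR
  have : Measurable (fun q : ((Fin n → ℝ) × ℝ) × (Fin n → ℝ) => f (q.2, dt q.1.1 q.2 + q.1.2)) :=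
    hf.comp (measurable_snd.prodMk
      ((measurable_dt (measurable_fst.comp measurable_fst) measurable_snd).add
        (measurable_snd.comp measurable_fst)))
  exact this.lintegral_prod_right'

theorem oneDim (n : ℕ) (h : ℝ → ℝ≥0∞) (hm : Measurable h) (h1 : ∀ u, h u ≤ 1) :
    (∫⁻ u, ‖u‖ₑ ^ n * h u) ^ (((n:ℝ) + 2) / (n + 1)) ≤
      (3:ℝ≥0∞) ^ (((n:ℝ) + 2) / (n + 1)) * ∫⁻ u, ‖u‖ₑ ^ (n+1) * h u := by
  set K := ∫⁻ u, ‖u‖ₑ ^ (n+1) * h u with hK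
  have hp : (0:ℝ) < ((n:ℝ) + 2) / (n + 1) := by positivity
  have h3 : (3:ℝ≥0∞) ^ (((n:ℝ) + 2) / (n + 1)) ≠ 0 := by simp
  rcases eq_or_ne K ⊤ with hKt | hKt
  · rw [hKt, ENNReal.mul_top h3]; exact le_top
  rcases eq_or_ne K 0 with hK0 | hK0
  · have : ∫⁻ u, ‖u‖ₑ ^ n * h u = 0 := by
      rw [hK, lintegral_eq_zero_iff (by fun_prop)] at hK0
      rw [lintegral_eq_zero_iff (by fun_prop)]
      have hne : ∀ᵐ u : ℝ, u ≠ 0 := by simp [ae_iff]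
      filter_upwards [hK0, hne] with u hu hu0
      simp only [Pi.zero_apply, mul_eq_zero, pow_eq_zero_iff', enorm_eq_zero] at hu ⊢
      tauto
    rw [this, ENNReal.zero_rpow_of_pos hp]; exact zero_le
  set R := K ^ (1 / ((n:ℝ) + 2)) with hR
  have hRt : R ≠ ⊤ := ENNReal.rpow_ne_top_of_nonneg (by positivity) hKt
  have hR0 : R ≠ 0 := by
    rw [hR]; exact (ENNReal.rpow_pos (pos_iff_ne_zero.mpr hK0) hKt).ne'
  have hKR : K = R ^ (n + 2) := by
    rw [hR, ← ENNReal.rpow_natCast, ← ENNReal.rpow_mul]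
    push_cast
    rw [one_div_mul_cancel (by positivity), ENNReal.rpow_one]
  have hpt : ∀ u : ℝ, ‖u‖ₑ ^ n * h u ≤
      (Set.Icc (-R.toReal) R.toReal).indicator (fun _ => R ^ n) u +
        R⁻¹ * (‖u‖ₑ ^ (n+1) * h u) := by
    intro u
    by_cases hu : ‖u‖ₑ ≤ R
    · have hmem : u ∈ Set.Icc (-R.toReal) R.toReal := by
        rw [Set.mem_Icc, ← abs_le, ← Real.norm_eq_abs, ← toReal_enorm]
        exact ENNReal.toReal_mono hRt hu
      rw [Set.indicator_of_mem hmem]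
      refine le_trans ?_ le_self_add
      calc ‖u‖ₑ ^ n * h u ≤ R ^ n * 1 := by gcongr; exact h1 u
        _ = _ := mul_one _
    · refine le_trans ?_ le_add_self
      have : 1 ≤ R⁻¹ * ‖u‖ₑ := by
        rw [← ENNReal.inv_mul_cancel hR0 hRt]
        gcongr; exact (not_le.mp hu).le
      calc ‖u‖ₑ ^ n * h u = 1 * (‖u‖ₑ ^ n * h u) := (one_mul _).symm
        _ ≤ R⁻¹ * ‖u‖ₑ * (‖u‖ₑ ^ n * h u) := by gcongr
        _ = _ := by ring
  have hM : ∫⁻ u, ‖u‖ₑ ^ n * h u ≤ 3 * R ^ (n+1) := by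
    calc ∫⁻ u, ‖u‖ₑ ^ n * h u ≤ ∫⁻ u, ((Set.Icc (-R.toReal) R.toReal).indicator (fun _ => R ^ n) u +
        R⁻¹ * (‖u‖ₑ ^ (n+1) * h u)) := lintegral_mono hpt
      _ = R ^ n * (2 * R) + R⁻¹ * K := by
        rw [lintegral_add_left (measurable_const.indicator measurableSet_Icc), lintegral_const_mul _ (by fun_prop),
          lintegral_indicator_const measurableSet_Icc, Real.volume_Icc]
        congr 2
        rw [sub_neg_eq_add, ← two_mul, ENNReal.ofReal_mul (by norm_num), ENNReal.ofReal_toReal hRt]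
        simp
      _ = 2 * R ^ (n+1) + (R⁻¹ * R) * R ^ (n+1) := by rw [hKR]; ring
      _ = 3 * R ^ (n+1) := by rw [ENNReal.inv_mul_cancel hR0 hRt]; ring
  calc _ ≤ (3 * R ^ (n+1)) ^ (((n:ℝ) + 2) / (n + 1)) := by gcongr
    _ = _ := by
      rw [ENNReal.mul_rpow_of_nonneg _ _ hp.le, hKR]
      congr 1
      rw [← ENNReal.rpow_natCast, ← ENNReal.rpow_mul, ← ENNReal.rpow_natCast]
      congr 1
      push_cast
      field_simp

theorem lint_smul {E : Type*} [NormedAddCommGroup E] [NormedSpace ℝ E] [MeasureSpace E]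
    [BorelSpace E] [FiniteDimensional ℝ E] [(volume : Measure E).IsAddHaarMeasure]
    (u : ℝ) (hu : u ≠ 0) (g : E → ℝ≥0∞) (hg : Measurable g) :
    ∫⁻ v, g v = ‖u‖ₑ ^ (Module.finrank ℝ E) * ∫⁻ w, g (u • w) := by
  have h := Measure.map_addHaar_smul (volume : Measure E) hu
  rw [← lintegral_map (f := g) (g := fun w : E => u • w) hg (measurable_const_smul u), h,
    lintegral_smul_measure, smul_eq_mul, ← mul_assoc]
  have : ‖u‖ₑ ^ (Module.finrank ℝ E) * ENNReal.ofReal |(u ^ Module.finrank ℝ E)⁻¹| = 1 := by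
    rw [← Real.enorm_eq_ofReal_abs, ← enorm_pow, ← enorm_mul,
      mul_inv_cancel₀ (pow_ne_zero _ hu), enorm_one]
  rw [this, one_mul]

theorem lint_cons {n : ℕ} (g : (Fin (n+1) → ℝ) → ℝ≥0∞) (hg : Measurable g) :
    ∫⁻ y, g y = ∫⁻ u : ℝ, ∫⁻ v : Fin n → ℝ, g (Fin.cons u v : Fin (n+1) → ℝ) := by
  have h := (volume_preserving_piFinSuccAbove (fun _ : Fin (n+1) => ℝ) 0).symm
  rw [← h.lintegral_comp hg, Measure.volume_eq_prod, lintegral_prod]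
  · congr! 4 with u v
    show g (Fin.insertNth 0 u v) = _
    rw [Fin.insertNth_zero']
  · exact (hg.comp (MeasurableEquiv.measurable _)).aemeasurable

theorem measurable_fcons {n : ℕ} {α : Type*} [MeasurableSpace α] {a : α → ℝ} {b : α → Fin n → ℝ}
    (ha : Measurable a) (hb : Measurable b) :
    Measurable (fun x => (Fin.cons (a x) (b x) : Fin (n+1) → ℝ)) := by
  rw [measurable_pi_iff]
  intro i
  refine Fin.cases ?_ (fun j => ?_) i
  · simpa using ha
  · simpa [Function.comp_def] using (measurable_pi_apply j).comp hb

theorem haarProd (n : ℕ) : (volume : Measure ((Fin n → ℝ) × ℝ)).IsAddHaarMeasure := by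
  rw [Measure.volume_eq_prod]; infer_instance

theorem ae_ne_zero : ∀ᵐ u : ℝ, u ≠ 0 := by simp [ae_iff]

/-- strong type bound in dimension `n`, implies estimate for hyperplanes through a point in
dimension `n+1` -/
theorem pointLem (n : ℕ) (C : ℝ≥0∞)
    (hS : ∀ F : (Fin n → ℝ) × ℝ → ℝ≥0∞, Measurable F →
      ∫⁻ z, XR n F z ^ (n+2) ≤ C * (∫⁻ z, F z ^ (((n:ℝ) + 2) / (n + 1))) ^ (n+1))
    (h : (Fin (n+1) → ℝ) × ℝ → ℝ≥0∞) (hm : Measurable h) (h1 : ∀ z, h z ≤ 1)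
    (z0 : (Fin (n+1) → ℝ) × ℝ) :
    ∫⁻ m, XR (n+1) h (m, z0.2 - dt m z0.1) ^ (n+2) ≤
      C * ((3:ℝ≥0∞) ^ (((n:ℝ) + 2) / (n + 1)) * ∫⁻ z, h z) ^ (n+1) := by
  have := haarProd n
  have := haarProd (n+1)
  set p : ℝ := ((n:ℝ) + 2) / (n + 1) with hp
  set h0 : (Fin (n+1) → ℝ) × ℝ → ℝ≥0∞ := fun z => h (z + z0) with hh0
  have hm0 : Measurable h0 := hm.comp (measurable_add_const z0)
  have hX : ∀ m, XR (n+1) h (m, z0.2 - dt m z0.1) = ∫⁻ y, h0 (y, dt m y) := by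
    intro m
    unfold XR
    rw [← lintegral_sub_right_eq_self (fun y => h0 (y, dt m y)) z0.1]
    refine lintegral_congr (fun y => ?_)
    simp only [hh0]
    congr 1
    ext
    · simp
    · simp only [dt_sub, Prod.snd_add]; ring
  set G : (Fin n → ℝ) × ℝ → ℝ → ℝ≥0∞ := fun q u => h0 (Fin.cons u (u • q.1), u * q.2) with hG
  have hGm : Measurable (fun x : ((Fin n → ℝ) × ℝ) × ℝ => G x.1 x.2) := by
    refine hm0.comp (Measurable.prodMk (measurable_fcons measurable_snd ?_) ?_)
    · exact measurable_snd.smul (measurable_fst.comp measurable_fst)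
    · exact measurable_snd.mul (measurable_snd.comp measurable_fst)
  have hGq : ∀ q, Measurable (G q) := fun q => hGm.comp measurable_prodMk_left
  set F : (Fin n → ℝ) × ℝ → ℝ≥0∞ := fun q => ∫⁻ u : ℝ, ‖u‖ₑ ^ n * G q u with hF
  have hFm : Measurable F := by
    have : Measurable (fun x : ((Fin n → ℝ) × ℝ) × ℝ => ‖x.2‖ₑ ^ n * G x.1 x.2) :=
      (measurable_snd.enorm.pow_const n).mul hGm
    exact this.lintegral_prod_right'
  have hXF : ∀ (a : ℝ) (m : Fin n → ℝ),
      ∫⁻ y, h0 (y, dt (Fin.cons a m : Fin (n+1) → ℝ) y) = XR n F (m, a) := by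
    intro a m
    have hmy : Measurable (fun y => h0 (y, dt (Fin.cons a m : Fin (n+1) → ℝ) y)) :=
      hm0.comp (measurable_id.prodMk (measurable_dt measurable_const measurable_id))
    rw [lint_cons _ hmy]
    unfold XR
    simp only [hF]
    symm
    rw [lintegral_lintegral_swap]
    swap
    · have : Measurable (fun x : (Fin n → ℝ) × ℝ => ‖x.2‖ₑ ^ n * G (x.1, dt m x.1 + a) x.2) := by
        refine (measurable_snd.enorm.pow_const n).mul (hGm.comp (Measurable.prodMk ?_ measurable_snd))
        exact measurable_fst.prodMk ((measurable_dt measurable_const measurable_fst).add_const a)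
      exact this.aemeasurable
    symm
    refine lintegral_congr_ae ?_
    filter_upwards [ae_ne_zero] with u hu
    have hmv : Measurable (fun v : Fin n → ℝ =>
        h0 (Fin.cons u v, dt (Fin.cons a m : Fin (n+1) → ℝ) (Fin.cons u v : Fin (n+1) → ℝ))) := by
      have hc : Measurable (fun v : Fin n → ℝ => (Fin.cons u v : Fin (n+1) → ℝ)) :=
        measurable_fcons measurable_const measurable_id
      exact hm0.comp (hc.prodMk (measurable_dt measurable_const hc))
    rw [lint_smul u hu _ hmv, Module.finrank_fin_fun, ← lintegral_const_mul' _ _ (by simp)]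
    refine lintegral_congr (fun w => ?_)
    simp only [hG, dt_cons, dt_smul]
    congr 3
    ring
  have hinteq : ∫⁻ q, ∫⁻ u : ℝ, ‖u‖ₑ ^ (n+1) * G q u = ∫⁻ z, h z := by
    have e1 : ∫⁻ z, h z = ∫⁻ z, h0 z := (lintegral_add_right_eq_self h z0).symm
    have e2 : ∫⁻ z, h0 z = ∫⁻ u : ℝ, ∫⁻ q : (Fin n → ℝ) × ℝ, h0 (Fin.cons u q.1, q.2) := by
      rw [Measure.volume_eq_prod, lintegral_prod_symm _ hm0.aemeasurable]
      have : ∀ s : ℝ, ∫⁻ y : Fin (n+1) → ℝ, h0 (y, s) =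
          ∫⁻ u : ℝ, ∫⁻ v : Fin n → ℝ, h0 (Fin.cons u v, s) := fun s =>
        lint_cons _ (hm0.comp measurable_prodMk_right)
      simp_rw [this]
      rw [lintegral_lintegral_swap]
      · refine lintegral_congr (fun u => ?_)
        rw [Measure.volume_eq_prod, lintegral_prod_symm]
        refine (hm0.comp (Measurable.prodMk (measurable_fcons measurable_const measurable_fst)
          measurable_snd)).aemeasurable
      · have : Measurable (fun x : (ℝ × ℝ) × (Fin n → ℝ) => h0 (Fin.cons x.1.2 x.2, x.1.1)) :=
          hm0.comp (Measurable.prodMk (measurable_fcons (measurable_snd.comp measurable_fst)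
            measurable_snd) (measurable_fst.comp measurable_fst))
        exact this.lintegral_prod_right'.aemeasurable
    rw [e1, e2, lintegral_lintegral_swap]
    · refine lintegral_congr_ae ?_
      filter_upwards [ae_ne_zero] with u hu
      have hmv : Measurable (fun q : (Fin n → ℝ) × ℝ => h0 (Fin.cons u q.1, q.2)) :=
        hm0.comp (Measurable.prodMk (measurable_fcons measurable_const measurable_fst)
          measurable_snd)
      rw [lint_smul u hu _ hmv, Module.finrank_prod, Module.finrank_fin_fun, Module.finrank_self,
        ← lintegral_const_mul' _ _ (by simp)]
      rfl
    · exact ((measurable_snd.enorm.pow_const (n+1)).mul hGm).aemeasurable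
  calc ∫⁻ m, XR (n+1) h (m, z0.2 - dt m z0.1) ^ (n+2)
      = ∫⁻ m, (∫⁻ y, h0 (y, dt m y)) ^ (n+2) := by simp_rw [hX]
    _ = ∫⁻ a : ℝ, ∫⁻ m : Fin n → ℝ, XR n F (m, a) ^ (n+2) := by
      rw [lint_cons]
      · simp_rw [hXF]
      · have : Measurable (fun x : (Fin (n+1) → ℝ) × (Fin (n+1) → ℝ) => h0 (x.2, dt x.1 x.2)) :=
          hm0.comp (measurable_snd.prodMk (measurable_dt measurable_fst measurable_snd))
        exact this.lintegral_prod_right'.pow_const _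
    _ = ∫⁻ z, XR n F z ^ (n+2) := by
      rw [Measure.volume_eq_prod, lintegral_prod_symm]
      exact ((measurable_XR hFm).pow_const _).aemeasurable
    _ ≤ C * (∫⁻ z, F z ^ p) ^ (n+1) := hS F hFm
    _ ≤ C * (∫⁻ q, (3:ℝ≥0∞) ^ p * ∫⁻ u : ℝ, ‖u‖ₑ ^ (n+1) * G q u) ^ (n+1) := by
      gcongr with q
      exact oneDim n (G q) (hGq q) (fun u => h1 _)
    _ = _ := by
      rw [lintegral_const_mul, hinteq]
      have : Measurable (fun x : ((Fin n → ℝ) × ℝ) × ℝ => ‖x.2‖ₑ ^ (n+1) * G x.1 x.2) :=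
        (measurable_snd.enorm.pow_const (n+1)).mul hGm
      exact this.lintegral_prod_right'

theorem pow_add_le_aux (S a : ℝ≥0∞) (Q : ℕ) :
    (S + a) ^ (Q+1) ≤ S ^ (Q+1) + ((Q:ℝ≥0∞) + 1) * (a * (S + a) ^ Q) := by
  induction Q with
  | zero => simp
  | succ Q ih =>
    calc (S + a) ^ (Q+1+1) = (S + a) ^ (Q+1) * S + a * (S + a) ^ (Q+1) := by ring
      _ ≤ (S ^ (Q+1) + ((Q:ℝ≥0∞) + 1) * (a * (S + a) ^ Q)) * S + a * (S + a) ^ (Q+1) := by gcongr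
      _ = S ^ (Q+1+1) + (((Q:ℝ≥0∞) + 1) * (a * ((S + a) ^ Q * S)) + a * (S + a) ^ (Q+1)) := by ring
      _ ≤ S ^ (Q+1+1) + (((Q:ℝ≥0∞) + 1) * (a * ((S + a) ^ Q * (S + a))) + a * (S + a) ^ (Q+1)) := by
        gcongr; exact le_self_add
      _ = _ := by push_cast; ring

theorem sum_le_tail (a : ℤ → ℝ≥0∞) (k : ℤ) (t : Finset ℤ) (ht : ∀ j ∈ t, j ≤ k) :
    ∑ j ∈ t, a j ≤ ∑' i : ℕ, a (k - i) := by
  have : ∑ j ∈ t, a j = ∑ i ∈ t.image (fun j => (k - j).toNat), a (k - i) := by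
    rw [Finset.sum_image]
    · refine Finset.sum_congr rfl (fun j hj => ?_)
      congr 1
      have := ht j hj
      omega
    · intro x hx y hy hxy
      have := ht x hx
      have := ht y hy
      simp only at hxy
      omega
  rw [this]
  exact ENNReal.sum_le_tsum _

theorem tsum_pow_le_aux (a : ℤ → ℝ≥0∞) (Q : ℕ) :
    (∑' k, a k) ^ (Q+1) ≤ ((Q:ℝ≥0∞) + 1) * ∑' k, a k * (∑' i : ℕ, a (k - i)) ^ Q := by
  have hfin : ∀ s : Finset ℤ, (∑ k ∈ s, a k) ^ (Q+1) ≤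
      ((Q:ℝ≥0∞) + 1) * ∑ k ∈ s, a k * (∑' i : ℕ, a (k - i)) ^ Q := by
    intro s
    induction s using Finset.induction_on_max with
    | empty => simp
    | insert k s hk ih =>
      have hn : k ∉ s := fun h => lt_irrefl _ (hk k h)
      have htail := sum_le_tail a k (insert k s) (by
        intro j hj
        rcases Finset.mem_insert.mp hj with rfl | hj
        · exact le_rfl
        · exact (hk j hj).le)
      rw [Finset.sum_insert hn] at htail
      rw [Finset.sum_insert hn, Finset.sum_insert hn, add_comm (a k)]
      rw [add_comm (a k)] at htail
      refine (pow_add_le_aux _ _ Q).trans ?_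
      rw [mul_add, add_comm]
      gcongr
  have ht : Filter.Tendsto (fun s : Finset ℤ => (∑ k ∈ s, a k) ^ (Q+1)) Filter.atTop
      (nhds ((∑' k, a k) ^ (Q+1))) :=
    ((ENNReal.continuous_pow (Q+1)).tendsto _).comp ENNReal.summable.hasSum
  refine le_of_tendsto' ht (fun s => (hfin s).trans ?_)
  gcongr
  exact ENNReal.sum_le_tsum _

theorem geomPow (A : ℕ → ℝ≥0∞) (r : ℝ≥0∞) (hr0 : r ≠ 0) (hrt : r ≠ ⊤) (q : ℕ) (hq : q ≠ 0) :
    (∑' i, A i) ^ q ≤ ((1 - r)⁻¹) ^ q * ∑' i, (r⁻¹ ^ i * A i) ^ q := by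
  set T := ∑' i, (r⁻¹ ^ i * A i) ^ q with hT
  have hq' : (0:ℝ) < q := by positivity
  have hB : ∀ i, r⁻¹ ^ i * A i ≤ T ^ ((q:ℝ)⁻¹) := by
    intro i
    rw [ENNReal.le_rpow_inv_iff hq', ENNReal.rpow_natCast]
    exact ENNReal.le_tsum (f := fun i => (r⁻¹ ^ i * A i) ^ q) i
  have hA : ∀ i, A i ≤ r ^ i * T ^ ((q:ℝ)⁻¹) := by
    intro i
    calc A i = (r * r⁻¹) ^ i * A i := by rw [ENNReal.mul_inv_cancel hr0 hrt]; simp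
      _ = r ^ i * (r⁻¹ ^ i * A i) := by rw [mul_pow]; ring
      _ ≤ _ := by gcongr; exact hB i
  calc (∑' i, A i) ^ q ≤ (∑' i, r ^ i * T ^ ((q:ℝ)⁻¹)) ^ q := by gcongr with i; exact hA i
    _ = _ := by
      rw [ENNReal.tsum_mul_right, ENNReal.tsum_geometric, mul_pow]
      congr 1
      rw [← ENNReal.rpow_natCast, ← ENNReal.rpow_mul, inv_mul_cancel₀ hq'.ne', ENNReal.rpow_one]

theorem XR_pair {n : ℕ} (h G : (Fin n → ℝ) × ℝ → ℝ≥0∞) (hm : Measurable h) (hG : Measurable G) :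
    ∫⁻ z, XR n h z * G z = ∫⁻ w, h w * ∫⁻ m, G (m, w.2 - dt m w.1) := by
  have hmG : Measurable (fun x : (Fin n → ℝ) × ((Fin n → ℝ) × ℝ) =>
      G (x.1, x.2.2 - dt x.1 x.2.1)) :=
    hG.comp (measurable_fst.prodMk ((measurable_snd.comp measurable_snd).sub
      (measurable_dt measurable_fst (measurable_fst.comp measurable_snd))))
  have e1 : ∀ w, h w * ∫⁻ m, G (m, w.2 - dt m w.1) = ∫⁻ m, h w * G (m, w.2 - dt m w.1) := by
    intro w
    rw [lintegral_const_mul]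
    exact hmG.comp measurable_prodMk_right
  simp_rw [e1]
  rw [lintegral_lintegral_swap (((hm.comp measurable_fst).mul
    (hmG.comp measurable_swap)).aemeasurable),
    Measure.volume_eq_prod, lintegral_prod (fun z => XR n h z * G z) ((measurable_XR hm).mul hG).aemeasurable]
  refine lintegral_congr (fun m => ?_)
  rw [lintegral_prod (fun x => h x * G (m, x.2 - dt m x.1))
    ((hm.mul (hmG.comp measurable_prodMk_left)).aemeasurable)]
  have hh : Measurable (fun x : ℝ × (Fin n → ℝ) => h (x.2, dt m x.2 + x.1)) :=
    hm.comp (measurable_snd.prodMk ((measurable_dt measurable_const measurable_snd).add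
      measurable_fst))
  have e2 : ∀ b, XR n h (m, b) * G (m, b) = ∫⁻ y, h (y, dt m y + b) * G (m, b) := by
    intro b
    unfold XR
    rw [lintegral_mul_const]
    exact hh.comp measurable_prodMk_left
  simp_rw [e2]
  rw [lintegral_lintegral_swap]
  swap
  · exact (hh.mul (hG.comp (measurable_const.prodMk measurable_fst))).aemeasurable
  refine lintegral_congr (fun y => ?_)
  rw [← lintegral_sub_right_eq_self (fun b => h (y, dt m y + b) * G (m, b)) (dt m y)]
  refine lintegral_congr (fun s => ?_)
  simp

theorem numeric (N : ℕ) (r : ℝ≥0∞) (hr0 : r ≠ 0) (hrt : r ≠ ⊤)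
    (hr : r ^ (2 * (N+1) * (N+1)) * 2 = 1)
    (e : ℤ → ℝ≥0∞) (k : ℤ) (i : ℕ) :
    r⁻¹ ^ (i * (N+1)) * ((2 ^ k * e k) * ((2 ^ (k - i)) ^ (N+1) * e (k - i) ^ N)) ≤
      (r ^ (N+1)) ^ i * ((2 ^ k) ^ (N+2) * e k ^ (N+1) +
        (2 ^ (k - i)) ^ (N+2) * e (k - i) ^ (N+1)) := by
  set x := e k
  set y := e (k - i)
  have hk : (2:ℝ≥0∞) ^ k = 2 ^ (k - i) * 2 ^ i := by
    rw [← zpow_natCast, ← ENNReal.zpow_add (by simp) (by simp)]; simp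
  rw [hk]
  set a := (2:ℝ≥0∞) ^ (k - i)
  have key : (a * 2 ^ i * x) * (a ^ (N+1) * y ^ N) ≤ r ^ (2 * i * (N+1)) *
      ((a * 2 ^ i) ^ (N+2) * x ^ (N+1) + a ^ (N+2) * y ^ (N+1)) := by
    have hpow : ((a * 2 ^ i * x) * (a ^ (N+1) * y ^ N)) ^ (N+1) ≤ (r ^ (2 * i * (N+1)) *
      ((a * 2 ^ i) ^ (N+2) * x ^ (N+1) + a ^ (N+2) * y ^ (N+1))) ^ (N+1) := by
      set ck := (a * 2 ^ i) ^ (N+2) * x ^ (N+1) with hck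
      set cj := a ^ (N+2) * y ^ (N+1) with hcj
      have h2 : (r ^ (2 * i * (N+1))) ^ (N+1) * 2 ^ i = 1 := by
        have : (r ^ (2 * i * (N+1))) ^ (N+1) * 2 ^ i = (r ^ (2 * (N+1) * (N+1)) * 2) ^ i := by
          rw [mul_pow, ← pow_mul, ← pow_mul]; congr 2; ring
        rw [this, hr, one_pow]
      have h3 : ((a * 2 ^ i * x) * (a ^ (N+1) * y ^ N)) ^ (N+1) * 2 ^ i = ck * cj ^ N := by
        rw [hck, hcj]; ring
      calc ((a * 2 ^ i * x) * (a ^ (N+1) * y ^ N)) ^ (N+1)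
          = (r ^ (2 * i * (N+1))) ^ (N+1) *
            (((a * 2 ^ i * x) * (a ^ (N+1) * y ^ N)) ^ (N+1) * 2 ^ i) := by
            generalize ((a * 2 ^ i * x) * (a ^ (N+1) * y ^ N)) ^ (N+1) = Z
            rw [mul_left_comm, h2, mul_one]
        _ = (r ^ (2 * i * (N+1))) ^ (N+1) * (ck * cj ^ N) := by rw [h3]
        _ ≤ (r ^ (2 * i * (N+1))) ^ (N+1) * ((ck + cj) * (ck + cj) ^ N) := by
          gcongr
          · exact le_self_add
          · exact le_add_self
        _ = _ := by rw [mul_pow _ (ck + cj), pow_succ' (ck + cj)]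
    exact (ENNReal.pow_le_pow_left_iff (by omega)).mp hpow
  calc _ ≤ r⁻¹ ^ (i * (N+1)) * (r ^ (2 * i * (N+1)) *
      ((a * 2 ^ i) ^ (N+2) * x ^ (N+1) + a ^ (N+2) * y ^ (N+1))) := by gcongr
    _ = (r⁻¹ * r) ^ (i * (N+1)) * ((r ^ (N+1)) ^ i *
      ((a * 2 ^ i) ^ (N+2) * x ^ (N+1) + a ^ (N+2) * y ^ (N+1))) := by
      rw [mul_pow, ← pow_mul r]; ring
    _ = _ := by rw [ENNReal.inv_mul_cancel hr0 hrt, one_pow, one_mul]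

theorem exists_ratio (N : ℕ) : ∃ r : ℝ≥0∞, r ≠ 0 ∧ r < 1 ∧ r ^ (2 * (N+1) * (N+1)) * 2 = 1 := by
  refine ⟨(2⁻¹ : ℝ≥0∞) ^ ((((2 * (N+1) * (N+1) : ℕ) : ℝ))⁻¹), ?_, ?_, ?_⟩
  · exact (ENNReal.rpow_pos (by simp) (by simp)).ne'
  · exact ENNReal.rpow_lt_one (by simp) (by positivity)
  · rw [← ENNReal.rpow_natCast, ← ENNReal.rpow_mul, inv_mul_cancel₀ (by positivity),
      ENNReal.rpow_one, ENNReal.inv_mul_cancel (by simp) (by simp)]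

theorem dyadicStep (N : ℕ) (C : ℝ≥0∞) (hC : C ≠ ⊤)
    (hP : ∀ h : (Fin N → ℝ) × ℝ → ℝ≥0∞, Measurable h → (∀ z, h z ≤ 1) → ∀ z0 : (Fin N → ℝ) × ℝ,
      ∫⁻ m, XR N h (m, z0.2 - dt m z0.1) ^ (N+1) ≤ C * (∫⁻ z, h z) ^ N) :
    ∃ C' : ℝ≥0∞, C' ≠ ⊤ ∧ ∀ h : ℤ → (Fin N → ℝ) × ℝ → ℝ≥0∞, (∀ k, Measurable (h k)) →
      (∀ k z, h k z ≤ 1) →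
      ∫⁻ z, XR N (fun z => ∑' k, (2:ℝ≥0∞) ^ k * h k z) z ^ (N+2) ≤
        C' * ∑' k : ℤ, ((2:ℝ≥0∞) ^ k) ^ (N+2) * (∫⁻ z, h k z) ^ (N+1) := by
  obtain ⟨r, hr0, hr1, hr⟩ := exists_ratio N
  have hrt : r ≠ ⊤ := (hr1.trans ENNReal.one_lt_top).ne
  set W : ℝ≥0∞ := ((1 - r)⁻¹) ^ (N+1) with hW
  set θ : ℝ≥0∞ := r ^ (N+1) with hθ
  have hθ1 : θ < 1 := pow_lt_one' hr1 (by omega)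
  have hWt : W ≠ ⊤ := ENNReal.pow_ne_top (ENNReal.inv_ne_top.mpr (tsub_pos_of_lt hr1).ne')
  have hθt : (1 - θ)⁻¹ ≠ ⊤ := ENNReal.inv_ne_top.mpr (tsub_pos_of_lt hθ1).ne'
  refine ⟨((N+1 : ℕ) + 1 : ℝ≥0∞) * W * C * (2 * (1 - θ)⁻¹), ?_, ?_⟩
  · refine ENNReal.mul_ne_top (ENNReal.mul_ne_top (ENNReal.mul_ne_top ?_ hWt) hC)
      (ENNReal.mul_ne_top (by simp) hθt)
    exact ENNReal.add_ne_top.mpr ⟨ENNReal.natCast_ne_top _, ENNReal.one_ne_top⟩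
  intro h hm h1
  set e : ℤ → ℝ≥0∞ := fun k => ∫⁻ z, h k z with he
  set c : ℤ → ℝ≥0∞ := fun k => ((2:ℝ≥0∞) ^ k) ^ (N+2) * e k ^ (N+1) with hc
  have hXm : ∀ k, Measurable (XR N (h k)) := fun k => measurable_XR (hm k)
  have hX : ∀ z, XR N (fun z => ∑' k, (2:ℝ≥0∞) ^ k * h k z) z = ∑' k : ℤ, 2 ^ k * XR N (h k) z := by
    intro z
    have hmy : ∀ k, Measurable (fun y => h k (y, dt z.1 y + z.2)) := fun k =>
      (hm k).comp (measurable_id.prodMk ((measurable_dt measurable_const measurable_id).add_const _))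
    unfold XR
    rw [lintegral_tsum (fun k => ((hmy k).const_mul _).aemeasurable)]
    congr 1
    ext k
    rw [lintegral_const_mul _ (hmy k)]
  have hbil : ∀ k j, ∫⁻ z, XR N (h k) z * XR N (h j) z ^ (N+1) ≤ C * (e k * e j ^ N) := by
    intro k j
    rw [XR_pair _ _ (hm k) ((hXm j).pow_const _)]
    calc _ ≤ ∫⁻ w, h k w * (C * e j ^ N) := by
          gcongr with w
          exact hP (h j) (hm j) (h1 j) w
      _ = _ := by rw [lintegral_mul_const _ (hm k)]; ring
  have hpt : ∀ z, XR N (fun z => ∑' k, (2:ℝ≥0∞) ^ k * h k z) z ^ (N+2) ≤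
      ((N+1 : ℕ) + 1 : ℝ≥0∞) * (W * ∑' k : ℤ, ∑' i : ℕ,
        (2 ^ k * (r⁻¹ ^ (i * (N+1)) * ((2:ℝ≥0∞) ^ (k - i)) ^ (N+1))) *
          (XR N (h k) z * XR N (h (k - i)) z ^ (N+1))) := by
    intro z
    rw [hX]
    refine (tsum_pow_le_aux _ (N+1)).trans ?_
    gcongr
    rw [← ENNReal.tsum_mul_left]
    refine ENNReal.tsum_le_tsum (fun k => ?_)
    calc _ ≤ (2 ^ k * XR N (h k) z) * (W * ∑' i : ℕ, (r⁻¹ ^ i *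
          (2 ^ (k - i) * XR N (h (k - i)) z)) ^ (N+1)) := by
          gcongr
          exact geomPow _ r hr0 hrt (N+1) (by omega)
      _ = W * ∑' i : ℕ, (2 ^ k * XR N (h k) z) * (r⁻¹ ^ i *
          (2 ^ (k - i) * XR N (h (k - i)) z)) ^ (N+1) := by
          rw [ENNReal.tsum_mul_left]; ring
      _ = _ := by
          congr 2
          ext i
          rw [mul_pow, mul_pow, ← pow_mul]
          ring
  have hmterm : ∀ (k : ℤ) (i : ℕ), Measurable (fun z => XR N (h k) z * XR N (h (k - i)) z ^ (N+1)) :=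
    fun k i => (hXm k).mul ((hXm _).pow_const _)
  calc ∫⁻ z, XR N (fun z => ∑' k, (2:ℝ≥0∞) ^ k * h k z) z ^ (N+2)
      ≤ ∫⁻ z, ((N+1 : ℕ) + 1 : ℝ≥0∞) * (W * ∑' k : ℤ, ∑' i : ℕ,
        (2 ^ k * (r⁻¹ ^ (i * (N+1)) * ((2:ℝ≥0∞) ^ (k - i)) ^ (N+1))) *
          (XR N (h k) z * XR N (h (k - i)) z ^ (N+1))) := lintegral_mono hpt
    _ = ((N+1 : ℕ) + 1 : ℝ≥0∞) * (W * ∑' k : ℤ, ∑' i : ℕ,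
        (2 ^ k * (r⁻¹ ^ (i * (N+1)) * ((2:ℝ≥0∞) ^ (k - i)) ^ (N+1))) *
          ∫⁻ z, (XR N (h k) z * XR N (h (k - i)) z ^ (N+1))) := by
      have hm1 : ∀ (k : ℤ) (i : ℕ), Measurable (fun z =>
        (2 ^ k * (r⁻¹ ^ (i * (N+1)) * ((2:ℝ≥0∞) ^ (k - i)) ^ (N+1))) *
          (XR N (h k) z * XR N (h (k - i)) z ^ (N+1))) := fun k i => (hmterm k i).const_mul _
      have hm2 : ∀ k : ℤ, Measurable (fun z => ∑' i : ℕ,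
        (2 ^ k * (r⁻¹ ^ (i * (N+1)) * ((2:ℝ≥0∞) ^ (k - i)) ^ (N+1))) *
          (XR N (h k) z * XR N (h (k - i)) z ^ (N+1))) := fun k =>
        Measurable.tsum (hm1 k)
      rw [lintegral_const_mul _ ((Measurable.tsum hm2).const_mul _),
        lintegral_const_mul _ (Measurable.tsum hm2),
        lintegral_tsum (fun k => (hm2 k).aemeasurable)]
      congr 3
      ext k
      rw [lintegral_tsum (fun i => (hm1 k i).aemeasurable)]
      congr 1
      ext i
      rw [lintegral_const_mul _ (hmterm k i)]
    _ ≤ ((N+1 : ℕ) + 1 : ℝ≥0∞) * (W * ∑' k : ℤ, ∑' i : ℕ, C * (θ ^ i * (c k + c (k - i)))) := by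
      refine mul_le_mul' le_rfl (mul_le_mul' le_rfl
        (ENNReal.tsum_le_tsum fun k => ENNReal.tsum_le_tsum fun i => ?_))
      calc _ ≤ (2 ^ k * (r⁻¹ ^ (i * (N+1)) * ((2:ℝ≥0∞) ^ (k - i)) ^ (N+1))) *
            (C * (e k * e (k - i) ^ N)) := by gcongr; exact hbil k (k - i)
        _ = C * (r⁻¹ ^ (i * (N+1)) * ((2 ^ k * e k) * ((2 ^ (k - i)) ^ (N+1) * e (k - i) ^ N))) := by
          ring
        _ ≤ _ := mul_le_mul' le_rfl (numeric N r hr0 hrt hr e k i)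
    _ = _ := by
      have : ∑' k : ℤ, ∑' i : ℕ, C * (θ ^ i * (c k + c (k - i))) =
          C * ((2 * (1 - θ)⁻¹) * ∑' k, c k) := by
        simp_rw [ENNReal.tsum_mul_left]
        congr 1
        rw [ENNReal.tsum_comm]
        have : ∀ i : ℕ, ∑' k : ℤ, θ ^ i * (c k + c (k - i)) = θ ^ i * (2 * ∑' k, c k) := by
          intro i
          rw [ENNReal.tsum_mul_left, ENNReal.tsum_add, two_mul]
          congr 2
          exact (Equiv.subRight (i:ℤ)).tsum_eq c
        simp_rw [this]
        rw [ENNReal.tsum_mul_right, ENNReal.tsum_geometric]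
        ring
      rw [this]
      ring

theorem XR_mono {n : ℕ} {f g : (Fin n → ℝ) × ℝ → ℝ≥0∞} (h : ∀ z, f z ≤ g z) (z) :
    XR n f z ≤ XR n g z := lintegral_mono (fun _ => h _)

theorem strongOfDyadic (N : ℕ) (C : ℝ≥0∞)
    (hD : ∀ h : ℤ → (Fin N → ℝ) × ℝ → ℝ≥0∞, (∀ k, Measurable (h k)) →
      (∀ k z, h k z ≤ 1) →
      ∫⁻ z, XR N (fun z => ∑' k, (2:ℝ≥0∞) ^ k * h k z) z ^ (N+2) ≤
        C * ∑' k : ℤ, ((2:ℝ≥0∞) ^ k) ^ (N+2) * (∫⁻ z, h k z) ^ (N+1))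
    (F : (Fin N → ℝ) × ℝ → ℝ≥0∞) (hF : Measurable F) :
    ∫⁻ z, XR N F z ^ (N+2) ≤
      (2 ^ (N+2) * C) * (∫⁻ z, F z ^ (((N:ℝ) + 2) / (N + 1))) ^ (N+1) := by
  set p : ℝ := ((N:ℝ) + 2) / (N + 1) with hp
  have hp0 : 0 < p := by positivity
  set A : ℤ → Set ℝ≥0∞ := fun k => Set.Ico (2 ^ k) (2 ^ (k+1)) ∪ {⊤} with hA
  have hAm : ∀ k, MeasurableSet (A k) := fun k => measurableSet_Ico.union (measurableSet_singleton _)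
  set h : ℤ → (Fin N → ℝ) × ℝ → ℝ≥0∞ := fun k z => (A k).indicator 1 (F z) with hh
  have hm : ∀ k, Measurable (h k) := fun k => (measurable_one.indicator (hAm k)).comp hF
  have h1 : ∀ k z, h k z ≤ 1 := fun k z => Set.indicator_le_self' (by simp) _
  have htop : ∑' k : ℤ, (2:ℝ≥0∞) ^ k = ⊤ := by
    by_contra hne
    have hpos : ∑' k : ℤ, (2:ℝ≥0∞) ^ k ≠ 0 := by
      intro h0
      have := ENNReal.tsum_eq_zero.mp h0 0
      simp at this
    obtain ⟨k, hk⟩ := ENNReal.exists_mem_Ico_zpow hpos hne (y := 2) (by norm_num) (by simp)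
    exact absurd (ENNReal.le_tsum (f := fun k : ℤ => (2:ℝ≥0∞) ^ k) (k+1)) (not_le.mpr hk.2)
  have hle : ∀ z, F z ≤ ∑' k : ℤ, 2 * ((2:ℝ≥0∞) ^ k * h k z) := by
    intro z
    rw [ENNReal.tsum_mul_left]
    rcases eq_or_ne (F z) ⊤ with ht | ht
    · have : ∀ k, h k z = 1 := fun k => by simp [hh, hA, ht]
      simp [this, htop]
    rcases eq_or_ne (F z) 0 with h0 | h0
    · rw [h0]; exact zero_le
    obtain ⟨k, hk⟩ := ENNReal.exists_mem_Ico_zpow h0 ht (y := 2) (by norm_num) (by simp)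
    have hk1 : h k z = 1 := by
      simp only [hh]
      rw [Set.indicator_of_mem]
      · rfl
      · exact Or.inl hk
    calc F z ≤ 2 ^ (k+1) := hk.2.le
      _ = 2 * (2 ^ k * h k z) := by
        rw [hk1, ENNReal.zpow_add (by simp) (by simp), mul_one, zpow_one, mul_comm]
      _ ≤ _ := by
        gcongr
        exact ENNReal.le_tsum (f := fun k : ℤ => (2:ℝ≥0∞) ^ k * h k z) k
  have hge : ∀ z, ∑' k : ℤ, ((2:ℝ≥0∞) ^ k) ^ p * h k z ≤ F z ^ p := by
    intro z
    rcases eq_or_ne (F z) ⊤ with ht | ht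
    · rw [ht, ENNReal.top_rpow_of_pos hp0]; exact le_top
    by_cases hex : ∃ k : ℤ, F z ∈ A k
    · obtain ⟨k, hk⟩ := hex
      have hkI : F z ∈ Set.Ico ((2:ℝ≥0∞) ^ k) (2 ^ (k+1)) := by
        rcases hk with hk | hk
        · exact hk
        · exact absurd hk ht
      rw [tsum_eq_single k]
      · calc _ ≤ ((2:ℝ≥0∞) ^ k) ^ p * 1 := by gcongr; exact h1 k z
          _ ≤ _ := by rw [mul_one]; gcongr; exact hkI.1
      · intro j hj
        have : F z ∉ A j := by
          rintro (hj' | hj')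
          · have a1 : (2:ℝ≥0∞) ^ j < 2 ^ (k+1) := lt_of_le_of_lt hj'.1 hkI.2
            have a2 : (2:ℝ≥0∞) ^ k < 2 ^ (j+1) := lt_of_le_of_lt hkI.1 hj'.2
            have b1 : j < k + 1 := by
              by_contra hcon
              exact absurd (ENNReal.zpow_le_of_le (x := 2) (by norm_num) (not_lt.mp hcon)) (not_le.mpr a1)
            have b2 : k < j + 1 := by
              by_contra hcon
              exact absurd (ENNReal.zpow_le_of_le (x := 2) (by norm_num) (not_lt.mp hcon)) (not_le.mpr a2)
            omega
          · exact ht hj'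
        simp [hh, this]
    · have : ∀ k, h k z = 0 := fun k => by
        simp only [hh]
        exact Set.indicator_of_notMem (fun hk => hex ⟨k, hk⟩) _
      simp [this]
  have hS : ∑' k : ℤ, ((2:ℝ≥0∞) ^ k) ^ p * ∫⁻ z, h k z ≤ ∫⁻ z, F z ^ p := by
    calc _ = ∑' k : ℤ, ∫⁻ z, ((2:ℝ≥0∞) ^ k) ^ p * h k z := by
          congr 1; ext k; rw [lintegral_const_mul _ (hm k)]
      _ = ∫⁻ z, ∑' k : ℤ, ((2:ℝ≥0∞) ^ k) ^ p * h k z :=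
          (lintegral_tsum (fun k => ((hm k).const_mul _).aemeasurable)).symm
      _ ≤ _ := lintegral_mono hge
  have hX : ∀ z, XR N F z ≤ 2 * XR N (fun z => ∑' k, (2:ℝ≥0∞) ^ k * h k z) z := by
    intro z
    refine (XR_mono hle z).trans ?_
    simp_rw [ENNReal.tsum_mul_left]
    unfold XR
    rw [lintegral_const_mul' _ _ (by simp)]
  calc ∫⁻ z, XR N F z ^ (N+2) ≤
      ∫⁻ z, 2 ^ (N+2) * XR N (fun z => ∑' k, (2:ℝ≥0∞) ^ k * h k z) z ^ (N+2) := by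
        refine lintegral_mono (fun z => ?_)
        rw [← mul_pow]
        exact pow_le_pow_left' (hX z) _
    _ = 2 ^ (N+2) * ∫⁻ z, XR N (fun z => ∑' k, (2:ℝ≥0∞) ^ k * h k z) z ^ (N+2) :=
      lintegral_const_mul' _ _ (by simp)
    _ ≤ 2 ^ (N+2) * (C * ∑' k : ℤ, ((2:ℝ≥0∞) ^ k) ^ (N+2) * (∫⁻ z, h k z) ^ (N+1)) := by
      gcongr; exact hD h hm h1
    _ = 2 ^ (N+2) * (C * ∑' k : ℤ, (((2:ℝ≥0∞) ^ k) ^ p * ∫⁻ z, h k z) ^ (N+1)) := by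
      congr 3
      ext k
      rw [mul_pow, ← ENNReal.rpow_natCast (((2:ℝ≥0∞) ^ k) ^ p), ← ENNReal.rpow_mul,
        ← ENNReal.rpow_natCast ((2:ℝ≥0∞) ^ k)]
      congr 2
      rw [hp]; push_cast; field_simp
    _ ≤ 2 ^ (N+2) * (C * (∑' k : ℤ, ((2:ℝ≥0∞) ^ k) ^ p * ∫⁻ z, h k z) ^ (N+1)) := by
      gcongr
      simp_rw [pow_succ]
      rw [← ENNReal.tsum_mul_left]
      refine ENNReal.tsum_le_tsum (fun k => ?_)
      gcongr
      exact ENNReal.le_tsum (f := fun k : ℤ => ((2:ℝ≥0∞) ^ k) ^ p * ∫⁻ z, h k z) k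
    _ ≤ _ := by
      rw [← mul_assoc]
      gcongr

theorem strong (n : ℕ) : ∃ C : ℝ≥0∞, C ≠ ⊤ ∧ ∀ F : (Fin n → ℝ) × ℝ → ℝ≥0∞, Measurable F →
      ∫⁻ z, XR n F z ^ (n+2) ≤ C * (∫⁻ z, F z ^ (((n:ℝ) + 2) / (n + 1))) ^ (n+1) := by
  induction n with
  | zero =>
    refine ⟨1, by simp, fun F hF => ?_⟩
    have : ∀ z, XR 0 F z = F z := by
      intro z
      have hz : ∀ y : Fin 0 → ℝ, (y, dt z.1 y + z.2) = z := by
        intro y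
        ext i
        · exact i.elim0
        · simp [dt]
      unfold XR
      simp_rw [hz]
      simp [volume_pi]
    simp [this]
  | succ n ih =>
    obtain ⟨C, hC, hS⟩ := ih
    obtain ⟨C', hC', hD⟩ := dyadicStep (n+1) (C * ((3:ℝ≥0∞) ^ (((n:ℝ) + 2) / (n + 1))) ^ (n+1))
      (ENNReal.mul_ne_top hC (ENNReal.pow_ne_top (ENNReal.rpow_ne_top_of_nonneg (by positivity)
        (by simp)))) (by
        intro h hm h1 z0
        have := pointLem n C hS h hm h1 z0
        rwa [mul_pow, ← mul_assoc] at this)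
    refine ⟨2 ^ (n+1+2) * C', ENNReal.mul_ne_top (ENNReal.pow_ne_top (by simp)) hC', fun F hF => ?_⟩
    exact strongOfDyadic (n+1) C' hD F hF

theorem dyadic (n : ℕ) : ∃ C' : ℝ≥0∞, C' ≠ ⊤ ∧ ∀ h : ℤ → (Fin (n+1) → ℝ) × ℝ → ℝ≥0∞,
      (∀ k, Measurable (h k)) → (∀ k z, h k z ≤ 1) →
      ∫⁻ z, XR (n+1) (fun z => ∑' k, (2:ℝ≥0∞) ^ k * h k z) z ^ (n+1+2) ≤
        C' * ∑' k : ℤ, ((2:ℝ≥0∞) ^ k) ^ (n+1+2) * (∫⁻ z, h k z) ^ (n+1+1) := by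
  obtain ⟨C, hC, hS⟩ := strong n
  exact dyadicStep (n+1) (C * ((3:ℝ≥0∞) ^ (((n:ℝ) + 2) / (n + 1))) ^ (n+1))
      (ENNReal.mul_ne_top hC (ENNReal.pow_ne_top (ENNReal.rpow_ne_top_of_nonneg (by positivity)
        (by simp)))) (by
        intro h hm h1 z0
        have := pointLem n C hS h hm h1 z0
        rwa [mul_pow, ← mul_assoc] at this)

theorem invPt (N : ℕ) : (volume : Measure (Pt N)).IsAddHaarMeasure := by
  rw [Measure.volume_eq_prod]; infer_instance

/-- the adjoint -/
def Ts (N : ℕ) (g : Pt N → ℝ≥0∞) (y : Pt N) : ℝ≥0∞ :=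
  ∫⁻ t : Vec N, g (y.1 + t, y.2 + ‖t‖ ^ 2)

theorem measurable_Ts {N : ℕ} {g : Pt N → ℝ≥0∞} (hg : Measurable g) : Measurable (Ts N g) := by
  unfold Ts
  have : Measurable (fun x : Pt N × Vec N => g (x.1.1 + x.2, x.1.2 + ‖x.2‖ ^ 2)) :=
    hg.comp (by fun_prop)
  exact this.lintegral_prod_right'

theorem pairT_eq (N : ℕ) (f g : Pt N → ℝ≥0∞) (hf : Measurable f) (hg : Measurable g) :
    pairT N g f = ∫⁻ y, f y * Ts N g y := by
  have := invPt N
  unfold pairT radonT Ts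
  have hm1 : Measurable (fun x : Pt N × Vec N => f (x.1.1 - x.2, x.1.2 - ‖x.2‖ ^ 2)) :=
    hf.comp (by fun_prop)
  have hm2 : Measurable (fun x : Pt N × Vec N => g (x.1.1 + x.2, x.1.2 + ‖x.2‖ ^ 2)) :=
    hg.comp (by fun_prop)
  have e1 : ∀ x : Pt N, g x * ∫⁻ t : Vec N, f (x.1 - t, x.2 - ‖t‖ ^ 2) =
      ∫⁻ t : Vec N, g x * f (x.1 - t, x.2 - ‖t‖ ^ 2) := fun x =>
    (lintegral_const_mul _ (hm1.comp measurable_prodMk_left)).symm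
  have e2 : ∀ x : Pt N, f x * ∫⁻ t : Vec N, g (x.1 + t, x.2 + ‖t‖ ^ 2) =
      ∫⁻ t : Vec N, f x * g (x.1 + t, x.2 + ‖t‖ ^ 2) := fun x =>
    (lintegral_const_mul _ (hm2.comp measurable_prodMk_left)).symm
  simp_rw [e1, e2]
  rw [lintegral_lintegral_swap
      (f := fun (x : Pt N) (t : Vec N) => g x * f (x.1 - t, x.2 - ‖t‖ ^ 2)) ((hg.comp measurable_fst).mul hm1).aemeasurable,
    lintegral_lintegral_swap
      (f := fun (x : Pt N) (t : Vec N) => f x * g (x.1 + t, x.2 + ‖t‖ ^ 2)) ((hf.comp measurable_fst).mul hm2).aemeasurable]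
  refine lintegral_congr (fun t => ?_)
  rw [← lintegral_add_right_eq_self (fun x : Pt N => g x * f (x.1 - t, x.2 - ‖t‖ ^ 2))
    ((t, ‖t‖ ^ 2) : Pt N)]
  refine lintegral_congr (fun x => ?_)
  simp only [Prod.fst_add, Prod.snd_add, add_sub_cancel_right]
  rw [mul_comm]
  rfl

theorem shear (N : ℕ) (H : Pt N → ℝ≥0∞) (hH : Measurable H) :
    ∫⁻ z : (Fin N → ℝ) × ℝ, H (WithLp.toLp 2 z.1, z.2 + ‖(WithLp.toLp 2 z.1 : Vec N)‖ ^ 2) =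
      ∫⁻ x, H x := by
  have hmt : Measurable (fun v : Fin N → ℝ => (WithLp.toLp 2 v : Vec N)) :=
    (PiLp.volume_preserving_toLp (Fin N)).measurable
  rw [Measure.volume_eq_prod, Measure.volume_eq_prod, lintegral_prod, lintegral_prod _ hH.aemeasurable]
  · have : ∀ v : Fin N → ℝ, ∫⁻ s : ℝ, H (WithLp.toLp 2 v, s + ‖(WithLp.toLp 2 v : Vec N)‖ ^ 2) =
        ∫⁻ s : ℝ, H (WithLp.toLp 2 v, s) := fun v =>
      lintegral_add_right_eq_self (fun s : ℝ => H (WithLp.toLp 2 v, s)) _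
    simp_rw [this]
    exact (PiLp.volume_preserving_toLp (Fin N)).lintegral_comp
      (f := fun y : Vec N => ∫⁻ s : ℝ, H (y, s)) hH.lintegral_prod_right'
  · refine (hH.comp ?_).aemeasurable
    exact (hmt.comp measurable_fst).prodMk
      (measurable_snd.add ((hmt.comp measurable_fst).norm.pow_const 2))

theorem Ts_eq (N : ℕ) (g : Pt N → ℝ≥0∞) (hg : Measurable g) (y : Pt N) :
    Ts N g y = XR N (fun z => g (WithLp.toLp 2 z.1, z.2 + ‖(WithLp.toLp 2 z.1 : Vec N)‖ ^ 2))
      ((-2 : ℝ) • WithLp.ofLp y.1, y.2 + ‖y.1‖ ^ 2) := by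
  unfold Ts XR
  have hmt : Measurable (fun t : Vec N => g (t, y.2 + ‖t - y.1‖ ^ 2)) := hg.comp (by fun_prop)
  rw [← lintegral_sub_right_eq_self _ y.1]
  simp only [add_sub_cancel]
  rw [← (PiLp.volume_preserving_toLp (Fin N)).lintegral_comp hmt]
  refine lintegral_congr (fun v => ?_)
  congr 2
  rw [@norm_sub_sq_real]
  have : inner ℝ (WithLp.toLp 2 v : Vec N) y.1 = ∑ i, y.1 i * v i := by
    simp [PiLp.inner_apply]
  rw [this]
  simp only [dt, Pi.smul_apply, smul_eq_mul, mul_assoc, ← Finset.mul_sum]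
  ring

theorem Ts_int (N : ℕ) (G : (Fin N → ℝ) × ℝ → ℝ≥0∞) (hG : Measurable G) :
    ∫⁻ y : Pt N, G ((-2 : ℝ) • WithLp.ofLp y.1, y.2 + ‖y.1‖ ^ 2) ≤ ∫⁻ z, G z := by
  have hmo : Measurable (fun v : Vec N => (WithLp.ofLp v : Fin N → ℝ)) :=
    (PiLp.volume_preserving_ofLp (Fin N)).measurable
  have hK : Measurable (fun v : Fin N → ℝ => ∫⁻ s : ℝ, G (v, s)) := hG.lintegral_prod_right'
  have hmm : Measurable (fun y : Pt N => G ((-2 : ℝ) • WithLp.ofLp y.1, y.2 + ‖y.1‖ ^ 2)) := by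
    refine hG.comp (Measurable.prodMk ?_ (by fun_prop))
    exact (hmo.comp measurable_fst).const_smul (-2 : ℝ)
  rw [Measure.volume_eq_prod, Measure.volume_eq_prod, lintegral_prod _ hmm.aemeasurable,
    lintegral_prod _ hG.aemeasurable]
  have : ∀ v : Vec N, ∫⁻ s : ℝ, G ((-2 : ℝ) • WithLp.ofLp v, s + ‖v‖ ^ 2) =
        ∫⁻ s : ℝ, G ((-2 : ℝ) • WithLp.ofLp v, s) := fun v =>
      lintegral_add_right_eq_self (fun s : ℝ => G ((-2 : ℝ) • WithLp.ofLp v, s)) _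
  simp_rw [this]
  rw [(PiLp.volume_preserving_ofLp (Fin N)).lintegral_comp
      (f := fun v : Fin N → ℝ => ∫⁻ s : ℝ, G ((-2 : ℝ) • v, s))
      (hK.comp (measurable_const_smul (-2 : ℝ))), lint_smul (-2 : ℝ) (by norm_num) _ hK]
  refine le_mul_of_one_le_left' (one_le_pow_of_one_le' ?_ _)
  rw [Real.enorm_eq_ofReal_abs]
  norm_num

theorem mainBound (n : ℕ) :
    ∃ γ C : ℝ, 0 < γ ∧ 0 < C ∧
      ∀ (F : ℤ → Set (Pt (n+1))), (∀ l, MeasurableSet (F l)) →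
        Pairwise (Function.onFun Disjoint F) →
      ∀ (f fs : Pt (n+1) → ℝ≥0∞), Measurable f →
        (fs = fun x => ∑' l : ℤ, (2 : ℝ≥0∞) ^ l * (F l).indicator 1 x) →
        LpN (n+1) (((n:ℝ) + 3) / (n + 2)) fs < ⊤ →
      ∀ (η : ℝ), 0 < η →
        (∀ l : ℤ, (2 : ℝ≥0∞) ^ l * volume (F l) ^ (((n:ℝ) + 2) / (n + 3)) ≤
          ENNReal.ofReal η * LpN (n+1) (((n:ℝ) + 3) / (n + 2)) fs) →
        pairT (n+1) fs f ≤
          ENNReal.ofReal (C * η ^ γ) * LpN (n+1) (((n:ℝ) + 3) / (n + 2)) f *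
            LpN (n+1) (((n:ℝ) + 3) / (n + 2)) fs := by
  obtain ⟨C', hC', hD⟩ := dyadic n
  set p : ℝ := ((n:ℝ) + 3) / (n + 2) with hp
  have hp0 : 0 < p := by positivity
  refine ⟨((n:ℝ) + 1) / (n + 2), C'.toReal ^ (1 / ((n:ℝ) + 3)) + 1, by positivity, by positivity, ?_⟩
  intro F hF hFd f fs hf hfs hA η hη hl
  set A := LpN (n+1) p fs with hAdef
  have hi : ∀ l, Measurable ((F l).indicator (1 : Pt (n+1) → ℝ≥0∞)) := fun l =>
    measurable_one.indicator (hF l)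
  have hfsm : Measurable fs := by
    rw [hfs]; exact Measurable.tsum (fun l => (hi l).const_mul _)
  have hAp : ∫⁻ x, fs x ^ p = A ^ p := by
    rw [hAdef, LpN, ← ENNReal.rpow_mul, one_div_mul_cancel hp0.ne', ENNReal.rpow_one]
  -- the pieces
  set x : ℤ → ℝ≥0∞ := fun k => ((2:ℝ≥0∞) ^ k) ^ p * volume (F k) with hx
  have hxle : ∀ k, x k ≤ (ENNReal.ofReal η * A) ^ p := by
    intro k
    have : x k = ((2 : ℝ≥0∞) ^ k * volume (F k) ^ (((n:ℝ) + 2) / (n + 3))) ^ p := by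
      rw [ENNReal.mul_rpow_of_nonneg _ _ hp0.le, ← ENNReal.rpow_mul]
      have : ((n:ℝ) + 2) / (n + 3) * p = 1 := by rw [hp]; field_simp
      rw [this, ENNReal.rpow_one]
    rw [this]
    exact ENNReal.rpow_le_rpow (hl k) hp0.le
  have hxsum : ∑' k, x k ≤ A ^ p := by
    rw [← hAp]
    calc _ = ∑' k : ℤ, ∫⁻ z, ((2:ℝ≥0∞) ^ k) ^ p * (F k).indicator 1 z := by
          congr 1; ext k; rw [lintegral_const_mul _ (hi k), lintegral_indicator_one (hF k)]
      _ = ∫⁻ z, ∑' k : ℤ, ((2:ℝ≥0∞) ^ k) ^ p * (F k).indicator 1 z :=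
          (lintegral_tsum (fun k => ((hi k).const_mul _).aemeasurable)).symm
      _ ≤ _ := by
        refine lintegral_mono (fun z => ?_)
        by_cases hex : ∃ k, z ∈ F k
        · obtain ⟨k, hk⟩ := hex
          have hne : ∀ j, j ≠ k → (F j).indicator (1 : Pt (n+1) → ℝ≥0∞) z = 0 := fun j hj =>
            Set.indicator_of_notMem (fun hzj => (Set.disjoint_left.mp (hFd hj)) hzj hk) _
          rw [hfs]
          simp only
          rw [tsum_eq_single k (fun j hj => by rw [hne j hj, mul_zero]),
            tsum_eq_single k (fun j hj => by rw [hne j hj, mul_zero])]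
          simp [hk]
        · have : ∀ k, (F k).indicator (1 : Pt (n+1) → ℝ≥0∞) z = 0 := fun k =>
            Set.indicator_of_notMem (fun hzj => hex ⟨k, hzj⟩) _
          simp [this]
  -- the layers
  set h : ℤ → (Fin (n+1) → ℝ) × ℝ → ℝ≥0∞ := fun k z =>
    (F k).indicator 1 ((WithLp.toLp 2 z.1, z.2 + ‖(WithLp.toLp 2 z.1 : Vec (n+1))‖ ^ 2) : Pt (n+1))
    with hh
  have hmt : Measurable (fun v : Fin (n+1) → ℝ => (WithLp.toLp 2 v : Vec (n+1))) :=
    (PiLp.volume_preserving_toLp (Fin (n+1))).measurable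
  have hm : ∀ k, Measurable (h k) := fun k =>
    (hi k).comp ((hmt.comp measurable_fst).prodMk
      (measurable_snd.add ((hmt.comp measurable_fst).norm.pow_const 2)))
  have h1 : ∀ k z, h k z ≤ 1 := fun k z => Set.indicator_le_self' (by simp) _
  have hvol : ∀ k, ∫⁻ z, h k z = volume (F k) := by
    intro k
    rw [← lintegral_indicator_one (hF k)]
    exact shear (n+1) _ (hi k)
  have hTs : ∫⁻ y, Ts (n+1) fs y ^ (n+1+2) ≤
      C' * (((ENNReal.ofReal η * A) ^ p) ^ (n+1) * A ^ p) := by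
    calc _ = ∫⁻ y : Pt (n+1), XR (n+1) (fun z => ∑' k, (2:ℝ≥0∞) ^ k * h k z)
          ((-2 : ℝ) • WithLp.ofLp y.1, y.2 + ‖y.1‖ ^ 2) ^ (n+1+2) := by
          refine lintegral_congr (fun y => ?_)
          rw [Ts_eq _ _ hfsm, hfs]
      _ ≤ ∫⁻ z, XR (n+1) (fun z => ∑' k, (2:ℝ≥0∞) ^ k * h k z) z ^ (n+1+2) :=
          Ts_int (n+1) (fun z => XR (n+1) (fun z => ∑' k, (2:ℝ≥0∞) ^ k * h k z) z ^ (n+1+2))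
            ((measurable_XR (Measurable.tsum (fun k => (hm k).const_mul _))).pow_const _)
      _ ≤ C' * ∑' k : ℤ, ((2:ℝ≥0∞) ^ k) ^ (n+1+2) * (∫⁻ z, h k z) ^ (n+1+1) := hD h hm h1
      _ = C' * ∑' k : ℤ, x k ^ (n+1+1) := by
          congr 2
          ext k
          rw [hvol, hx]
          simp only
          rw [mul_pow, ← ENNReal.rpow_natCast (((2:ℝ≥0∞) ^ k) ^ p), ← ENNReal.rpow_mul,
            ← ENNReal.rpow_natCast ((2:ℝ≥0∞) ^ k)]
          congr 2
          rw [hp]; push_cast; field_simp; ring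
      _ ≤ C' * ∑' k : ℤ, ((ENNReal.ofReal η * A) ^ p) ^ (n+1) * x k := by
          refine mul_le_mul' le_rfl (ENNReal.tsum_le_tsum fun k => ?_)
          rw [pow_succ]
          exact mul_le_mul' (pow_le_pow_left' (hxle k) _) le_rfl
      _ ≤ _ := by
          rw [ENNReal.tsum_mul_left]
          exact mul_le_mul' le_rfl (mul_le_mul' le_rfl hxsum)
  have hq : (0:ℝ) < (n:ℝ) + 3 := by positivity
  have hconj : p.HolderConjugate ((n:ℝ) + 3) := by
    rw [Real.holderConjugate_iff]
    constructor
    · rw [hp, lt_div_iff₀ (by positivity)]; linarith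
    · rw [hp]; field_simp; ring
  have hTsq : (∫⁻ y, Ts (n+1) fs y ^ ((n:ℝ) + 3)) ^ (1 / ((n:ℝ) + 3)) ≤
      C' ^ (1 / ((n:ℝ) + 3)) * (ENNReal.ofReal η ^ (((n:ℝ) + 1) / (n + 2)) * A) := by
    have e : ∀ y, Ts (n+1) fs y ^ ((n:ℝ) + 3) = Ts (n+1) fs y ^ (n+1+2) := by
      intro y
      rw [← ENNReal.rpow_natCast]
      congr 1
      push_cast; ring
    simp_rw [e]
    refine (ENNReal.rpow_le_rpow hTs (by positivity)).trans (le_of_eq ?_)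
    rw [ENNReal.mul_rpow_of_nonneg _ _ (by positivity)]
    congr 1
    rw [← ENNReal.rpow_natCast, ← ENNReal.rpow_mul,
      ENNReal.mul_rpow_of_nonneg (ENNReal.ofReal η) A (by positivity),
      mul_assoc, ← ENNReal.rpow_add_of_nonneg _ _ (by positivity) hp0.le,
      ENNReal.mul_rpow_of_nonneg _ _ (by positivity), ← ENNReal.rpow_mul, ← ENNReal.rpow_mul]
    congr 1
    · congr 1
      rw [hp]; push_cast; field_simp
    · have : (p * ((n+1 : ℕ) : ℝ) + p) * (1 / ((n:ℝ) + 3)) = 1 := by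
        rw [hp]; push_cast; field_simp; ring
      rw [this, ENNReal.rpow_one]
  have hCC : C' ^ (1 / ((n:ℝ) + 3)) ≤ ENNReal.ofReal (C'.toReal ^ (1 / ((n:ℝ) + 3)) + 1) := by
    rw [ENNReal.ofReal_add (by positivity) (by norm_num)]
    refine le_trans (le_of_eq ?_) le_self_add
    rw [← ENNReal.ofReal_rpow_of_nonneg ENNReal.toReal_nonneg (by positivity),
      ENNReal.ofReal_toReal hC']
  rw [pairT_eq _ _ _ hf hfsm]
  calc ∫⁻ y, f y * Ts (n+1) fs y ≤ LpN (n+1) p f *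
        (∫⁻ y, Ts (n+1) fs y ^ ((n:ℝ) + 3)) ^ (1 / ((n:ℝ) + 3)) :=
        ENNReal.lintegral_mul_le_Lp_mul_Lq volume hconj hf.aemeasurable
          (measurable_Ts hfsm).aemeasurable
    _ ≤ LpN (n+1) p f * (ENNReal.ofReal (C'.toReal ^ (1 / ((n:ℝ) + 3)) + 1) *
        (ENNReal.ofReal η ^ (((n:ℝ) + 1) / (n + 2)) * A)) :=
        mul_le_mul' le_rfl (hTsq.trans (mul_le_mul' hCC le_rfl))
    _ = _ := by
      rw [ENNReal.ofReal_mul (by positivity), ENNReal.ofReal_rpow_of_pos hη]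
      ring


/-- strong type inequality with gain: if
`f = Σ_k 2^k χ_{E_k}`, `f* = Σ_l 2^l χ_{F_l}` with pairwise disjoint layers and
`2^l |F_l|^{d/(d+1)} ≤ η ‖f*‖_{(d+1)/d}` for all `l`, then
`⟨Tf, f*⟩ ≤ C η^γ ‖f‖_{(d+1)/d} ‖f*‖_{(d+1)/d}`. -/
theorem stmt19 (d : ℕ) (hd : 2 ≤ d) :
    ∃ γ C : ℝ, 0 < γ ∧ 0 < C ∧
      ∀ (E F : ℤ → Set (Pt (d - 1))),
        (∀ k, MeasurableSet (E k)) → (∀ l, MeasurableSet (F l)) →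
        Pairwise (Function.onFun Disjoint E) → Pairwise (Function.onFun Disjoint F) →
      ∀ (f fs : Pt (d - 1) → ℝ≥0∞),
        (f = fun x => ∑' k : ℤ, (2 : ℝ≥0∞) ^ k * (E k).indicator 1 x) →
        (fs = fun x => ∑' l : ℤ, (2 : ℝ≥0∞) ^ l * (F l).indicator 1 x) →
        LpN (d - 1) (((d : ℝ) + 1) / d) f < ⊤ →
        LpN (d - 1) (((d : ℝ) + 1) / d) fs < ⊤ →
      ∀ (η : ℝ), 0 < η →
        (∀ l : ℤ, (2 : ℝ≥0∞) ^ l * volume (F l) ^ ((d : ℝ) / (d + 1)) ≤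
          ENNReal.ofReal η * LpN (d - 1) (((d : ℝ) + 1) / d) fs) →
        pairT (d - 1) fs f ≤
          ENNReal.ofReal (C * η ^ γ) * LpN (d - 1) (((d : ℝ) + 1) / d) f *
            LpN (d - 1) (((d : ℝ) + 1) / d) fs := by
  obtain ⟨n, rfl⟩ : ∃ n, d = n + 2 := ⟨d - 2, by omega⟩
  obtain ⟨γ, C, hγ, hC, H⟩ := mainBound n
  refine ⟨γ, C, hγ, hC, ?_⟩
  intro E F hE hF _ hFd f fs hf hfs _ hfin η hη hl
  have e1 : (((n + 2 : ℕ) : ℝ) + 1) / ((n + 2 : ℕ) : ℝ) = ((n:ℝ) + 3) / (n + 2) := by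
    push_cast; congr 1; ring
  have e2 : ((n + 2 : ℕ) : ℝ) / (((n + 2 : ℕ) : ℝ) + 1) = ((n:ℝ) + 2) / (n + 3) := by
    push_cast; congr 1; ring
  rw [e1] at hfin hl ⊢
  rw [e2] at hl
  have hfm : Measurable f := by
    rw [hf]; exact Measurable.tsum (fun l => (measurable_one.indicator (hE l)).const_mul _)
  exact H F hF hFd f fs hfm hfs hfin η hη hl
end
end
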